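/- arXiv:2303.03325 — 7 statements merged into one kernel-verified Lean document; each statement's English description precedes it below -/
import Mathlib

section
/- Fix a real number s ≥ 0 and let o_s ∈ [0,∞)^{d₁+k+d} be the point whose first d₁ coordinates equal s/d₁, whose next k coordinates equal s/k, and whose last d coordinates equal s/d. Then o_s belongs to N_R(Q) if and only if there exist a constant c > 0 and a neighborhood 𝒩 of Q in the (finite-dimensional) space of trilinear forms on ℝ^{d₁} × ℝ^k × ℝ^d such that every trilinear form Q' ∈ 𝒩 satisfies 𝒬_{Q'}[u,v,w] ≥ c |det u|^{s/d₁} |det v|^{s/k} |det w|^{s/d} for all bases u of ℝ^{d₁}, v of ℝ^k, w of ℝ^d. -/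
noncomputable section

open MeasureTheory
open scoped BigOperators ENNReal NNReal

namespace Statement3

abbrev E (n : ℕ) : Type := EuclideanSpace ℝ (Fin n)

/-- Evaluation of the trilinear form on `ℝ^{d₁} × ℝ^k × ℝ^d` with coefficient array `c`. -/
def triEval {d₁ k d : ℕ} (c : Fin d₁ → Fin k → Fin d → ℝ)
    (u : E d₁) (v : E k) (w : E d) : ℝ :=
  ∑ i : Fin d₁, ∑ i' : Fin k, ∑ i'' : Fin d, u i * v i' * w i'' * c i i' i''

/-- The determinant `Q_s(t; v₁,…,v_s; w₁,…,w_s)`. -/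
def Qdet {d₁ k d : ℕ} (c : Fin d₁ → Fin k → Fin d → ℝ) (s : ℕ)
    (t : E d₁) (v : Fin s → E k) (w : Fin s → E d) : ℝ :=
  Matrix.det (Matrix.of fun i j : Fin s => triEval c t (v i) (w j))

/-- Iterated directional derivative along the directions `a 0, …, a (s-1)`. -/
def iterDir {d₁ : ℕ} : (s : ℕ) → (Fin s → E d₁) → (E d₁ → ℝ) → E d₁ → ℝ
  | 0, _, g => g
  | s + 1, a, g => fun t => fderiv ℝ (iterDir s (fun i => a i.succ) g) t (a 0)

/-- `β` counts the sequence `I`. -/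
def Counts {m s : ℕ} (β : Fin m → ℕ) (I : Fin s → Fin m) : Prop :=
  ∀ ℓ : Fin m, (Finset.univ.filter fun j => I j = ℓ).card = β ℓ

/-- Membership in the set `N₀(Q, ũ, ṽ, w̃)`. -/
def InN0 {d₁ k d : ℕ} (c : Fin d₁ → Fin k → Fin d → ℝ)
    (u : Fin d₁ → E d₁) (v : Fin k → E k) (w : Fin d → E d)
    (p : (Fin d₁ → ℕ) × (Fin k → ℕ) × (Fin d → ℕ)) : Prop :=
  (p.1 = 0 ∧ p.2.1 = 0 ∧ p.2.2 = 0) ∨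
  ∃ s : ℕ, 1 ≤ s ∧ s ≤ min d k ∧
    ∃ (I : Fin s → Fin d₁) (I' : Fin s → Fin k) (I'' : Fin s → Fin d),
      Counts p.1 I ∧ Counts p.2.1 I' ∧ Counts p.2.2 I'' ∧
      iterDir s (fun j => u (I j))
        (fun t => Qdet c s t (fun j => v (I' j)) (fun j => w (I'' j))) 0 ≠ 0

def toPoint {d₁ k d : ℕ} (p : (Fin d₁ → ℕ) × (Fin k → ℕ) × (Fin d → ℕ)) :
    (Fin d₁ → ℝ) × (Fin k → ℝ) × (Fin d → ℝ) :=
  ((fun i => (p.1 i : ℝ)), (fun i => (p.2.1 i : ℝ)), fun i => (p.2.2 i : ℝ))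

/-- The Newton-type diagram `N_R(Q)`. -/
def NR {d₁ k d : ℕ} (c : Fin d₁ → Fin k → Fin d → ℝ) :
    Set ((Fin d₁ → ℝ) × (Fin k → ℝ) × (Fin d → ℝ)) :=
  { x | ∀ (u : Fin d₁ → E d₁) (v : Fin k → E k) (w : Fin d → E d),
      Orthonormal ℝ u → Orthonormal ℝ v → Orthonormal ℝ w →
      x ∈ convexHull ℝ (toPoint '' { p | InN0 c u v w p }) }


/-- The quantity `𝒬_Q[u,v,w]`. -/
def calQ {d₁ k d : ℕ} (c : Fin d₁ → Fin k → Fin d → ℝ)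
    (u : Fin d₁ → E d₁) (v : Fin k → E k) (w : Fin d → E d) : ℝ :=
  Real.sqrt (1 + ∑ s ∈ Finset.Icc 1 (min d k),
    ∑ I : Fin s → Fin d₁, ∑ I' : Fin s → Fin k, ∑ I'' : Fin s → Fin d,
      (iterDir s (fun j => u (I j))
        (fun t => Qdet c s t (fun j => v (I' j)) (fun j => w (I'' j))) 0) ^ 2)

/-- Determinant of the matrix whose columns are `u 0, …, u (m-1)`. -/
def detb {m : ℕ} (u : Fin m → E m) : ℝ :=
  Matrix.det (Matrix.of fun i j : Fin m => u j i)

/-!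
With the summand `1` read as the empty minor, `𝒬_Q²` is the sum of the squares of the polarized
minors of `Q`, and such a sum does not change when each frame is recombined by an orthogonal
matrix, since a Kronecker power of an orthogonal matrix is orthogonal. By the singular value
decomposition it therefore suffices to consider frames obtained from orthonormal ones by
rescaling the vectors by `exp a`. This multiplies a minor with multiindices `(α, β, γ)` by
`exp ⟨a, (α, β, γ)⟩` and turns the product of powers of the determinants into `exp ⟨a, o⟩`.

If `o` lies in the convex hull of the exponents of the nonzero minors, then for every `a` one of
these exponents has `⟨a, ·⟩` at least `⟨a, o⟩`, so the smallest absolute value of a nonzero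
minor is an admissible constant. It stays admissible, up to an arbitrarily small loss, near the
given form and frames, and the orthonormal frames form a compact set. Conversely, a hyperplane
strictly separating `o` from the convex hull gives a direction `a` in which `exp ⟨T a, o⟩`
outgrows `𝒬_Q` as `T → ∞`.
-/

open scoped Matrix

section KroneckerPower

variable {R ι κ M : Type*} [CommRing R] [Fintype ι]

/-- The `ι`-fold Kronecker power of `A`: the action of `A` on tensors, written in the coordinates
indexed by tuples `ι → κ`. -/
def kroneckerPower (ι : Type*) [Fintype ι] (A : Matrix κ κ R) : Matrix (ι → κ) (ι → κ) R :=
  Matrix.of fun I J => ∏ i, A (I i) (J i)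

lemma kroneckerPower_transpose (A : Matrix κ κ R) :
    (kroneckerPower ι A)ᵀ = kroneckerPower ι Aᵀ := rfl

lemma kroneckerPower_one [DecidableEq κ] : kroneckerPower ι (1 : Matrix κ κ R) = 1 := by
  classical
  ext I J
  simp only [kroneckerPower, Matrix.of_apply, Matrix.one_apply, Fintype.prod_ite_zero,
    Finset.prod_const_one, funext_iff]

variable [DecidableEq ι] [Fintype κ]

lemma kroneckerPower_mul (A B : Matrix κ κ R) :
    kroneckerPower ι (A * B) = kroneckerPower ι A * kroneckerPower ι B := by
  ext I J
  simp only [kroneckerPower, Matrix.of_apply, Matrix.mul_apply, Fintype.prod_sum,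
    Finset.prod_mul_distrib]

variable [AddCommGroup M] [Module R M]

/-- The family whose `i`-th vector is the combination of the vectors of `u` with coefficients the
`i`-th column of `A`. -/
def recombine (A : Matrix κ κ R) (u : κ → M) : κ → M := fun i => ∑ l, A l i • u l

lemma map_recombine_comp (f : MultilinearMap R (fun _ : ι => M) R)
    (A : Matrix κ κ R) (u : κ → M) (I : ι → κ) :
    f (recombine A u ∘ I) = ((fun J => f (u ∘ J)) ᵥ* kroneckerPower ι A) I := by
  simp only [Function.comp_def, recombine, f.map_sum, f.map_smul_univ, Matrix.vecMul, dotProduct,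
    kroneckerPower, Matrix.of_apply, smul_eq_mul, mul_comm]

lemma sum_sq_map_recombine_comp [DecidableEq κ] (f : MultilinearMap R (fun _ : ι => M) R)
    {A : Matrix κ κ R} (hA : A * Aᵀ = 1) (u : κ → M) :
    ∑ I : ι → κ, f (recombine A u ∘ I) ^ 2 = ∑ I : ι → κ, f (u ∘ I) ^ 2 := by
  set F : (ι → κ) → R := fun J => f (u ∘ J)
  set K := kroneckerPower ι A
  have hK : K * Kᵀ = 1 := by
    rw [kroneckerPower_transpose, ← kroneckerPower_mul, hA, kroneckerPower_one]
  calc ∑ I : ι → κ, f (recombine A u ∘ I) ^ 2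
      = (F ᵥ* K) ⬝ᵥ (F ᵥ* K) := by simp only [map_recombine_comp, sq]; rfl
    _ = F ⬝ᵥ (F ᵥ* (K * Kᵀ)ᵀ) := by
      rw [← Matrix.dotProduct_mulVec, ← Matrix.vecMul_transpose, Matrix.vecMul_vecMul,
        Matrix.transpose_mul, Matrix.transpose_transpose]
    _ = ∑ I : ι → κ, f (u ∘ I) ^ 2 := by
      rw [hK, Matrix.transpose_one, Matrix.vecMul_one]; simp only [dotProduct, sq, F]

end KroneckerPower

section PolarDet

variable {R U V W ι : Type*} [CommRing R] [AddCommGroup U] [Module R U] [AddCommGroup V]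
  [Module R V] [AddCommGroup W] [Module R W] [Fintype ι] [DecidableEq ι]

/-- The full polarization in `t` of the determinant `det (B t (v i) (w j))`, evaluated at the
directions `a`. -/
def polarDet (B : U →ₗ[R] V →ₗ[R] W →ₗ[R] R) (a : ι → U) (v : ι → V) (w : ι → W) : R :=
  ∑ σ : Equiv.Perm ι, Matrix.det (Matrix.of fun i j => B (a (σ i)) (v i) (w j))

/-- The determinant `det (B (a i) (v i) (w j))` as a multilinear map of the family `a`. -/
def rowDet (B : U →ₗ[R] V →ₗ[R] W →ₗ[R] R) (v : ι → V) (w : ι → W) :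
    MultilinearMap R (fun _ : ι => U) R :=
  (Matrix.detRowAlternating (n := ι) (R := R)).toMultilinearMap.compLinearMap
    fun i => LinearMap.pi fun j => (B.flip (v i)).flip (w j)

lemma rowDet_apply (B : U →ₗ[R] V →ₗ[R] W →ₗ[R] R) (a : ι → U) (v : ι → V) (w : ι → W) :
    rowDet B v w a = Matrix.det (Matrix.of fun i j => B (a i) (v i) (w j)) := rfl

lemma exists_multilinearMap_polarDet_left (B : U →ₗ[R] V →ₗ[R] W →ₗ[R] R) (v : ι → V)
    (w : ι → W) : ∃ f : MultilinearMap R (fun _ : ι => U) R, ∀ a, f a = polarDet B a v w := by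
  refine ⟨∑ σ : Equiv.Perm ι, (rowDet B v w).domDomCongr σ⁻¹, fun a => ?_⟩
  rw [_root_.sum_apply]
  exact Equiv.sum_comp (Equiv.inv _) fun σ : Equiv.Perm ι => rowDet B v w fun i => a (σ i)

lemma exists_multilinearMap_polarDet_middle (B : U →ₗ[R] V →ₗ[R] W →ₗ[R] R) (a : ι → U)
    (w : ι → W) : ∃ f : MultilinearMap R (fun _ : ι => V) R, ∀ v, f v = polarDet B a v w := by
  refine ⟨∑ σ : Equiv.Perm ι, rowDet B.flip (a ∘ σ) w, fun v => ?_⟩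
  rw [_root_.sum_apply]
  rfl

lemma exists_multilinearMap_polarDet_right (B : U →ₗ[R] V →ₗ[R] W →ₗ[R] R) (a : ι → U)
    (v : ι → V) : ∃ f : MultilinearMap R (fun _ : ι => W) R, ∀ w, f w = polarDet B a v w := by
  refine ⟨∑ σ : Equiv.Perm ι,
    (Matrix.detRowAlternating (n := ι) (R := R)).toMultilinearMap.compLinearMap
      fun _ => LinearMap.pi fun i => B (a (σ i)) (v i), fun w => ?_⟩
  rw [_root_.sum_apply]
  exact Finset.sum_congr rfl fun σ _ =>
    Matrix.det_transpose (Matrix.of fun i j => B (a (σ i)) (v i) (w j))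

lemma polarDet_of_isEmpty [IsEmpty ι] (B : U →ₗ[R] V →ₗ[R] W →ₗ[R] R) (a : ι → U) (v : ι → V)
    (w : ι → W) : polarDet B a v w = 1 := by
  simp only [polarDet, Matrix.det_isEmpty, Finset.sum_const, Finset.card_univ,
    Fintype.card_unique, one_smul]

lemma polarDet_smul (B : U →ₗ[R] V →ₗ[R] W →ₗ[R] R) (r s t : ι → R) (a : ι → U) (v : ι → V)
    (w : ι → W) :
    polarDet B (fun i => r i • a i) (fun i => s i • v i) (fun i => t i • w i) =
      (∏ i, r i) * (∏ i, s i) * (∏ i, t i) * polarDet B a v w := by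
  obtain ⟨f, hf⟩ := exists_multilinearMap_polarDet_left B (fun i => s i • v i) fun i => t i • w i
  obtain ⟨g, hg⟩ := exists_multilinearMap_polarDet_middle B a fun i => t i • w i
  obtain ⟨h, hh⟩ := exists_multilinearMap_polarDet_right B a v
  rw [← hf, f.map_smul_univ, hf, ← hg, g.map_smul_univ, hg, ← hh, h.map_smul_univ, hh]
  simp only [smul_eq_mul, mul_assoc]

lemma sum_sq_polarDet_recombine {κ₁ κ₂ κ₃ : Type*} [Fintype κ₁] [Fintype κ₂] [Fintype κ₃]
    [DecidableEq κ₁] [DecidableEq κ₂] [DecidableEq κ₃] (B : U →ₗ[R] V →ₗ[R] W →ₗ[R] R)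
    {A₁ : Matrix κ₁ κ₁ R} {A₂ : Matrix κ₂ κ₂ R} {A₃ : Matrix κ₃ κ₃ R} (h₁ : A₁ * A₁ᵀ = 1)
    (h₂ : A₂ * A₂ᵀ = 1) (h₃ : A₃ * A₃ᵀ = 1) (u : κ₁ → U) (v : κ₂ → V) (w : κ₃ → W) :
    ∑ I : ι → κ₁, ∑ J : ι → κ₂, ∑ K : ι → κ₃,
        polarDet B (recombine A₁ u ∘ I) (recombine A₂ v ∘ J) (recombine A₃ w ∘ K) ^ 2 =
      ∑ I : ι → κ₁, ∑ J : ι → κ₂, ∑ K : ι → κ₃, polarDet B (u ∘ I) (v ∘ J) (w ∘ K) ^ 2 := by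
  have left (v' : ι → V) (w' : ι → W) : ∑ I : ι → κ₁, polarDet B (recombine A₁ u ∘ I) v' w' ^ 2 =
      ∑ I : ι → κ₁, polarDet B (u ∘ I) v' w' ^ 2 := by
    obtain ⟨f, hf⟩ := exists_multilinearMap_polarDet_left B v' w'
    simpa only [hf] using sum_sq_map_recombine_comp f h₁ u
  have middle (u' : ι → U) (w' : ι → W) :
      ∑ J : ι → κ₂, polarDet B u' (recombine A₂ v ∘ J) w' ^ 2 =
        ∑ J : ι → κ₂, polarDet B u' (v ∘ J) w' ^ 2 := by
    obtain ⟨f, hf⟩ := exists_multilinearMap_polarDet_middle B u' w'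
    simpa only [hf] using sum_sq_map_recombine_comp f h₂ v
  have right (u' : ι → U) (v' : ι → V) : ∑ K : ι → κ₃, polarDet B u' v' (recombine A₃ w ∘ K) ^ 2 =
      ∑ K : ι → κ₃, polarDet B u' v' (w ∘ K) ^ 2 := by
    obtain ⟨f, hf⟩ := exists_multilinearMap_polarDet_right B u' v'
    simpa only [hf] using sum_sq_map_recombine_comp f h₃ w
  calc
    _ = ∑ I : ι → κ₁, ∑ K : ι → κ₃, ∑ J : ι → κ₂,
          polarDet B (recombine A₁ u ∘ I) (recombine A₂ v ∘ J) (w ∘ K) ^ 2 := by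
      simp only [right]
      exact Finset.sum_congr rfl fun I _ => Finset.sum_comm
    _ = ∑ I : ι → κ₁, ∑ p : (ι → κ₃) × (ι → κ₂),
          polarDet B (recombine A₁ u ∘ I) (v ∘ p.2) (w ∘ p.1) ^ 2 := by
      simp only [middle, Fintype.sum_prod_type]
    _ = ∑ I : ι → κ₁, ∑ p : (ι → κ₃) × (ι → κ₂), polarDet B (u ∘ I) (v ∘ p.2) (w ∘ p.1) ^ 2 := by
      rw [Finset.sum_comm]
      simp only [left]
      exact Finset.sum_comm
    _ = _ := by
      simp only [Fintype.sum_prod_type]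
      exact Finset.sum_congr rfl fun I _ => Finset.sum_comm

end PolarDet

section Frames

/-- The family `u` with its `i`-th vector rescaled by `exp (a i)`. -/
def dilate {κ M : Type*} [SMul ℝ M] (a : κ → ℝ) (u : κ → M) : κ → M := fun i => Real.exp (a i) • u i

lemma linearIndependent_dilate {κ M : Type*} [AddCommGroup M] [Module ℝ M] (a : κ → ℝ) {u : κ → M}
    (hu : LinearIndependent ℝ u) : LinearIndependent ℝ (dilate a u) :=
  hu.units_smul fun i => Units.mk0 (Real.exp (a i)) (Real.exp_ne_zero _)

variable {κ H : Type*} [NormedAddCommGroup H] [InnerProductSpace ℝ H]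

lemma exists_eq_dilate_orthonormal {n : κ → H} (hn : ∀ i, n i ≠ 0)
    (hn' : Pairwise fun i j => inner ℝ (n i) (n j) = 0) :
    ∃ (a : κ → ℝ) (e : κ → H), Orthonormal ℝ e ∧ n = dilate a e := by
  refine ⟨fun i => Real.log ‖n i‖, fun i => ‖n i‖⁻¹ • n i, ⟨fun i => ?_, fun i j hij => ?_⟩, ?_⟩
  · exact norm_smul_inv_norm (𝕜 := ℝ) (hn i)
  · change inner ℝ (‖n i‖⁻¹ • n i) (‖n j‖⁻¹ • n j) = 0
    rw [inner_smul_left, inner_smul_right, hn' hij, mul_zero, mul_zero]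
  · funext i
    rw [dilate, Real.exp_log (norm_pos_iff.2 (hn i)), smul_inv_smul₀ (norm_ne_zero_iff.2 (hn i))]

lemma isCompact_setOf_orthonormal [Finite κ] [ProperSpace H] :
    IsCompact {e : κ → H | Orthonormal ℝ e} := by
  classical
  have := Fintype.ofFinite κ
  refine Metric.isCompact_of_isClosed_isBounded ?_ ?_
  · simp only [orthonormal_iff_ite, Set.ofPred_forall]
    exact isClosed_iInter fun i => isClosed_iInter fun j => isClosed_eq (by fun_prop) (by fun_prop)
  · refine (Metric.isBounded_closedBall (x := (0 : κ → H)) (r := 1)).subset fun e he => ?_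
    rw [mem_closedBall_zero_iff, pi_norm_le_iff_of_nonneg zero_le_one]
    exact fun i => (he.1 i).le

variable [Fintype κ] [DecidableEq κ]

lemma exists_recombine_pairwise_inner_eq_zero (u : κ → H) :
    ∃ A ∈ Matrix.orthogonalGroup κ ℝ,
      Pairwise fun i j => inner ℝ (recombine A u i) (recombine A u j) = 0 := by
  have hG := Matrix.isHermitian_gram ℝ u
  refine ⟨hG.eigenvectorUnitary, hG.eigenvectorUnitary.2, fun i j hij => ?_⟩
  have hb := hG.eigenvectorBasis.orthonormal.2 hij.symm
  calc inner ℝ (recombine _ u i) (recombine _ u j)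
      = star (hG.eigenvectorBasis i).ofLp ⬝ᵥ Matrix.gram ℝ u *ᵥ (hG.eigenvectorBasis j).ofLp :=
        (Matrix.star_dotProduct_gram_mulVec ..).symm
    _ = hG.eigenvalues j * inner ℝ (hG.eigenvectorBasis j) (hG.eigenvectorBasis i) := by
      rw [hG.mulVec_eigenvectorBasis, dotProduct_smul, smul_eq_mul,
        EuclideanSpace.inner_eq_star_dotProduct, star_trivial, star_trivial]
    _ = 0 := by rw [hb, mul_zero]

lemma recombine_ne_zero {A : Matrix κ κ ℝ} (hA : A ∈ Matrix.orthogonalGroup κ ℝ) {u : κ → H}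
    (hu : LinearIndependent ℝ u) (i : κ) : recombine A u i ≠ 0 := fun h => by
  have hcol := Fintype.linearIndependent_iff.1 hu _ h
  have hdiag := congrFun₂ ((Matrix.mem_orthogonalGroup_iff' κ ℝ).1 hA) i i
  simp [Matrix.mul_apply, hcol] at hdiag

lemma exists_recombine_eq_dilate_orthonormal {u : κ → H} (hu : LinearIndependent ℝ u) :
    ∃ A ∈ Matrix.orthogonalGroup κ ℝ, ∃ (a : κ → ℝ) (e : κ → H),
      Orthonormal ℝ e ∧ recombine A u = dilate a e := by
  obtain ⟨A, hA, hort⟩ := exists_recombine_pairwise_inner_eq_zero u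
  exact ⟨A, hA, exists_eq_dilate_orthonormal (recombine_ne_zero hA hu) hort⟩

end Frames

section Determinant

variable {m : ℕ}

lemma abs_det_of_mem_orthogonalGroup {n : Type*} [Fintype n] [DecidableEq n] {A : Matrix n n ℝ}
    (hA : A ∈ Matrix.orthogonalGroup n ℝ) : |A.det| = 1 :=
  CStarRing.norm_of_mem_unitary (Matrix.det_of_mem_unitary hA)

lemma detb_recombine (A : Matrix (Fin m) (Fin m) ℝ) (u : Fin m → E m) :
    detb (recombine A u) = detb u * A.det := by
  rw [detb, detb, ← Matrix.det_mul]
  congr 1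
  ext i j
  simp [recombine, Matrix.mul_apply, mul_comm]

lemma detb_dilate (a : Fin m → ℝ) (u : Fin m → E m) :
    detb (dilate a u) = Real.exp (∑ i, a i) * detb u := by
  rw [Real.exp_sum]
  exact Matrix.det_mul_row (fun j => Real.exp (a j)) (Matrix.of fun i j => u j i)

lemma abs_detb_of_orthonormal {e : Fin m → E m} (he : Orthonormal ℝ e) : |detb e| = 1 := by
  refine abs_det_of_mem_orthogonalGroup ((Matrix.mem_orthogonalGroup_iff' (Fin m) ℝ).2 ?_)
  ext i j
  rw [Matrix.one_apply, ← orthonormal_iff_ite.1 he i j]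
  simp [Matrix.mul_apply, PiLp.inner_apply, mul_comm]

lemma abs_detb_dilate_of_orthonormal (a : Fin m → ℝ) {e : Fin m → E m} (he : Orthonormal ℝ e) :
    |detb (dilate a e)| = Real.exp (∑ i, a i) := by
  rw [detb_dilate, abs_mul, abs_detb_of_orthonormal he, mul_one, abs_of_pos (Real.exp_pos _)]

end Determinant

section ConvexHull

variable {V : Type*} [AddCommGroup V] [Module ℝ V] [TopologicalSpace V]
  [IsTopologicalAddGroup V] [ContinuousSMul ℝ V] [LocallyConvexSpace ℝ V]

lemma mem_convexHull_of_forall_exp_le {Z : Set V} (hZ : IsClosed (convexHull ℝ Z)) {o : V} {K : ℝ}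
    (h : ∀ (ℓ : V →L[ℝ] ℝ) (M : ℝ), (∀ z ∈ Z, ℓ z ≤ M) → Real.exp (ℓ o) ≤ K * Real.exp M) :
    o ∈ convexHull ℝ Z := by
  by_contra ho
  obtain ⟨ℓ, M, hM, hMo⟩ := geometric_hahn_banach_closed_point (convex_convexHull ℝ Z) hZ ho
  have hgap (T : ℝ) (hT : 0 ≤ T) : Real.exp (T * (ℓ o - M)) ≤ K := by
    have := h (T • ℓ) (T * M) fun z hz =>
      mul_le_mul_of_nonneg_left (hM z (subset_convexHull ℝ Z hz)).le hT
    rwa [← div_le_iff₀ (Real.exp_pos _), ← Real.exp_sub, _root_.smul_apply,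
      smul_eq_mul, ← mul_sub] at this
  have hK : 0 ≤ K := (Real.exp_pos _).le.trans (hgap 0 le_rfl)
  have hpos : 0 < ℓ o - M := sub_pos.2 hMo
  have := hgap (K / (ℓ o - M)) (div_nonneg hK hpos.le)
  rw [div_mul_cancel₀ K hpos.ne'] at this
  linarith [Real.add_one_le_exp K]

end ConvexHull

section Polarization

variable {d₁ k d : ℕ}

/-- The trilinear form with coefficient array `c`, as a bundled map. -/
def triForm (c : Fin d₁ → Fin k → Fin d → ℝ) : E d₁ →ₗ[ℝ] E k →ₗ[ℝ] E d →ₗ[ℝ] ℝ :=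
  ∑ i, ∑ i', ∑ i'', c i i' i'' • (EuclideanSpace.projₗ i).smulRight
    ((EuclideanSpace.projₗ i').smulRight (EuclideanSpace.projₗ i''))

lemma triForm_apply (c : Fin d₁ → Fin k → Fin d → ℝ) (u : E d₁) (v : E k) (w : E d) :
    triForm c u v w = triEval c u v w := by
  simp [triForm, triEval, LinearMap.sum_apply, mul_assoc, mul_comm (c _ _ _)]

lemma iterDir_eq_iteratedFDeriv {g : E d₁ → ℝ} (hg : ContDiff ℝ (⊤ : ℕ∞) g) {s : ℕ}
    (a : Fin s → E d₁) (t : E d₁) : iterDir s a g t = iteratedFDeriv ℝ s g t a := by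
  induction s generalizing t with
  | zero => simp only [iterDir, iteratedFDeriv_zero_apply]
  | succ s ih =>
    have hs : Differentiable ℝ (iteratedFDeriv ℝ s g) :=
      hg.differentiable_iteratedFDeriv (by exact_mod_cast ENat.natCast_lt_top s)
    change fderiv ℝ (iterDir s (fun i => a i.succ) g) t (a 0) = _
    rw [funext (ih fun i => a i.succ), fderiv_continuousMultilinear_apply_const_apply (hs t)]
    rfl

lemma iterDir_diagonal {s : ℕ} (f : ContinuousMultilinearMap ℝ (fun _ : Fin s => E d₁) ℝ)
    (a : Fin s → E d₁) (t : E d₁) :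
    iterDir s a (fun t => f fun _ => t) t = ∑ σ : Equiv.Perm (Fin s), f (a ∘ σ) := by
  have hf : ContDiff ℝ (⊤ : ℕ∞) fun t : E d₁ => f fun _ => t :=
    f.contDiff.comp (contDiff_pi.2 fun _ => contDiff_id)
  rw [iterDir_eq_iteratedFDeriv hf, f.iteratedFDeriv_comp_diagonal]
  rfl

lemma iterDir_Qdet (c : Fin d₁ → Fin k → Fin d → ℝ) {s : ℕ} (a : Fin s → E d₁)
    (v : Fin s → E k) (w : Fin s → E d) (t : E d₁) :
    iterDir s a (fun t => Qdet c s t v w) t = polarDet (triForm c) a v w := by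
  have hcont : Continuous (rowDet (triForm c) v w) :=
    Continuous.matrix_det <| continuous_matrix fun i j =>
      ((triForm c).flip (v i)).flip (w j) |>.continuous_of_finiteDimensional.comp
        (continuous_apply i)
  have hdiag : (fun t => Qdet c s t v w) = fun t => rowDet (triForm c) v w fun _ => t := by
    funext t
    simp only [Qdet, rowDet_apply, triForm_apply]
  rw [hdiag]
  exact iterDir_diagonal ⟨rowDet (triForm c) v w, hcont⟩ a t

end Polarization

section Minors

variable {d₁ k d : ℕ}

/-- The space `ℝ^{d₁} × ℝ^k × ℝ^d` containing the points of `N_R(Q)`. -/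
abbrev Exponent (d₁ k d : ℕ) : Type := (Fin d₁ → ℝ) × (Fin k → ℝ) × (Fin d → ℝ)

/-- The indices of the summands of `𝒬_Q²`. The summand `1` is the one with `s = 0`. -/
abbrev Index (d₁ k d : ℕ) : Type :=
  Σ s : Fin (min d k + 1), (Fin s → Fin d₁) × (Fin s → Fin k) × (Fin s → Fin d)

/-- The constant `(u·∇)^α Q_s(t, v_β, w_γ)` in polarized form, for sequences `ι` counted by
`α`, `β`, `γ`. -/
def coeff (c : Fin d₁ → Fin k → Fin d → ℝ) (u : Fin d₁ → E d₁) (v : Fin k → E k)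
    (w : Fin d → E d) (ι : Index d₁ k d) : ℝ :=
  polarDet (triForm c) (u ∘ ι.2.1) (v ∘ ι.2.2.1) (w ∘ ι.2.2.2)

/-- The multiindex counting the sequence `I`, as a real vector. -/
def countVec {m s : ℕ} (I : Fin s → Fin m) : Fin m → ℝ :=
  fun ℓ => ((Finset.univ.filter fun j => I j = ℓ).card : ℝ)

/-- The point `(α, β, γ)` of the three multiindices counting the sequences of `ι`. -/
def exponent (ι : Index d₁ k d) : Exponent d₁ k d :=
  (countVec ι.2.1, countVec ι.2.2.1, countVec ι.2.2.2)

/-- The self-duality of the space of exponents given by the sum of the three dot products. -/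
def pairing : Exponent d₁ k d ≃ₗ[ℝ] Module.Dual ℝ (Exponent d₁ k d) :=
  ((dotProductEquiv ℝ (Fin d₁)).prodCongr <|
    ((dotProductEquiv ℝ (Fin k)).prodCongr (dotProductEquiv ℝ (Fin d))).trans
      (LinearMap.coprodEquiv ℝ)).trans (LinearMap.coprodEquiv ℝ)

lemma pairing_apply (a x : Exponent d₁ k d) :
    pairing a x = a.1 ⬝ᵥ x.1 + (a.2.1 ⬝ᵥ x.2.1 + a.2.2 ⬝ᵥ x.2.2) := rfl

lemma dotProduct_countVec {m s : ℕ} (a : Fin m → ℝ) (I : Fin s → Fin m) :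
    a ⬝ᵥ countVec I = ∑ j, a (I j) := by
  simp only [dotProduct, countVec, Finset.card_filter, Nat.cast_sum, Nat.cast_ite, Nat.cast_one,
    Nat.cast_zero, Finset.mul_sum]
  rw [Finset.sum_comm]
  simp only [mul_ite, mul_one, mul_zero, Finset.sum_ite_eq, Finset.mem_univ, if_true]

lemma Counts.countVec_eq {m s : ℕ} {β : Fin m → ℕ} {I : Fin s → Fin m} (h : Counts β I) :
    countVec I = fun ℓ => (β ℓ : ℝ) :=
  funext fun ℓ => congrArg Nat.cast (h ℓ)

lemma image_toPoint_InN0 (c : Fin d₁ → Fin k → Fin d → ℝ) (u : Fin d₁ → E d₁)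
    (v : Fin k → E k) (w : Fin d → E d) :
    toPoint '' {p | InN0 c u v w p} = exponent '' {ι | coeff c u v w ι ≠ 0} := by
  ext x
  constructor
  · rintro ⟨p, ⟨h₁, h₂, h₃⟩ | ⟨s, -, hs, I, I', I'', hI, hI', hI'', hne⟩, rfl⟩
    · have zero {m : ℕ} {β : Fin m → ℕ} (hβ : β = 0) : Counts β Fin.elim0 := fun ℓ => by simp [hβ]
      exact ⟨⟨0, Fin.elim0, Fin.elim0, Fin.elim0⟩,
        (polarDet_of_isEmpty (ι := Fin 0) ..).trans_ne one_ne_zero,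
        Prod.ext (zero h₁).countVec_eq (Prod.ext (zero h₂).countVec_eq (zero h₃).countVec_eq)⟩
    · rw [iterDir_Qdet] at hne
      exact ⟨⟨⟨s, Nat.lt_succ_of_le hs⟩, I, I', I''⟩, hne,
        Prod.ext hI.countVec_eq (Prod.ext hI'.countVec_eq hI''.countVec_eq)⟩
  · rintro ⟨⟨s, I, I', I''⟩, hne, rfl⟩
    refine ⟨(fun ℓ => (Finset.univ.filter fun j => I j = ℓ).card,
      fun ℓ => (Finset.univ.filter fun j => I' j = ℓ).card,
      fun ℓ => (Finset.univ.filter fun j => I'' j = ℓ).card), ?_, rfl⟩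
    obtain ⟨s, hs⟩ := s
    obtain rfl | hpos := s.eq_zero_or_pos
    · exact Or.inl ⟨rfl, rfl, rfl⟩
    · refine Or.inr ⟨s, hpos, Nat.le_of_lt_succ hs, I, I', I'', fun _ => rfl, fun _ => rfl,
        fun _ => rfl, ?_⟩
      rwa [iterDir_Qdet]

lemma calQ_eq_sqrt (c : Fin d₁ → Fin k → Fin d → ℝ) (u : Fin d₁ → E d₁) (v : Fin k → E k)
    (w : Fin d → E d) : calQ c u v w = √(∑ ι, coeff c u v w ι ^ 2) := by
  let F (s : ℕ) : ℝ := ∑ I : Fin s → Fin d₁, ∑ I' : Fin s → Fin k, ∑ I'' : Fin s → Fin d,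
    polarDet (triForm c) (u ∘ I) (v ∘ I') (w ∘ I'') ^ 2
  have hF₀ : F 0 = 1 := by
    simp only [F, polarDet_of_isEmpty, one_pow, Finset.sum_const, Finset.card_univ,
      Fintype.card_unique, one_smul]
  have hF : ∑ ι, coeff c u v w ι ^ 2 = ∑ s : Fin (min d k + 1), F s := by
    simp only [coeff, F, Fintype.sum_sigma, Fintype.sum_prod_type]
  rw [hF, ← Finset.sum_range, Finset.range_eq_Ico,
    Finset.sum_eq_sum_Ico_succ_bot (Nat.succ_pos _), hF₀]
  simp only [calQ, iterDir_Qdet]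
  rfl

lemma continuous_coeff (ι : Index d₁ k d) :
    Continuous fun p : (Fin d₁ → Fin k → Fin d → ℝ) ×
        (Fin d₁ → E d₁) × (Fin k → E k) × (Fin d → E d) =>
      coeff p.1 p.2.1 p.2.2.1 p.2.2.2 ι := by
  simp only [coeff, polarDet, triForm_apply, triEval, Function.comp_apply]
  fun_prop

lemma coeff_dilate (c : Fin d₁ → Fin k → Fin d → ℝ) (a : Exponent d₁ k d) (u : Fin d₁ → E d₁)
    (v : Fin k → E k) (w : Fin d → E d) (ι : Index d₁ k d) :
    coeff c (dilate a.1 u) (dilate a.2.1 v) (dilate a.2.2 w) ι =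
      Real.exp (pairing a (exponent ι)) * coeff c u v w ι := by
  simp only [pairing_apply, exponent, dotProduct_countVec, Real.exp_add, Real.exp_sum, ← mul_assoc]
  exact polarDet_smul ..

lemma abs_coeff_le_calQ (c : Fin d₁ → Fin k → Fin d → ℝ) (u : Fin d₁ → E d₁) (v : Fin k → E k)
    (w : Fin d → E d) (ι : Index d₁ k d) : |coeff c u v w ι| ≤ calQ c u v w := by
  rw [calQ_eq_sqrt, ← Real.sqrt_sq_eq_abs]
  exact Real.sqrt_le_sqrt <|
    Finset.single_le_sum (f := fun ι => coeff c u v w ι ^ 2) (fun _ _ => sq_nonneg _)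
      (Finset.mem_univ ι)

lemma calQ_dilate_le (c : Fin d₁ → Fin k → Fin d → ℝ) {a : Exponent d₁ k d} (u : Fin d₁ → E d₁)
    (v : Fin k → E k) (w : Fin d → E d) {M : ℝ}
    (hM : ∀ ι, coeff c u v w ι ≠ 0 → pairing a (exponent ι) ≤ M) :
    calQ c (dilate a.1 u) (dilate a.2.1 v) (dilate a.2.2 w) ≤ calQ c u v w * Real.exp M := by
  rw [calQ_eq_sqrt, calQ_eq_sqrt, ← Real.sqrt_sq (Real.exp_pos M).le,
    ← Real.sqrt_mul (Finset.sum_nonneg fun _ _ => sq_nonneg _), Finset.sum_mul]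
  refine Real.sqrt_le_sqrt (Finset.sum_le_sum fun ι _ => ?_)
  rw [coeff_dilate, mul_pow, mul_comm]
  obtain h | h := eq_or_ne (coeff c u v w ι) 0
  · simp only [h, ne_eq, OfNat.ofNat_ne_zero, not_false_eq_true, zero_pow, zero_mul, le_refl]
  · gcongr
    exact hM ι h

lemma calQ_recombine (c : Fin d₁ → Fin k → Fin d → ℝ) {A₁ : Matrix (Fin d₁) (Fin d₁) ℝ}
    {A₂ : Matrix (Fin k) (Fin k) ℝ} {A₃ : Matrix (Fin d) (Fin d) ℝ}
    (h₁ : A₁ ∈ Matrix.orthogonalGroup (Fin d₁) ℝ) (h₂ : A₂ ∈ Matrix.orthogonalGroup (Fin k) ℝ)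
    (h₃ : A₃ ∈ Matrix.orthogonalGroup (Fin d) ℝ) (u : Fin d₁ → E d₁) (v : Fin k → E k)
    (w : Fin d → E d) :
    calQ c (recombine A₁ u) (recombine A₂ v) (recombine A₃ w) = calQ c u v w := by
  rw [Matrix.mem_orthogonalGroup_iff] at h₁ h₂ h₃
  simp only [calQ_eq_sqrt, coeff, Fintype.sum_sigma, Fintype.sum_prod_type,
    sum_sq_polarDet_recombine _ h₁ h₂ h₃]

end Minors

section Newton

variable {d₁ k d : ℕ}

lemma eventually_forall_mul_exp_le_calQ_dilate {c : Fin d₁ → Fin k → Fin d → ℝ}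
    {u : Fin d₁ → E d₁} {v : Fin k → E k} {w : Fin d → E d} {o : Exponent d₁ k d}
    (ho : o ∈ convexHull ℝ (exponent '' {ι | coeff c u v w ι ≠ 0})) :
    ∀ᶠ z : (ℝ × (Fin d₁ → Fin k → Fin d → ℝ)) ×
        ((Fin d₁ → E d₁) × (Fin k → E k) × (Fin d → E d)) in nhds ((0, c), (u, v, w)),
      ∀ a : Exponent d₁ k d, z.1.1 * Real.exp (pairing a o) ≤
        calQ z.1.2 (dilate a.1 z.2.1) (dilate a.2.1 z.2.2.1) (dilate a.2.2 z.2.2.2) := by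
  have hlt : ∀ᶠ z : (ℝ × (Fin d₁ → Fin k → Fin d → ℝ)) ×
      ((Fin d₁ → E d₁) × (Fin k → E k) × (Fin d → E d)) in nhds ((0, c), (u, v, w)),
      ∀ ι, coeff c u v w ι ≠ 0 → z.1.1 < |coeff z.1.2 z.2.1 z.2.2.1 z.2.2.2 ι| := by
    refine Filter.eventually_all.2 fun ι => ?_
    obtain h | h := eq_or_ne (coeff c u v w ι) 0
    · exact Filter.Eventually.of_forall fun _ h' => absurd h h'
    · have hcont := (continuous_coeff ι).comp (f := fun z : (ℝ × (Fin d₁ → Fin k → Fin d → ℝ)) ×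
        ((Fin d₁ → E d₁) × (Fin k → E k) × (Fin d → E d)) => (z.1.2, z.2)) (by fun_prop)
      filter_upwards [(continuous_fst.fst.tendsto _).eventually_lt (hcont.abs.tendsto _)
        (abs_pos.2 h)] with z hz _ using hz
  filter_upwards [hlt] with z hz a
  obtain ⟨_, ⟨ι, hι, rfl⟩, hle⟩ := ((pairing a).convexOn convex_univ).exists_ge_of_mem_convexHull
    (Set.subset_univ _) ho
  calc z.1.1 * Real.exp (pairing a o)
      ≤ |coeff z.1.2 z.2.1 z.2.2.1 z.2.2.2 ι| * Real.exp (pairing a (exponent ι)) := by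
        gcongr
        exact (hz ι hι).le
    _ = |coeff z.1.2 (dilate a.1 z.2.1) (dilate a.2.1 z.2.2.1) (dilate a.2.2 z.2.2.2) ι| := by
        rw [coeff_dilate, abs_mul, Real.abs_exp, mul_comm]
    _ ≤ _ := abs_coeff_le_calQ ..

/-- The exponent `o` governs `𝒬_Q` from below, with constant `ε`, on all dilations of orthonormal
frames. By the singular value decomposition these represent all frames. -/
def IsDilationBound (c : Fin d₁ → Fin k → Fin d → ℝ) (o : Exponent d₁ k d) (ε : ℝ) : Prop :=
  ∀ ⦃u : Fin d₁ → E d₁⦄ ⦃v : Fin k → E k⦄ ⦃w : Fin d → E d⦄,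
    Orthonormal ℝ u → Orthonormal ℝ v → Orthonormal ℝ w → ∀ a : Exponent d₁ k d,
      ε * Real.exp (pairing a o) ≤ calQ c (dilate a.1 u) (dilate a.2.1 v) (dilate a.2.2 w)

lemma exists_eventually_isDilationBound {c : Fin d₁ → Fin k → Fin d → ℝ} {o : Exponent d₁ k d}
    (ho : o ∈ NR c) : ∃ ε, 0 < ε ∧ ∀ᶠ c' in nhds c, IsDilationBound c' o ε := by
  have hK : IsCompact ({u : Fin d₁ → E d₁ | Orthonormal ℝ u} ×ˢ
      ({v : Fin k → E k | Orthonormal ℝ v} ×ˢ {w : Fin d → E d | Orthonormal ℝ w})) :=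
    isCompact_setOf_orthonormal.prod
      (isCompact_setOf_orthonormal.prod isCompact_setOf_orthonormal)
  -- With the constant as a further variable near `0`, compactness makes it uniform in the frames.
  have hframes := hK.eventually_forall_of_forall_eventually (x₀ := ((0 : ℝ), c))
    (P := fun x e => ∀ a : Exponent d₁ k d, x.1 * Real.exp (pairing a o) ≤
      calQ x.2 (dilate a.1 e.1) (dilate a.2.1 e.2.1) (dilate a.2.2 e.2.2))
    fun e he => eventually_forall_mul_exp_le_calQ_dilate
      (image_toPoint_InN0 c .. ▸ ho e.1 e.2.1 e.2.2 he.1 he.2.1 he.2.2)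
  have hbound : ∀ᶠ x : ℝ × (Fin d₁ → Fin k → Fin d → ℝ) in nhds (0, c),
      IsDilationBound x.2 o x.1 :=
    hframes.mono fun x hx u v w hu hv hw => hx (u, v, w) ⟨hu, hv, hw⟩
  have hright : ∀ᶠ ε in nhdsWithin (0 : ℝ) (Set.Ioi 0), ∀ᶠ c' in nhds c, IsDilationBound c' o ε :=
    hbound.curry_nhds.filter_mono nhdsWithin_le_nhds
  obtain ⟨ε, hε, hpos⟩ := (hright.and self_mem_nhdsWithin).exists
  exact ⟨ε, hpos, hε⟩

lemma IsDilationBound.mem_NR {c : Fin d₁ → Fin k → Fin d → ℝ} {o : Exponent d₁ k d} {ε : ℝ}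
    (hε : 0 < ε) (h : IsDilationBound c o ε) : o ∈ NR c := by
  intro u v w hu hv hw
  rw [image_toPoint_InN0]
  refine mem_convexHull_of_forall_exp_le (K := calQ c u v w / ε)
    ((Set.toFinite _).image _ |>.isClosed_convexHull ℝ) fun ℓ M hM => ?_
  obtain ⟨a, ha⟩ := (pairing (d₁ := d₁) (k := k) (d := d)).surjective ℓ.toLinearMap
  have hℓ (x : Exponent d₁ k d) : ℓ x = pairing a x := (LinearMap.congr_fun ha x).symm
  rw [div_mul_eq_mul_div, le_div_iff₀' hε, hℓ]
  exact (h hu hv hw a).trans <| calQ_dilate_le c u v w fun ι hι =>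
    hℓ (exponent ι) ▸ hM _ (Set.mem_image_of_mem _ hι)

theorem mem_NR_iff {c : Fin d₁ → Fin k → Fin d → ℝ} {o : Exponent d₁ k d} :
    o ∈ NR c ↔ ∃ ε, 0 < ε ∧ ∀ᶠ c' in nhds c, IsDilationBound c' o ε :=
  ⟨exists_eventually_isDilationBound, fun ⟨_, hε, h⟩ => h.self_of_nhds.mem_NR hε⟩

lemma isDilationBound_const_iff {c : Fin d₁ → Fin k → Fin d → ℝ} {x y z ε : ℝ} :
    IsDilationBound c (fun _ => x, fun _ => y, fun _ => z) ε ↔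
      ∀ (u : Fin d₁ → E d₁) (v : Fin k → E k) (w : Fin d → E d),
        LinearIndependent ℝ u → LinearIndependent ℝ v → LinearIndependent ℝ w →
        ε * |detb u| ^ x * |detb v| ^ y * |detb w| ^ z ≤ calQ c u v w := by
  have hexp {u : Fin d₁ → E d₁} {v : Fin k → E k} {w : Fin d → E d} (hu : Orthonormal ℝ u)
      (hv : Orthonormal ℝ v) (hw : Orthonormal ℝ w) (a : Exponent d₁ k d) :
      ε * Real.exp (pairing a (fun _ => x, fun _ => y, fun _ => z)) =
        ε * |detb (dilate a.1 u)| ^ x * |detb (dilate a.2.1 v)| ^ y *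
          |detb (dilate a.2.2 w)| ^ z := by
    simp only [pairing_apply, dotProduct, ← Finset.sum_mul, Real.exp_add, Real.exp_mul,
      abs_detb_dilate_of_orthonormal _ hu, abs_detb_dilate_of_orthonormal _ hv,
      abs_detb_dilate_of_orthonormal _ hw, mul_assoc]
  constructor
  · intro h u v w hu hv hw
    obtain ⟨A₁, hA₁, a₁, e₁, he₁, h₁⟩ := exists_recombine_eq_dilate_orthonormal hu
    obtain ⟨A₂, hA₂, a₂, e₂, he₂, h₂⟩ := exists_recombine_eq_dilate_orthonormal hv
    obtain ⟨A₃, hA₃, a₃, e₃, he₃, h₃⟩ := exists_recombine_eq_dilate_orthonormal hw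
    have := h he₁ he₂ he₃ (a₁, a₂, a₃)
    simpa only [hexp he₁ he₂ he₃, ← h₁, ← h₂, ← h₃, calQ_recombine c hA₁ hA₂ hA₃, detb_recombine,
      abs_mul, abs_det_of_mem_orthogonalGroup, hA₁, hA₂, hA₃, mul_one] using this
  · intro h u v w hu hv hw a
    rw [hexp hu hv hw]
    exact h _ _ _ (linearIndependent_dilate _ hu.linearIndependent)
      (linearIndependent_dilate _ hv.linearIndependent)
      (linearIndependent_dilate _ hw.linearIndependent)

theorem statement3_general (c : Fin d₁ → Fin k → Fin d → ℝ) (x y z : ℝ) :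
    ((fun _ => x), (fun _ => y), fun _ => z) ∈ NR c ↔
    ∃ c₀ : ℝ, 0 < c₀ ∧ ∃ 𝒩 ∈ nhds c, ∀ c' ∈ 𝒩,
      ∀ (u : Fin d₁ → E d₁) (v : Fin k → E k) (w : Fin d → E d),
        LinearIndependent ℝ u → LinearIndependent ℝ v → LinearIndependent ℝ w →
        c₀ * |detb u| ^ x * |detb v| ^ y * |detb w| ^ z ≤ calQ c' u v w := by
  simp only [mem_NR_iff, isDilationBound_const_iff, Filter.eventually_iff_exists_mem]

end Newton

theorem statement3
    (d₁ k d : ℕ) (hd₁ : 0 < d₁) (hk : 0 < k) (hd : 0 < d)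
    (c : Fin d₁ → Fin k → Fin d → ℝ) (s : ℝ) (hs : 0 ≤ s) :
    (((fun _ => s / (d₁ : ℝ)), (fun _ => s / (k : ℝ)), fun _ => s / (d : ℝ)) ∈ NR c) ↔
    ∃ c₀ : ℝ, 0 < c₀ ∧ ∃ 𝒩 ∈ nhds c, ∀ c' ∈ 𝒩,
      ∀ (u : Fin d₁ → E d₁) (v : Fin k → E k) (w : Fin d → E d),
        LinearIndependent ℝ u → LinearIndependent ℝ v → LinearIndependent ℝ w →
        c₀ * |detb u| ^ (s / (d₁ : ℝ)) * |detb v| ^ (s / (k : ℝ)) *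
            |detb w| ^ (s / (d : ℝ)) ≤ calQ c' u v w :=
  statement3_general c _ _ _

end Statement3
end
end

section
/- Fix a real number s ≥ 0 and let o_s ∈ [0,∞)^{d₁+k+d} be the point whose first d₁ coordinates equal s/d₁, whose next k coordinates equal s/k, and whose last d coordinates equal s/d. Then o_s does NOT belong to N_R(Q) if and only if there exist orthonormal bases u = (u_i) of ℝ^{d₁}, v = (v_i) of ℝ^k, w = (w_i) of ℝ^d and real symmetric matrices D₁ (d₁×d₁), D₂ (k×k), D₃ (d×d), each diagonalized by the respective basis (each u_i is an eigenvector of D₁, each v_i of D₂, each w_i of D₃), with trace(D₁) > 0 and trace(D₂) = trace(D₃) = 0, such that |det(e^{τD₂}v_i)_i| = 1 = |det(e^{τD₃}w_i)_i| for all τ ∈ ℝ, |det(e^{τD₁}u_i)_i| → ∞ as τ → ∞, and 𝒬_Q[(e^{τD₁}u_i)_i, (e^{τD₂}v_i)_i, (e^{τD₃}w_i)_i] / ( |det(e^{τD₁}u_i)_i|^{s/d₁} |det(e^{τD₂}v_i)_i|^{s/k} |det(e^{τD₃}w_i)_i|^{s/d} ) → 0 as τ → ∞. -/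
noncomputable section

open MeasureTheory
open scoped BigOperators ENNReal NNReal

namespace Statement4

abbrev E (n : ℕ) : Type := EuclideanSpace ℝ (Fin n)

/-- Evaluation of the trilinear form on `ℝ^{d₁} × ℝ^k × ℝ^d` with coefficient array `c`. -/
def triEval {d₁ k d : ℕ} (c : Fin d₁ → Fin k → Fin d → ℝ)
    (u : E d₁) (v : E k) (w : E d) : ℝ :=
  ∑ i : Fin d₁, ∑ i' : Fin k, ∑ i'' : Fin d, u i * v i' * w i'' * c i i' i''

/-- The determinant `Q_s(t; v₁,…,v_s; w₁,…,w_s)`. -/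
def Qdet {d₁ k d : ℕ} (c : Fin d₁ → Fin k → Fin d → ℝ) (s : ℕ)
    (t : E d₁) (v : Fin s → E k) (w : Fin s → E d) : ℝ :=
  Matrix.det (Matrix.of fun i j : Fin s => triEval c t (v i) (w j))

/-- Iterated directional derivative along the directions `a 0, …, a (s-1)`. -/
def iterDir {d₁ : ℕ} : (s : ℕ) → (Fin s → E d₁) → (E d₁ → ℝ) → E d₁ → ℝ
  | 0, _, g => g
  | s + 1, a, g => fun t => fderiv ℝ (iterDir s (fun i => a i.succ) g) t (a 0)

/-- `β` counts the sequence `I`. -/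
def Counts {m s : ℕ} (β : Fin m → ℕ) (I : Fin s → Fin m) : Prop :=
  ∀ ℓ : Fin m, (Finset.univ.filter fun j => I j = ℓ).card = β ℓ

/-- Membership in the set `N₀(Q, ũ, ṽ, w̃)`. -/
def InN0 {d₁ k d : ℕ} (c : Fin d₁ → Fin k → Fin d → ℝ)
    (u : Fin d₁ → E d₁) (v : Fin k → E k) (w : Fin d → E d)
    (p : (Fin d₁ → ℕ) × (Fin k → ℕ) × (Fin d → ℕ)) : Prop :=
  (p.1 = 0 ∧ p.2.1 = 0 ∧ p.2.2 = 0) ∨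
  ∃ s : ℕ, 1 ≤ s ∧ s ≤ min d k ∧
    ∃ (I : Fin s → Fin d₁) (I' : Fin s → Fin k) (I'' : Fin s → Fin d),
      Counts p.1 I ∧ Counts p.2.1 I' ∧ Counts p.2.2 I'' ∧
      iterDir s (fun j => u (I j))
        (fun t => Qdet c s t (fun j => v (I' j)) (fun j => w (I'' j))) 0 ≠ 0

def toPoint {d₁ k d : ℕ} (p : (Fin d₁ → ℕ) × (Fin k → ℕ) × (Fin d → ℕ)) :
    (Fin d₁ → ℝ) × (Fin k → ℝ) × (Fin d → ℝ) :=
  ((fun i => (p.1 i : ℝ)), (fun i => (p.2.1 i : ℝ)), fun i => (p.2.2 i : ℝ))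

/-- The Newton-type diagram `N_R(Q)`. -/
def NR {d₁ k d : ℕ} (c : Fin d₁ → Fin k → Fin d → ℝ) :
    Set ((Fin d₁ → ℝ) × (Fin k → ℝ) × (Fin d → ℝ)) :=
  { x | ∀ (u : Fin d₁ → E d₁) (v : Fin k → E k) (w : Fin d → E d),
      Orthonormal ℝ u → Orthonormal ℝ v → Orthonormal ℝ w →
      x ∈ convexHull ℝ (toPoint '' { p | InN0 c u v w p }) }


/-- The quantity `𝒬_Q[u,v,w]`. -/
def calQ {d₁ k d : ℕ} (c : Fin d₁ → Fin k → Fin d → ℝ)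
    (u : Fin d₁ → E d₁) (v : Fin k → E k) (w : Fin d → E d) : ℝ :=
  Real.sqrt (1 + ∑ s ∈ Finset.Icc 1 (min d k),
    ∑ I : Fin s → Fin d₁, ∑ I' : Fin s → Fin k, ∑ I'' : Fin s → Fin d,
      (iterDir s (fun j => u (I j))
        (fun t => Qdet c s t (fun j => v (I' j)) (fun j => w (I'' j))) 0) ^ 2)

/-- Determinant of the matrix whose columns are `u 0, …, u (m-1)`. -/
def detb {m : ℕ} (u : Fin m → E m) : ℝ :=
  Matrix.det (Matrix.of fun i j : Fin m => u j i)

/-!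
Rescaling `u i`, `v i`, `w i` by `exp (τ * μ i)`, `exp (τ * ν i)`, `exp (τ * ρ i)` multiplies the
term of `𝒬_Q` with exponents `(α, β, γ)` by `exp (τ * (μ ⬝ α + ν ⬝ β + ρ ⬝ γ))`, and the
normalising product of determinants grows like the exponential of the same functional evaluated at
`o_s`. The quotient therefore tends to zero exactly when this functional is strictly smaller on
the finite set `N₀` than at `o_s`, that is, when it separates `o_s` from the convex hull of `N₀`;
by Hahn–Banach such a functional exists, for some orthonormal bases, if and only if
`o_s ∉ N_R(Q)`. All the points involved have three blocks of equal sum, so `ν` and `ρ` can be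
normalised to have sum zero at the expense of `μ`; comparing `o_s` with the origin, which lies in
`N₀`, then forces `∑ μ i > 0`.
-/

/-! ### Linear functionals on exponent space -/

section Pairing

variable {R α β γ : Type*} [Fintype α]

theorem sum_sub_mean_eq_zero [Field R] [CharZero R] [Nonempty α] (μ : α → R) :
    ∑ i, (μ i - (∑ j, μ j) / Fintype.card α) = 0 := by
  rw [Finset.sum_sub_distrib μ, Finset.sum_const, Finset.card_univ, nsmul_eq_mul,
    mul_div_cancel₀ _ (Nat.cast_ne_zero.2 Fintype.card_ne_zero), sub_self]

variable [Fintype β] [Fintype γ]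

/-- The linear functional on `R^α × R^β × R^γ` with coefficient vectors `μ`, `ν`, `ρ`. Every linear
functional is of this form, and it gives the growth rate of a term of `𝒬_Q` under the scaling
`u i ↦ exp (τ * μ i) • u i` and its analogues for `v` and `w`. -/
def pairing [CommSemiring R] [DecidableEq α] [DecidableEq β] [DecidableEq γ]
    (μ : α → R) (ν : β → R) (ρ : γ → R) : (α → R) × (β → R) × (γ → R) →ₗ[R] R :=
  (dotProductEquiv R α μ).coprod ((dotProductEquiv R β ν).coprod (dotProductEquiv R γ ρ))

/-- The points whose three blocks of coordinates have the same sum, such as the multiindices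
`(α, β, γ)` with `|α| = |β| = |γ|`. -/
def IsBalanced [AddCommMonoid R] (x : (α → R) × (β → R) × (γ → R)) : Prop :=
  ∑ i, x.1 i = ∑ i, x.2.1 i ∧ ∑ i, x.1 i = ∑ i, x.2.2 i

theorem isBalanced_const [Field R] [CharZero R] [Nonempty α] [Nonempty β] [Nonempty γ]
    (s : R) :
    IsBalanced ((fun _ => s / Fintype.card α, fun _ => s / Fintype.card β,
      fun _ => s / Fintype.card γ) : (α → R) × (β → R) × (γ → R)) := by
  simp only [IsBalanced, Finset.sum_const, Finset.card_univ, nsmul_eq_mul]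
  exact ⟨by field_simp, by field_simp⟩

variable [DecidableEq α] [DecidableEq β] [DecidableEq γ]

theorem pairing_apply [CommSemiring R] (μ : α → R) (ν : β → R) (ρ : γ → R)
    (x : (α → R) × (β → R) × (γ → R)) :
    pairing μ ν ρ x = μ ⬝ᵥ x.1 + (ν ⬝ᵥ x.2.1 + ρ ⬝ᵥ x.2.2) :=
  rfl

theorem exists_pairing_eq [CommSemiring R] (f : (α → R) × (β → R) × (γ → R) →ₗ[R] R) :
    ∃ μ ν ρ, pairing μ ν ρ = f := by
  refine ⟨(dotProductEquiv R α).symm (f ∘ₗ .inl R _ _),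
    (dotProductEquiv R β).symm (f ∘ₗ .inr R _ _ ∘ₗ .inl R _ _),
    (dotProductEquiv R γ).symm (f ∘ₗ .inr R _ _ ∘ₗ .inr R _ _), ?_⟩
  simp only [pairing, LinearEquiv.apply_symm_apply, ← LinearMap.comp_coprod,
    LinearMap.coprod_inl_inr, LinearMap.comp_id]

theorem pairing_const [CommSemiring R] (μ : α → R) (ν : β → R) (ρ : γ → R) (a b e : R) :
    pairing μ ν ρ (fun _ => a, fun _ => b, fun _ => e) =
      (∑ i, μ i) * a + ((∑ i, ν i) * b + (∑ i, ρ i) * e) := by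
  simp only [pairing_apply, dotProduct, Finset.sum_mul]

-- The means of `ν` and `ρ` can be absorbed into `μ` because balanced points have equal block sums.
theorem exists_sum_eq_zero_pairing_eq [Field R] [CharZero R] [Nonempty β] [Nonempty γ]
    (μ : α → R) (ν : β → R) (ρ : γ → R) :
    ∃ (μ' : α → R) (ν' : β → R) (ρ' : γ → R), ∑ i, ν' i = 0 ∧ ∑ i, ρ' i = 0 ∧
      ∀ x, IsBalanced x → pairing μ' ν' ρ' x = pairing μ ν ρ x := by
  refine ⟨fun i => μ i + ((∑ j, ν j) / Fintype.card β + (∑ j, ρ j) / Fintype.card γ),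
    fun i => ν i - (∑ j, ν j) / Fintype.card β, fun i => ρ i - (∑ j, ρ j) / Fintype.card γ,
    sum_sub_mean_eq_zero ν, sum_sub_mean_eq_zero ρ, fun x ⟨hν, hρ⟩ => ?_⟩
  simp only [pairing_apply, dotProduct, add_mul, sub_mul, Finset.sum_add_distrib,
    Finset.sum_sub_distrib, ← Finset.mul_sum, ← hν, ← hρ]
  ring

end Pairing

/-! ### Separation from the convex hull of a finite set -/

theorem notMem_convexHull_iff_exists_forall_lt {V : Type*} [AddCommGroup V] [Module ℝ V]
    [TopologicalSpace V] [IsTopologicalAddGroup V] [ContinuousSMul ℝ V] [LocallyConvexSpace ℝ V]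
    [T2Space V] {S : Set V} (hS : S.Finite) (x : V) :
    x ∉ convexHull ℝ S ↔ ∃ f : StrongDual ℝ V, ∀ y ∈ S, f y < f x := by
  constructor
  · intro hx
    obtain ⟨f, a, hSa, hax⟩ :=
      geometric_hahn_banach_closed_point (convex_convexHull ℝ S) (hS.isClosed_convexHull ℝ) hx
    exact ⟨f, fun y hy => (hSa y (subset_convexHull ℝ S hy)).trans hax⟩
  · rintro ⟨f, hf⟩ hx
    have hull_lt : convexHull ℝ S ⊆ {y | f y < f x} :=
      convexHull_min hf (convex_halfSpace_lt f.toLinearMap.isLinear (f x))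
    exact lt_irrefl (f x) (hull_lt hx)

theorem notMem_convexHull_iff_exists_pairing_lt {α β γ : Type*} [Fintype α] [Fintype β] [Fintype γ]
    [DecidableEq α] [DecidableEq β] [DecidableEq γ] {S : Set ((α → ℝ) × (β → ℝ) × (γ → ℝ))}
    (hS : S.Finite) (x : (α → ℝ) × (β → ℝ) × (γ → ℝ)) :
    x ∉ convexHull ℝ S ↔ ∃ μ ν ρ, ∀ y ∈ S, pairing μ ν ρ y < pairing μ ν ρ x := by
  rw [notMem_convexHull_iff_exists_forall_lt hS]
  constructor
  · rintro ⟨f, hf⟩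
    obtain ⟨μ, ν, ρ, hμνρ⟩ := exists_pairing_eq f.toLinearMap
    exact ⟨μ, ν, ρ, by simpa only [hμνρ] using! hf⟩
  · rintro ⟨μ, ν, ρ, h⟩
    exact ⟨(pairing μ ν ρ).toContinuousLinearMap, h⟩

/-! ### Decay of families of exponentials -/

theorem tendsto_exp_mul_const_atTop_nhds_zero_iff {a : ℝ} :
    Filter.Tendsto (fun τ => Real.exp (τ * a)) Filter.atTop (nhds 0) ↔ a < 0 := by
  rw [Real.tendsto_exp_comp_nhds_zero]
  exact Filter.tendsto_mul_const_atBot_iff_neg Filter.tendsto_id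

theorem tendsto_exp_mul_const_mul_atTop_nhds_zero_iff {a C : ℝ} :
    Filter.Tendsto (fun τ => Real.exp (τ * a) * C) Filter.atTop (nhds 0) ↔ C ≠ 0 → a < 0 := by
  rcases eq_or_ne C 0 with rfl | hC
  · simp
  · rw [imp_iff_right hC, ← tendsto_exp_mul_const_atTop_nhds_zero_iff, ← zero_mul C,
      Filter.tendsto_mul_iff_of_ne_zero tendsto_const_nhds hC, zero_mul]

theorem tendsto_norm_exp_mul_div_exp_iff {ι : Type*} [Fintype ι] (A e : ι → ℝ) (L : ℝ) :
    Filter.Tendsto (fun τ => ‖WithLp.toLp 2 fun i => Real.exp (τ * e i) * A i‖ / Real.exp (τ * L))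
      Filter.atTop (nhds 0) ↔ ∀ i, A i ≠ 0 → e i < L := by
  have norm_div_exp (τ : ℝ) : ‖WithLp.toLp 2 fun i => Real.exp (τ * e i) * A i‖ / Real.exp (τ * L) =
      ‖WithLp.toLp 2 fun i => Real.exp (τ * (e i - L)) * A i‖ := by
    rw [div_eq_inv_mul, ← Real.exp_neg, ← Real.norm_of_nonneg (Real.exp_pos _).le, ← norm_smul,
      ← WithLp.toLp_smul]
    congr! 3 with i
    simp only [Pi.smul_apply, smul_eq_mul, ← mul_assoc, ← Real.exp_add]
    ring_nf
  simp only [norm_div_exp, ← tendsto_zero_iff_norm_tendsto_zero]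
  rw [(PiLp.homeomorph 2 fun _ : ι => ℝ).isInducing.tendsto_nhds_iff, tendsto_pi_nhds]
  refine forall_congr' fun i => ?_
  rw [← sub_neg (a := e i)]
  exact tendsto_exp_mul_const_mul_atTop_nhds_zero_iff

/-! ### Diagonal operators and determinants of orthonormal bases -/

theorem trace_eq_sum_of_apply_basis_eq_smul {R M ι : Type*} [CommRing R] [AddCommGroup M]
    [Module R M] [Fintype ι] (b : Module.Basis ι R M) {D : M →ₗ[R] M} {μ : ι → R}
    (hD : ∀ i, D (b i) = μ i • b i) : LinearMap.trace R M D = ∑ i, μ i := by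
  classical
  simp [LinearMap.trace_eq_matrix_trace R b, Matrix.trace, LinearMap.toMatrix_apply, hD]

theorem exists_isSymmetric_apply_basis_eq_smul {𝕜 V ι : Type*} [RCLike 𝕜] [NormedAddCommGroup V]
    [InnerProductSpace 𝕜 V] [Fintype ι] (b : OrthonormalBasis ι 𝕜 V) (μ : ι → ℝ) :
    ∃ D : V →ₗ[𝕜] V, D.IsSymmetric ∧ ∀ i, D (b i) = (μ i : 𝕜) • b i := by
  classical
  refine ⟨Matrix.toLin b.toBasis b.toBasis (Matrix.diagonal fun i => (μ i : 𝕜)), ?_, fun i => ?_⟩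
  · rw [Matrix.isSymmetric_toLin_iff]
    exact Matrix.isHermitian_diagonal_of_self_adjoint _ (by ext; simp)
  · simpa using! (Module.End.mem_eigenspace_iff.mp
      (hasEigenvector_toLin_diagonal (fun i => (μ i : 𝕜)) i b.toBasis).1)

theorem exists_orthonormalBasis_coe_eq {m : ℕ} {u : Fin m → E m} (hu : Orthonormal ℝ u) :
    ∃ b : OrthonormalBasis (Fin m) ℝ (E m), ⇑b = u :=
  ⟨.mk hu (hu.linearIndependent.span_eq_top_of_card_eq_finrank' (by simp)).ge, by simp⟩

theorem trace_eq_sum_of_orthonormal {m : ℕ} {u : Fin m → E m} (hu : Orthonormal ℝ u)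
    {D : E m →ₗ[ℝ] E m} {μ : Fin m → ℝ} (hD : ∀ i, D (u i) = μ i • u i) :
    LinearMap.trace ℝ (E m) D = ∑ i, μ i := by
  obtain ⟨b, rfl⟩ := exists_orthonormalBasis_coe_eq hu
  exact trace_eq_sum_of_apply_basis_eq_smul b.toBasis (by simpa using hD)

theorem exists_isSymmetric_of_orthonormal {m : ℕ} {u : Fin m → E m} (hu : Orthonormal ℝ u)
    (μ : Fin m → ℝ) : ∃ D : E m →ₗ[ℝ] E m, D.IsSymmetric ∧ ∀ i, D (u i) = μ i • u i := by
  obtain ⟨b, rfl⟩ := exists_orthonormalBasis_coe_eq hu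
  exact exists_isSymmetric_apply_basis_eq_smul b μ

theorem abs_detb_of_orthonormal {m : ℕ} {u : Fin m → E m} (hu : Orthonormal ℝ u) :
    |detb u| = 1 := by
  obtain ⟨b, rfl⟩ := exists_orthonormalBasis_coe_eq hu
  exact (abs_eq zero_le_one).2
    ((EuclideanSpace.basisFun (Fin m) ℝ).det_to_matrix_orthonormalBasis_real b)

theorem detb_smul {m : ℕ} (a : Fin m → ℝ) (u : Fin m → E m) :
    detb (fun i => a i • u i) = (∏ i, a i) * detb u :=
  Matrix.det_mul_row a (Matrix.of fun i j => u j i)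

theorem abs_detb_exp_smul {m : ℕ} {u : Fin m → E m} (hu : Orthonormal ℝ u) (μ : Fin m → ℝ)
    (τ : ℝ) : |detb (fun i => Real.exp (τ * μ i) • u i)| = Real.exp (τ * ∑ i, μ i) := by
  rw [detb_smul, abs_mul, abs_detb_of_orthonormal hu, mul_one, ← Real.exp_sum, ← Finset.mul_sum,
    Real.abs_exp]

/-! ### Terms of the generating quantity -/

section Counting

variable {ι α : Type*} [Fintype ι] [DecidableEq α]

/-- The multiindex counted by a sequence: `countVector I ℓ` is the number of occurrences of `ℓ`
in `I`. -/
def countVector (I : ι → α) (ℓ : α) : ℕ :=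
  (Finset.univ.filter fun j => I j = ℓ).card

theorem dotProduct_countVector {R : Type*} [NonAssocSemiring R] [Fintype α] (μ : α → R)
    (I : ι → α) : μ ⬝ᵥ (fun ℓ => (countVector I ℓ : R)) = ∑ j, μ (I j) := by
  rw [← Finset.sum_fiberwise Finset.univ I, dotProduct]
  refine Finset.sum_congr rfl fun ℓ _ => ?_
  rw [Finset.sum_congr rfl fun j hj => congrArg μ (Finset.mem_filter.mp hj).2, Finset.sum_const,
    nsmul_eq_mul', countVector]

theorem sum_countVector [Fintype α] (I : ι → α) : ∑ ℓ, countVector I ℓ = Fintype.card ι := by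
  simpa [dotProduct] using dotProduct_countVector (1 : α → ℕ) I

end Counting

section Terms

variable {d₁ k d : ℕ}

/-- Triples of sequences of a common length `s ≤ min d k`. They index the terms of `𝒬_Q ^ 2`; the
triple of empty sequences accounts for the constant term `1`, as it does for the point `(0, 0, 0)`
of `N₀`. -/
abbrev SeqTriple (d₁ k d : ℕ) : Type :=
  Σ s : Fin (min d k + 1), (Fin s → Fin d₁) × (Fin s → Fin k) × (Fin s → Fin d)

/-- The triple of multiindices counted by a triple of sequences. -/
def tripleCount (J : SeqTriple d₁ k d) : (Fin d₁ → ℕ) × (Fin k → ℕ) × (Fin d → ℕ) :=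
  (countVector J.2.1, countVector J.2.2.1, countVector J.2.2.2)

/-- The iterated derivative of `Q_s` along the given triple of sequences of basis vectors, evaluated
at `0`. -/
def coeff (c : Fin d₁ → Fin k → Fin d → ℝ) (u : Fin d₁ → E d₁) (v : Fin k → E k) (w : Fin d → E d)
    (J : SeqTriple d₁ k d) : ℝ :=
  iterDir J.1 (fun j => u (J.2.1 j))
    (fun t => Qdet c J.1 t (fun j => v (J.2.2.1 j)) (fun j => w (J.2.2.2 j))) 0

/-- The triple of empty sequences. -/
def emptyTriple : SeqTriple d₁ k d :=
  ⟨0, Fin.elim0, Fin.elim0, Fin.elim0⟩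

theorem toPoint_tripleCount_emptyTriple :
    toPoint (tripleCount (emptyTriple : SeqTriple d₁ k d)) = 0 := by
  ext <;> simp [toPoint, tripleCount, emptyTriple, countVector]

theorem isBalanced_toPoint_tripleCount (J : SeqTriple d₁ k d) :
    IsBalanced (toPoint (tripleCount J)) := by
  simp [IsBalanced, toPoint, tripleCount, ← Nat.cast_sum, sum_countVector]

theorem pairing_toPoint_tripleCount (μ : Fin d₁ → ℝ) (ν : Fin k → ℝ) (ρ : Fin d → ℝ)
    (J : SeqTriple d₁ k d) :
    pairing μ ν ρ (toPoint (tripleCount J)) =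
      ∑ j, μ (J.2.1 j) + (∑ j, ν (J.2.2.1 j) + ∑ j, ρ (J.2.2.2 j)) := by
  simp only [pairing_apply, toPoint, tripleCount, dotProduct_countVector]

variable (c : Fin d₁ → Fin k → Fin d → ℝ) (u : Fin d₁ → E d₁) (v : Fin k → E k) (w : Fin d → E d)

theorem coeff_emptyTriple : coeff c u v w emptyTriple = 1 :=
  Matrix.det_fin_zero

theorem setOf_InN0_eq_image :
    {p | InN0 c u v w p} = tripleCount '' {J | coeff c u v w J ≠ 0} := by
  ext p
  constructor
  · rintro (⟨hα, hβ, hγ⟩ | ⟨s, -, hs, I, I', I'', hI, hI', hI'', hne⟩)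
    · exact ⟨emptyTriple, ne_of_eq_of_ne (coeff_emptyTriple c u v w) one_ne_zero,
        Prod.ext hα.symm (Prod.ext hβ.symm hγ.symm)⟩
    · exact ⟨⟨⟨s, Nat.lt_succ_of_le hs⟩, I, I', I''⟩, hne,
        Prod.ext (funext hI) (Prod.ext (funext hI') (funext hI''))⟩
  · rintro ⟨⟨⟨s, hs⟩, I, I', I''⟩, hne, rfl⟩
    rcases s.eq_zero_or_pos with rfl | hpos
    · exact Or.inl ⟨rfl, rfl, rfl⟩
    · exact Or.inr ⟨s, hpos, Nat.le_of_lt_succ hs, I, I', I'', fun _ => rfl, fun _ => rfl,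
        fun _ => rfl, hne⟩

theorem calQ_eq_norm : calQ c u v w = ‖WithLp.toLp 2 (coeff c u v w)‖ := by
  let term (s : ℕ) : ℝ := ∑ I : Fin s → Fin d₁, ∑ I' : Fin s → Fin k, ∑ I'' : Fin s → Fin d,
    (iterDir s (fun j => u (I j))
      (fun t => Qdet c s t (fun j => v (I' j)) (fun j => w (I'' j))) 0) ^ 2
  have term_zero : term 0 = 1 := by
    simp [term, iterDir, Qdet]
  have sum_coeff_sq : ∑ J, coeff c u v w J ^ 2 = ∑ s : Fin (min d k + 1), term s := by
    simp only [Fintype.sum_sigma, Fintype.sum_prod_type, coeff, term]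
  rw [EuclideanSpace.norm_eq]
  simp only [Real.norm_eq_abs, sq_abs]
  rw [sum_coeff_sq, Fin.sum_univ_eq_sum_range, Finset.range_eq_Ico,
    Finset.sum_eq_sum_Ico_succ_bot (Nat.succ_pos _), term_zero, zero_add, Nat.succ_eq_add_one,
    Finset.Ico_add_one_right_eq_Icc, calQ]

theorem iterDir_const_smul {m : ℕ} (s : ℕ) (x : Fin s → E m) (C : ℝ) (g : E m → ℝ) :
    iterDir s x (C • g) = C • iterDir s x g := by
  induction s with
  | zero => rfl
  | succ s ih =>
    funext t
    simp only [iterDir, ih, fderiv_const_smul_field, Pi.smul_apply, smul_apply]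

theorem iterDir_smul {m : ℕ} (s : ℕ) (a : Fin s → ℝ) (x : Fin s → E m) (g : E m → ℝ) :
    iterDir s (fun j => a j • x j) g = (∏ j, a j) • iterDir s x g := by
  induction s with
  | zero => simp [iterDir]
  | succ s ih =>
    funext t
    simp only [iterDir, ih, fderiv_const_smul_field, Pi.smul_apply, smul_apply,
      map_smul, smul_smul, Fin.prod_univ_succ]

theorem triEval_smul_smul (t : E d₁) (v : E k) (w : E d) (b e : ℝ) :
    triEval c t (b • v) (e • w) = b * (e * triEval c t v w) := by
  simp only [triEval, Finset.mul_sum, PiLp.smul_apply, smul_eq_mul]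
  congr! 3
  ring

theorem Qdet_smul_smul (s : ℕ) (t : E d₁) (b e : Fin s → ℝ) (v : Fin s → E k) (w : Fin s → E d) :
    Qdet c s t (fun j => b j • v j) (fun j => e j • w j) =
      (∏ j, b j) * ((∏ j, e j) * Qdet c s t v w) := by
  simp only [Qdet, triEval_smul_smul]
  rw [← Matrix.det_mul_row, ← Matrix.det_mul_column]
  simp only [Matrix.of_apply]

theorem coeff_smul (a : Fin d₁ → ℝ) (b : Fin k → ℝ) (e : Fin d → ℝ) (J : SeqTriple d₁ k d) :
    coeff c (fun i => a i • u i) (fun i => b i • v i) (fun i => e i • w i) J =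
      (∏ j, a (J.2.1 j)) * ((∏ j, b (J.2.2.1 j)) * (∏ j, e (J.2.2.2 j))) * coeff c u v w J := by
  simp only [coeff, Qdet_smul_smul, ← smul_eq_mul, ← Pi.smul_def, iterDir_smul, iterDir_const_smul,
    Pi.smul_apply]
  simp only [smul_eq_mul]
  ring

theorem coeff_exp_smul (μ : Fin d₁ → ℝ) (ν : Fin k → ℝ) (ρ : Fin d → ℝ) (τ : ℝ)
    (J : SeqTriple d₁ k d) :
    coeff c (fun i => Real.exp (τ * μ i) • u i) (fun i => Real.exp (τ * ν i) • v i)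
      (fun i => Real.exp (τ * ρ i) • w i) J =
      Real.exp (τ * pairing μ ν ρ (toPoint (tripleCount J))) * coeff c u v w J := by
  simp only [coeff_smul, pairing_toPoint_tripleCount, mul_add, Finset.mul_sum, Real.exp_add,
    Real.exp_sum]

variable {u v w} in
theorem tendsto_calQ_div_iff (hu : Orthonormal ℝ u) (hv : Orthonormal ℝ v) (hw : Orthonormal ℝ w)
    (μ : Fin d₁ → ℝ) (ν : Fin k → ℝ) (ρ : Fin d → ℝ) (a b e : ℝ) :
    Filter.Tendsto (fun τ : ℝ =>
        calQ c (fun i => Real.exp (τ * μ i) • u i) (fun i => Real.exp (τ * ν i) • v i)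
          (fun i => Real.exp (τ * ρ i) • w i) /
        (|detb (fun i => Real.exp (τ * μ i) • u i)| ^ a *
          |detb (fun i => Real.exp (τ * ν i) • v i)| ^ b *
          |detb (fun i => Real.exp (τ * ρ i) • w i)| ^ e)) Filter.atTop (nhds 0) ↔
      ∀ J, coeff c u v w J ≠ 0 → pairing μ ν ρ (toPoint (tripleCount J)) <
        pairing μ ν ρ (fun _ => a, fun _ => b, fun _ => e) := by
  rw [← tendsto_norm_exp_mul_div_exp_iff]
  refine iff_of_eq (congrArg (Filter.Tendsto · _ _) (funext fun τ => ?_))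
  rw [calQ_eq_norm, funext (coeff_exp_smul c u v w μ ν ρ τ), abs_detb_exp_smul hu,
    abs_detb_exp_smul hv, abs_detb_exp_smul hw, pairing_const]
  simp only [← Real.exp_mul, ← Real.exp_add, mul_add, mul_assoc, add_assoc]

theorem notMem_NR_iff (x : (Fin d₁ → ℝ) × (Fin k → ℝ) × (Fin d → ℝ)) :
    x ∉ NR c ↔ ∃ u v w, Orthonormal ℝ u ∧ Orthonormal ℝ v ∧ Orthonormal ℝ w ∧
      ∃ μ ν ρ, ∀ J, coeff c u v w J ≠ 0 →
        pairing μ ν ρ (toPoint (tripleCount J)) < pairing μ ν ρ x := by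
  have separation (u v w) := notMem_convexHull_iff_exists_pairing_lt
    (((Set.toFinite {J | coeff c u v w J ≠ 0}).image tripleCount).image toPoint) x
  simp only [NR, Set.mem_ofPred_eq, not_forall, setOf_InN0_eq_image, separation,
    Set.forall_mem_image, exists_prop]

theorem const_notMem_NR_iff (hd₁ : 0 < d₁) (hk : 0 < k) (hd : 0 < d) {s : ℝ} (hs : 0 ≤ s) :
    ((fun _ => s / (d₁ : ℝ)), (fun _ => s / (k : ℝ)), fun _ => s / (d : ℝ)) ∉ NR c ↔
      ∃ u v w, Orthonormal ℝ u ∧ Orthonormal ℝ v ∧ Orthonormal ℝ w ∧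
        ∃ μ ν ρ, 0 < ∑ i, μ i ∧ ∑ i, ν i = 0 ∧ ∑ i, ρ i = 0 ∧
          ∀ J, coeff c u v w J ≠ 0 → pairing μ ν ρ (toPoint (tripleCount J)) <
            pairing μ ν ρ (fun _ => s / d₁, fun _ => s / k, fun _ => s / d) := by
  have : Nonempty (Fin d₁) := ⟨0, hd₁⟩
  have : Nonempty (Fin k) := ⟨0, hk⟩
  have : Nonempty (Fin d) := ⟨0, hd⟩
  have const_balanced : IsBalanced
      ((fun _ => s / d₁, fun _ => s / k, fun _ => s / d) :
        (Fin d₁ → ℝ) × (Fin k → ℝ) × (Fin d → ℝ)) := by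
    simpa only [Fintype.card_fin] using
      isBalanced_const (α := Fin d₁) (β := Fin k) (γ := Fin d) s
  rw [notMem_NR_iff]
  refine exists₃_congr fun u v w => and_congr_right' (and_congr_right' (and_congr_right' ?_))
  constructor
  · rintro ⟨μ₀, ν₀, ρ₀, hlt₀⟩
    obtain ⟨μ, ν, ρ, hν, hρ, pairing_eq⟩ := exists_sum_eq_zero_pairing_eq μ₀ ν₀ ρ₀
    have hlt (J) (hJ : coeff c u v w J ≠ 0) : pairing μ ν ρ (toPoint (tripleCount J)) <
        pairing μ ν ρ (fun _ => s / d₁, fun _ => s / k, fun _ => s / d) := by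
      rw [pairing_eq _ (isBalanced_toPoint_tripleCount J), pairing_eq _ const_balanced]
      exact hlt₀ J hJ
    refine ⟨μ, ν, ρ, ?_, hν, hρ, hlt⟩
    -- The constant term of `𝒬_Q ^ 2` contributes the origin to the support.
    have pairing_pos := hlt emptyTriple (ne_of_eq_of_ne (coeff_emptyTriple c u v w) one_ne_zero)
    rw [toPoint_tripleCount_emptyTriple, map_zero, pairing_const, hν, hρ, zero_mul, zero_mul,
      add_zero, add_zero] at pairing_pos
    exact pos_of_mul_pos_left pairing_pos (by positivity)
  · rintro ⟨μ, ν, ρ, -, -, -, hlt⟩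
    exact ⟨μ, ν, ρ, hlt⟩

end Terms

theorem statement4
    (d₁ k d : ℕ) (hd₁ : 0 < d₁) (hk : 0 < k) (hd : 0 < d)
    (c : Fin d₁ → Fin k → Fin d → ℝ) (s : ℝ) (hs : 0 ≤ s) :
    (((fun _ => s / (d₁ : ℝ)), (fun _ => s / (k : ℝ)), fun _ => s / (d : ℝ)) ∉ NR c) ↔
    ∃ (u : Fin d₁ → E d₁) (v : Fin k → E k) (w : Fin d → E d),
      Orthonormal ℝ u ∧ Orthonormal ℝ v ∧ Orthonormal ℝ w ∧
      ∃ (D₁ : E d₁ →ₗ[ℝ] E d₁) (D₂ : E k →ₗ[ℝ] E k) (D₃ : E d →ₗ[ℝ] E d)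
        (μ : Fin d₁ → ℝ) (ν : Fin k → ℝ) (ρ : Fin d → ℝ),
        D₁.IsSymmetric ∧ D₂.IsSymmetric ∧ D₃.IsSymmetric ∧
        (∀ i, D₁ (u i) = μ i • u i) ∧ (∀ i, D₂ (v i) = ν i • v i) ∧
        (∀ i, D₃ (w i) = ρ i • w i) ∧
        0 < LinearMap.trace ℝ (E d₁) D₁ ∧
        LinearMap.trace ℝ (E k) D₂ = 0 ∧ LinearMap.trace ℝ (E d) D₃ = 0 ∧
        (∀ τ : ℝ, |detb (fun i => Real.exp (τ * ν i) • v i)| = 1) ∧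
        (∀ τ : ℝ, |detb (fun i => Real.exp (τ * ρ i) • w i)| = 1) ∧
        Filter.Tendsto (fun τ : ℝ => |detb (fun i => Real.exp (τ * μ i) • u i)|)
          Filter.atTop Filter.atTop ∧
        Filter.Tendsto (fun τ : ℝ =>
            calQ c (fun i => Real.exp (τ * μ i) • u i)
                (fun i => Real.exp (τ * ν i) • v i)
                (fun i => Real.exp (τ * ρ i) • w i) /
              (|detb (fun i => Real.exp (τ * μ i) • u i)| ^ (s / (d₁ : ℝ)) *
               |detb (fun i => Real.exp (τ * ν i) • v i)| ^ (s / (k : ℝ)) *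
               |detb (fun i => Real.exp (τ * ρ i) • w i)| ^ (s / (d : ℝ))))
          Filter.atTop (nhds 0) := by
  rw [const_notMem_NR_iff c hd₁ hk hd hs]
  constructor
  · rintro ⟨u, v, w, hu, hv, hw, μ, ν, ρ, hμ, hν, hρ, hlt⟩
    obtain ⟨D₁, hD₁, hDu⟩ := exists_isSymmetric_of_orthonormal hu μ
    obtain ⟨D₂, hD₂, hDv⟩ := exists_isSymmetric_of_orthonormal hv ν
    obtain ⟨D₃, hD₃, hDw⟩ := exists_isSymmetric_of_orthonormal hw ρ
    have detb_u_atTop : Filter.Tendsto (fun τ : ℝ => |detb fun i => Real.exp (τ * μ i) • u i|)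
        Filter.atTop Filter.atTop := by
      simp only [abs_detb_exp_smul hu]
      exact Real.tendsto_exp_atTop.comp (Filter.tendsto_id.atTop_mul_const hμ)
    exact ⟨u, v, w, hu, hv, hw, D₁, D₂, D₃, μ, ν, ρ, hD₁, hD₂, hD₃, hDu, hDv, hDw,
      (trace_eq_sum_of_orthonormal hu hDu).symm ▸ hμ,
      (trace_eq_sum_of_orthonormal hv hDv).trans hν, (trace_eq_sum_of_orthonormal hw hDw).trans hρ,
      fun τ => by simp [abs_detb_exp_smul hv, hν], fun τ => by simp [abs_detb_exp_smul hw, hρ],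
      detb_u_atTop, (tendsto_calQ_div_iff c hu hv hw μ ν ρ _ _ _).2 hlt⟩
  · rintro ⟨u, v, w, hu, hv, hw, D₁, D₂, D₃, μ, ν, ρ, -, -, -, hDu, hDv, hDw, htr₁, htr₂, htr₃,
      -, -, -, decay⟩
    exact ⟨u, v, w, hu, hv, hw, μ, ν, ρ, trace_eq_sum_of_orthonormal hu hDu ▸ htr₁,
      trace_eq_sum_of_orthonormal hv hDv ▸ htr₂, trace_eq_sum_of_orthonormal hw hDw ▸ htr₃,
      (tendsto_calQ_div_iff c hu hv hw μ ν ρ _ _ _).1 decay⟩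

end Statement4
end
end

section
/- Let H be a real Hilbert space and let V₁ ⊇ V₂ ⊇ ⋯ ⊇ V_ℓ be a decreasing sequence of nontrivial finite-dimensional subspaces of H, and let v₁,…,v_m be a basis of V₁. Then there exists a basis u₁,…,u_m of V₁ such that: for every j ∈ {1,…,ℓ}, the span of u_{m−dim V_j+1},…,u_m equals V_j; and Σ_{i=1}^m ⟨x, v_i⟩⟨v_i, y⟩ = Σ_{i=1}^m ⟨x, u_i⟩⟨u_i, y⟩ for all x, y ∈ H. -/
noncomputable section

open scoped BigOperators RealInnerProductSpace

/-!
Let `T` map the standard orthonormal basis of `𝕜^m` to `v`. The form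
`(x, y) ↦ ∑ i, ⟪x, v i⟫ * ⟪v i, y⟫` is `⟪T† x, T† y⟫`, so it does not change when the standard basis
is replaced by any other orthonormal basis `b` and `v` by `T ∘ b`. It remains to choose `b` adapted
to the chain of preimages `T⁻¹ W`: a unit vector orthogonal to the largest proper member of the
chain comes first, and its orthogonal complement is treated recursively.
-/

section

open Module Submodule
open scoped InnerProductSpace

theorem exists_ne_top_forall_le_of_isChain {α : Type*} [PartialOrder α] [BoundedOrder α]
    [Nontrivial α] [WellFoundedGT α] {C : Set α} (hC : IsChain (· ≤ ·) C) :
    ∃ a ≠ ⊤, ∀ c ∈ C, c ≠ ⊤ → c ≤ a := by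
  rcases (C \ {⊤}).eq_empty_or_nonempty with hempty | hne
  · exact ⟨⊥, bot_ne_top, fun c hc hc' => (hempty.subset ⟨hc, hc'⟩).elim⟩
  · obtain ⟨a, ha⟩ := exists_maximal_of_wellFoundedGT (· ∈ C \ {⊤}) hne
    exact ⟨a, ha.prop.2, fun c hc hc' =>
      (hC.total hc ha.prop.1).elim id fun hac => ha.le_of_ge ⟨hc, hc'⟩ hac⟩

theorem span_image_tail_eq {K E : Type*} [DivisionRing K] [AddCommGroup E] [Module K E] {m : ℕ}
    {u : Fin m → E} (hu : LinearIndependent K u) {W : Submodule K E} [FiniteDimensional K W]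
    (hWm : finrank K W ≤ m) (hW : ∀ i : Fin m, m - finrank K W ≤ i → u i ∈ W) :
    span K (u '' {i : Fin m | m - finrank K W ≤ i}) = W := by
  have hle : span K (u '' {i : Fin m | m - finrank K W ≤ i}) ≤ W :=
    span_le.2 (Set.image_subset_iff.2 hW)
  refine eq_of_le_of_finrank_eq hle ?_
  rw [← Fin.range_natAdd_castLEEmb hWm, ← Set.range_comp,
    finrank_span_eq_card (hu.comp _ (Fin.natAdd_castLEEmb hWm).injective), Fintype.card_fin]

variable {𝕜 : Type*} [RCLike 𝕜] {E : Type*} [NormedAddCommGroup E] [InnerProductSpace 𝕜 E]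

theorem exists_norm_eq_one_forall_le_orthogonal_of_isChain [FiniteDimensional 𝕜 E] [Nontrivial E]
    {C : Set (Submodule 𝕜 E)} (hC : IsChain (· ≤ ·) C) :
    ∃ e : E, ‖e‖ = 1 ∧ ∀ W ∈ C, W ≠ ⊤ → W ≤ (𝕜 ∙ e)ᗮ := by
  obtain ⟨M, hM, hCM⟩ := exists_ne_top_forall_le_of_isChain hC
  obtain ⟨x, hxM, hx⟩ := exists_mem_ne_zero_of_ne_bot (mt orthogonal_eq_bot_iff.1 hM)
  refine ⟨(‖x‖⁻¹ : 𝕜) • x, norm_smul_inv_norm hx, fun W hW hW' => (hCM W hW hW').trans ?_⟩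
  rw [le_orthogonal_iff_le_orthogonal, span_singleton_le_iff_mem]
  exact smul_mem _ _ hxM

theorem exists_orthonormal_forall_tail_mem [FiniteDimensional 𝕜 E] {m : ℕ} (hm : finrank 𝕜 E = m)
    {C : Set (Submodule 𝕜 E)} (hC : IsChain (· ≤ ·) C) :
    ∃ b : Fin m → E, Orthonormal 𝕜 b ∧
      ∀ W ∈ C, ∀ i : Fin m, m - finrank 𝕜 W ≤ i → b i ∈ W := by
  induction m generalizing E with
  | zero => exact ⟨Fin.elim0, ⟨fun i => i.elim0, fun i => i.elim0⟩, fun _ _ i => i.elim0⟩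
  | succ m ih =>
    have : Nontrivial E := nontrivial_of_finrank_eq_succ hm
    obtain ⟨e, he, hCe⟩ := exists_norm_eq_one_forall_le_orthogonal_of_isChain hC
    let M : Submodule 𝕜 E := (𝕜 ∙ e)ᗮ
    have hM : finrank 𝕜 M = m :=
      have : Fact (finrank 𝕜 E = m + 1) := ⟨hm⟩
      finrank_orthogonal_span_singleton (norm_ne_zero_iff.1 (he ▸ one_ne_zero))
    obtain ⟨b, hb, hbC⟩ := ih hM ((gc_map_comap M.subtype).monotone_u.isChain_image hC)
    refine ⟨Matrix.vecCons e fun i => (b i : E), orthonormal_vecCons_iff.2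
      ⟨he, fun i => mem_orthogonal_singleton_iff_inner_right.1 (b i).2,
        hb.comp_linearIsometry M.subtypeₗᵢ⟩, fun W hW i hi => ?_⟩
    rcases eq_or_ne W ⊤ with rfl | hWtop
    · exact mem_top
    have hfinrank : finrank 𝕜 (W.comap M.subtype) = finrank 𝕜 W :=
      (comapSubtypeEquivOfLe (hCe W hW hWtop)).finrank_eq
    have hlt : finrank 𝕜 W < m + 1 := hm ▸ finrank_lt hWtop
    cases i using Fin.cases with
    | zero =>
      rw [Fin.val_zero] at hi
      omega
    | succ i =>
      refine hbC _ ⟨W, hW, rfl⟩ i ?_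
      rw [Fin.val_succ] at hi
      omega

theorem exists_orthonormalBasis_forall_span_tail_eq [FiniteDimensional 𝕜 E] {m : ℕ}
    (hm : finrank 𝕜 E = m) {C : Set (Submodule 𝕜 E)} (hC : IsChain (· ≤ ·) C) :
    ∃ b : OrthonormalBasis (Fin m) 𝕜 E,
      ∀ W ∈ C, span 𝕜 (b '' {i : Fin m | m - finrank 𝕜 W ≤ i}) = W := by
  obtain ⟨f, hf, hfC⟩ := exists_orthonormal_forall_tail_mem hm hC
  let b : OrthonormalBasis (Fin m) 𝕜 E :=
    .mk hf (hf.linearIndependent.span_eq_top_of_card_eq_finrank' (by simp [hm])).ge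
  have hbf : ⇑b = f := OrthonormalBasis.coe_mk _ _
  refine ⟨b, fun W hW => ?_⟩
  rw [hbf]
  exact span_image_tail_eq hf.linearIndependent (hm ▸ finrank_le W) (hfC W hW)

variable {H : Type*} [NormedAddCommGroup H] [InnerProductSpace 𝕜 H]

-- The vector `a` is `T† x`; `ContinuousLinearMap.adjoint` would need `H` to be complete.
theorem exists_forall_inner_eq_inner_map [CompleteSpace E] (T : E →L[𝕜] H) (x : H) :
    ∃ a : E, ∀ c, ⟪a, c⟫_𝕜 = ⟪x, T c⟫_𝕜 :=
  ⟨(InnerProductSpace.toDual 𝕜 E).symm (innerSL 𝕜 x ∘L T), fun _ =>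
    InnerProductSpace.toDual_symm_apply⟩

theorem sum_inner_map_mul_inner_map_eq {ι ι' : Type*} [Fintype ι] [Fintype ι']
    (b : OrthonormalBasis ι 𝕜 E) (b' : OrthonormalBasis ι' 𝕜 E) (T : E →ₗ[𝕜] H) (x y : H) :
    ∑ i, ⟪x, T (b i)⟫_𝕜 * ⟪T (b i), y⟫_𝕜 = ∑ i, ⟪x, T (b' i)⟫_𝕜 * ⟪T (b' i), y⟫_𝕜 := by
  have : FiniteDimensional 𝕜 E := b.toBasis.finiteDimensional_of_finite
  have : CompleteSpace E := FiniteDimensional.complete 𝕜 E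
  obtain ⟨p, hp⟩ := exists_forall_inner_eq_inner_map T.toContinuousLinearMap x
  obtain ⟨q, hq⟩ := exists_forall_inner_eq_inner_map T.toContinuousLinearMap y
  rw [LinearMap.coe_toContinuousLinearMap'] at hp hq
  have hq' (c : E) : ⟪c, q⟫_𝕜 = ⟪T c, y⟫_𝕜 := by
    rw [← inner_conj_symm, hq, inner_conj_symm]
  simp only [← hp, ← hq', OrthonormalBasis.sum_inner_mul_inner]

theorem exists_orthonormalBasis_forall_span_tail_map_eq [FiniteDimensional 𝕜 E] {m : ℕ}
    (hm : finrank 𝕜 E = m) {T : E →ₗ[𝕜] H} (hT : Function.Injective T)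
    {C : Set (Submodule 𝕜 H)} (hC : IsChain (· ≤ ·) C) (hCT : ∀ W ∈ C, W ≤ T.range) :
    ∃ b : OrthonormalBasis (Fin m) 𝕜 E,
      ∀ W ∈ C, span 𝕜 ((T ∘ b) '' {i : Fin m | m - finrank 𝕜 W ≤ i}) = W := by
  obtain ⟨b, hb⟩ := exists_orthonormalBasis_forall_span_tail_eq hm
    ((gc_map_comap T).monotone_u.isChain_image hC)
  refine ⟨b, fun W hW => ?_⟩
  have hmap : (W.comap T).map T = W := map_comap_eq_of_le (hCT W hW)
  have hfinrank : finrank 𝕜 (W.comap T) = finrank 𝕜 W := by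
    rw [((W.comap T).equivMapOfInjective T hT).finrank_eq, hmap]
  rw [Set.image_comp, span_image, ← hfinrank, hb _ ⟨W, hW, rfl⟩, hmap]

theorem statement5_general {m : ℕ} {v : Fin m → H} (hv : LinearIndependent 𝕜 v)
    {C : Set (Submodule 𝕜 H)} (hC : IsChain (· ≤ ·) C)
    (hCv : ∀ W ∈ C, W ≤ span 𝕜 (Set.range v)) :
    ∃ u : Fin m → H, LinearIndependent 𝕜 u ∧ span 𝕜 (Set.range u) = span 𝕜 (Set.range v) ∧
      (∀ W ∈ C, span 𝕜 (u '' {i : Fin m | m - finrank 𝕜 W ≤ i}) = W) ∧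
      ∀ x y : H, ∑ i, ⟪x, v i⟫_𝕜 * ⟪v i, y⟫_𝕜 = ∑ i, ⟪x, u i⟫_𝕜 * ⟪u i, y⟫_𝕜 := by
  let e := EuclideanSpace.basisFun (Fin m) 𝕜
  let T : EuclideanSpace 𝕜 (Fin m) →ₗ[𝕜] H := e.toBasis.constr 𝕜 v
  have hTe (i : Fin m) : T (e i) = v i := by
    rw [← e.coe_toBasis]
    exact e.toBasis.constr_basis 𝕜 v i
  have hT : Function.Injective T := e.toBasis.injective_constr_of_linearIndependent hv
  have hrange : T.range = span 𝕜 (Set.range v) := e.toBasis.constr_range 𝕜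
  obtain ⟨b, hb⟩ := exists_orthonormalBasis_forall_span_tail_map_eq finrank_euclideanSpace_fin hT
    hC (hrange ▸ hCv)
  refine ⟨T ∘ b, b.toBasis.linearIndependent.map' T (LinearMap.ker_eq_bot.2 hT), ?_, hb,
    fun x y => ?_⟩
  · rw [Set.range_comp, span_image, ← b.coe_toBasis, b.toBasis.span_eq, Submodule.map_top, hrange]
  · simpa only [hTe, Function.comp_apply] using sum_inner_map_mul_inner_map_eq e b T x y

end

theorem statement5
    {H : Type*} [NormedAddCommGroup H] [InnerProductSpace ℝ H]
    (ℓ m : ℕ) (hℓ : 0 < ℓ)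
    (V : Fin ℓ → Submodule ℝ H)
    (hdec : ∀ i j : Fin ℓ, i ≤ j → V j ≤ V i)
    (hnt : ∀ j, V j ≠ ⊥)
    (hfd : ∀ j, FiniteDimensional ℝ (V j))
    (v : Fin m → H) (hli : LinearIndependent ℝ v)
    (hsp : Submodule.span ℝ (Set.range v) = V ⟨0, hℓ⟩) :
    ∃ u : Fin m → H,
      LinearIndependent ℝ u ∧
      (∀ j : Fin ℓ,
        Submodule.span ℝ (u '' { i : Fin m | m - Module.finrank ℝ (V j) ≤ (i : ℕ) }) = V j) ∧
      ∀ x y : H, ∑ i, ⟪x, v i⟫ * ⟪v i, y⟫ = ∑ i, ⟪x, u i⟫ * ⟪u i, y⟫ := by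
  obtain ⟨u, hu, -, hspan, hsum⟩ := statement5_general hli (Antitone.isChain_range hdec)
    (Set.forall_mem_range.2 fun j => hsp ▸ hdec ⟨0, hℓ⟩ j (Nat.zero_le j))
  exact ⟨u, hu, Set.forall_mem_range.1 hspan, hsum⟩
end
end

section
/- Let H be a finite-dimensional real Hilbert space and let v₁,…,v_m and w₁,…,w_m be two linearly independent families of vectors in H. Then the following are equivalent: (1) Σ_{i=1}^m ⟨x, v_i⟩⟨v_i, y⟩ = Σ_{i=1}^m ⟨x, w_i⟩⟨w_i, y⟩ for all x, y ∈ H; (2) for every integer k ≥ 1 and every k-linear functional L : H^k → ℝ, Σ_{i₁,…,i_k=1}^m |L(v_{i₁},…,v_{i_k})|² = Σ_{i₁,…,i_k=1}^m |L(w_{i₁},…,w_{i_k})|²; (3) there exists an m×m real orthogonal matrix O such that v_i = Σ_{j=1}^m O_{ij} w_j for every i ∈ {1,…,m}. -/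
noncomputable section

open Matrix
open scoped BigOperators RealInnerProductSpace

/-!
Let `A v : E → 𝕜 ^ ι` be the map with coordinates `⟪v i, x⟫`. Condition (1) says that `A v` and
`A w` induce the same form on `E`, equivalently that `‖A v x‖ = ‖A w x‖` for all `x`. Then
`A w x ↦ A v x` is a well-defined isometry between two subspaces of `𝕜 ^ ι`, and any extension of it
to a unitary map of `𝕜 ^ ι` gives, after conjugating its entries, the matrix of (3). A `k`-linear
functional turns the substitution `v i = ∑ j, U i j • w j` into the action of the unitary matrix
`U ⊗ ⋯ ⊗ U` on the array of its values, which gives (2), and (2) for `k = 1` and the functionals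
`⟪x, ·⟫` is the equality of norms.
-/

section PiKronecker

variable {κ R : Type*} [Fintype κ] {l m n : κ → Type*}

/-- The Kronecker product of a finite family of matrices, with rows and columns indexed by choice
functions: the matrix of `⨂ k, A k`. -/
def piKronecker [CommMonoid R] (A : ∀ k, Matrix (m k) (n k) R) :
    Matrix (∀ k, m k) (∀ k, n k) R :=
  of fun I J => ∏ k, A k (I k) (J k)

theorem piKronecker_apply [CommMonoid R] (A : ∀ k, Matrix (m k) (n k) R)
    (I : ∀ k, m k) (J : ∀ k, n k) : piKronecker A I J = ∏ k, A k (I k) (J k) :=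
  rfl

theorem piKronecker_one [CommSemiring R] [∀ k, DecidableEq (n k)] :
    piKronecker (fun k => (1 : Matrix (n k) (n k) R)) = 1 := by
  ext I J
  simp only [piKronecker_apply, one_apply, Finset.prod_ite_zero, Finset.prod_const_one,
    Finset.mem_univ, true_imp_iff, funext_iff]

theorem piKronecker_mul [CommSemiring R] [DecidableEq κ] [∀ k, Fintype (m k)]
    (A : ∀ k, Matrix (l k) (m k) R) (B : ∀ k, Matrix (m k) (n k) R) :
    piKronecker (fun k => A k * B k) = piKronecker A * piKronecker B := by
  ext I J
  simp only [piKronecker_apply, mul_apply, Fintype.prod_sum, Finset.prod_mul_distrib]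

theorem conjTranspose_piKronecker [CommMonoid R] [StarMul R] (A : ∀ k, Matrix (m k) (n k) R) :
    (piKronecker A)ᴴ = piKronecker fun k => (A k)ᴴ := by
  ext I J
  simp only [conjTranspose_apply, piKronecker_apply, star_prod]

theorem conjTranspose_piKronecker_mul_self [CommSemiring R] [StarRing R] [DecidableEq κ]
    [∀ k, Fintype (m k)] [∀ k, DecidableEq (n k)] {A : ∀ k, Matrix (m k) (n k) R}
    (hA : ∀ k, (A k)ᴴ * A k = 1) : (piKronecker A)ᴴ * piKronecker A = 1 := by
  simp only [conjTranspose_piKronecker, ← piKronecker_mul, hA, piKronecker_one]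

theorem multilinearMap_sum_smul [CommSemiring R] [DecidableEq κ] [∀ k, Fintype (n k)]
    {M : κ → Type*} [∀ k, AddCommMonoid (M k)] [∀ k, Module R (M k)]
    {N : Type*} [AddCommMonoid N] [Module R N] (L : MultilinearMap R M N)
    (A : ∀ k, Matrix (m k) (n k) R) (w : ∀ k, n k → M k) (I : ∀ k, m k) :
    L (fun k => ∑ j, A k (I k) j • w k j) =
      ∑ J, piKronecker A I J • L (fun k => w k (J k)) := by
  simp only [L.map_sum, L.map_smul_univ, piKronecker_apply]

end PiKronecker

section Isometry

open scoped InnerProductSpace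

variable {𝕜 : Type*} [RCLike 𝕜]

theorem sum_norm_sq_sum_smul_of_conjTranspose_mul_self {m n F : Type*} [Fintype m] [Fintype n]
    [DecidableEq n] [SeminormedAddCommGroup F] [InnerProductSpace 𝕜 F] {U : Matrix m n 𝕜}
    (hU : Uᴴ * U = 1) (c : n → F) :
    ∑ i, ‖∑ j, U i j • c j‖ ^ 2 = ∑ j, ‖c j‖ ^ 2 := by
  have column_inner (a b : n) : ∑ i, star (U i a) * U i b = (1 : Matrix n n 𝕜) a b := by
    simp only [← hU, mul_apply, conjTranspose_apply]
  apply RCLike.ofReal_injective (K := 𝕜)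
  push_cast
  calc ∑ i, (‖∑ j, U i j • c j‖ : 𝕜) ^ 2
      = ∑ i, ∑ a, ∑ b, star (U i a) * U i b * ⟪c a, c b⟫_𝕜 := by
        simp only [← inner_self_eq_norm_sq_to_K, sum_inner, inner_sum, inner_smul_left,
          inner_smul_right, starRingEnd_apply, Finset.mul_sum, mul_assoc, mul_left_comm]
        exact Finset.sum_congr rfl fun i _ => Finset.sum_comm
    _ = ∑ a, ∑ b, (∑ i, star (U i a) * U i b) * ⟪c a, c b⟫_𝕜 := by
        simp only [Finset.sum_mul]
        rw [Finset.sum_comm]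
        exact Finset.sum_congr rfl fun a _ => Finset.sum_comm
    _ = ∑ a, (‖c a‖ : 𝕜) ^ 2 := by
        simp only [column_inner, one_apply, ite_mul, one_mul, zero_mul, Finset.sum_ite_eq,
          Finset.mem_univ, if_true, inner_self_eq_norm_sq_to_K]

theorem sum_norm_sq_multilinearMap_sum_smul {κ : Type*} [Fintype κ] [DecidableEq κ]
    {m n : κ → Type*} [∀ k, Fintype (m k)] [∀ k, Fintype (n k)] [∀ k, DecidableEq (n k)]
    {M : κ → Type*} [∀ k, AddCommMonoid (M k)] [∀ k, Module 𝕜 (M k)]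
    {F : Type*} [SeminormedAddCommGroup F] [InnerProductSpace 𝕜 F] (L : MultilinearMap 𝕜 M F)
    {U : ∀ k, Matrix (m k) (n k) 𝕜} (hU : ∀ k, (U k)ᴴ * U k = 1) (w : ∀ k, n k → M k) :
    ∑ I : ∀ k, m k, ‖L (fun k => ∑ j, U k (I k) j • w k j)‖ ^ 2 =
      ∑ J : ∀ k, n k, ‖L (fun k => w k (J k))‖ ^ 2 := by
  simp only [multilinearMap_sum_smul]
  exact sum_norm_sq_sum_smul_of_conjTranspose_mul_self
    (conjTranspose_piKronecker_mul_self hU) fun J => L fun k => w k (J k)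

theorem forall_inner_map_eq_iff_forall_norm_map_eq {E V W : Type*} [AddCommGroup E] [Module 𝕜 E]
    [SeminormedAddCommGroup V] [InnerProductSpace 𝕜 V]
    [SeminormedAddCommGroup W] [InnerProductSpace 𝕜 W] (S : E →ₗ[𝕜] V) (T : E →ₗ[𝕜] W) :
    (∀ x y, ⟪S x, S y⟫_𝕜 = ⟪T x, T y⟫_𝕜) ↔ ∀ x, ‖S x‖ = ‖T x‖ := by
  refine ⟨fun h x => ?_, fun h x y => ?_⟩
  · rw [norm_eq_sqrt_re_inner (𝕜 := 𝕜), h, ← norm_eq_sqrt_re_inner]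
  · simp only [inner_eq_sum_norm_sq_div_four, ← map_add, ← map_sub, ← map_smul, h]

theorem exists_linearIsometryEquiv_apply_eq_of_norm_eq {E V : Type*} [AddCommGroup E] [Module 𝕜 E]
    [NormedAddCommGroup V] [InnerProductSpace 𝕜 V] [FiniteDimensional 𝕜 V] {S T : E →ₗ[𝕜] V}
    (h : ∀ x, ‖S x‖ = ‖T x‖) : ∃ U : V ≃ₗᵢ[𝕜] V, ∀ x, U (T x) = S x := by
  obtain ⟨g, hg⟩ := T.rangeRestrict.exists_rightInverse_of_surjective T.range_rangeRestrict
  have T_g (y : T.range) : T (g y) = y := congrArg Subtype.val (LinearMap.congr_fun hg y)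
  let isometryOnRange : T.range →ₗᵢ[𝕜] V :=
    { toLinearMap := S ∘ₗ g
      norm_map' y := by rw [LinearMap.comp_apply, h, T_g, Submodule.coe_norm] }
  have S_g (x : E) : S (g (T.rangeRestrict x)) = S x := by
    rw [← sub_eq_zero, ← map_sub, ← norm_eq_zero, h, map_sub, T_g, LinearMap.codRestrict_apply,
      sub_self, norm_zero]
  refine ⟨isometryOnRange.extend.toLinearIsometryEquiv rfl, fun x => ?_⟩
  exact (isometryOnRange.extend_apply (T.rangeRestrict x)).trans (S_g x)

end Isometry

section AnalysisMap

open scoped InnerProductSpace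

variable (𝕜 : Type*) [RCLike 𝕜] {ι E : Type*}
  [NormedAddCommGroup E] [InnerProductSpace 𝕜 E]

/-- The analysis operator `x ↦ (⟪v i, x⟫)ᵢ` of a family of vectors, as in frame theory. The vectors
stand in the first slot of the inner product so that the map is linear. -/
def analysisMap (v : ι → E) : E →ₗ[𝕜] EuclideanSpace 𝕜 ι :=
  (WithLp.linearEquiv 2 𝕜 (ι → 𝕜)).symm.toLinearMap ∘ₗ LinearMap.pi fun i => innerₛₗ 𝕜 (v i)

variable {𝕜}

theorem analysisMap_apply (v : ι → E) (x : E) (i : ι) : analysisMap 𝕜 v x i = ⟪v i, x⟫_𝕜 :=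
  rfl

theorem analysisMap_injective : Function.Injective (analysisMap 𝕜 : (ι → E) → _) := by
  intro v w h
  ext1 i
  exact ext_inner_right 𝕜 fun x => congrArg (· i) (LinearMap.congr_fun h x)

theorem analysisMap_sum_smul {ι' : Type*} [Fintype ι'] [DecidableEq ι'] (A : Matrix ι ι' 𝕜)
    (w : ι' → E) :
    analysisMap 𝕜 (fun i => ∑ j, A i j • w j) =
      toEuclideanLin (A.map star) ∘ₗ analysisMap 𝕜 w := by
  ext x i
  simp only [analysisMap_apply, sum_inner, inner_smul_left, starRingEnd_apply,
    LinearMap.comp_apply, ofLp_toLpLin, toLin'_apply, mulVec, dotProduct, map_apply]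

variable [Fintype ι]

theorem inner_analysisMap (v : ι → E) (x y : E) :
    ⟪analysisMap 𝕜 v x, analysisMap 𝕜 v y⟫_𝕜 = ∑ i, ⟪x, v i⟫_𝕜 * ⟪v i, y⟫_𝕜 := by
  simp only [PiLp.inner_apply, analysisMap_apply, RCLike.inner_apply, inner_conj_symm, mul_comm]

theorem norm_sq_analysisMap (v : ι → E) (x : E) :
    ‖analysisMap 𝕜 v x‖ ^ 2 = ∑ i, ‖⟪x, v i⟫_𝕜‖ ^ 2 := by
  simp only [EuclideanSpace.norm_sq_eq, analysisMap_apply, norm_inner_symm]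

theorem exists_unitary_of_norm_analysisMap_eq [DecidableEq ι] {v w : ι → E}
    (h : ∀ x, ‖analysisMap 𝕜 v x‖ = ‖analysisMap 𝕜 w x‖) :
    ∃ U ∈ unitaryGroup ι 𝕜, ∀ i, v i = ∑ j, U i j • w j := by
  obtain ⟨V, hV⟩ := exists_linearIsometryEquiv_apply_eq_of_norm_eq h
  let b := EuclideanSpace.basisFun ι 𝕜
  let A : Matrix ι ι 𝕜 := V.toMatrix b.toBasis b.toBasis
  have hA : A ∈ unitaryGroup ι 𝕜 := V.toMatrix_mem_unitaryGroup b b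
  have toEuclideanLin_A : toEuclideanLin A = V.toLinearMap := by
    rw [toEuclideanLin_eq_toLin_orthonormal]
    exact toLin_toMatrix b.toBasis b.toBasis V.toLinearMap
  refine ⟨A.map star, map_star_mem_unitaryGroup_iff.mpr hA,
    congrFun (analysisMap_injective (𝕜 := 𝕜) (LinearMap.ext fun x => ?_))⟩
  have star_star_A : (A.map star).map star = A := ext fun i j => star_star (A i j)
  rw [analysisMap_sum_smul, star_star_A, toEuclideanLin_A]
  exact (hV x).symm

theorem norm_analysisMap_eq_of_sum_norm_sq_eq {v w : ι → E}
    (h : ∀ L : MultilinearMap 𝕜 (fun _ : Fin 1 => E) 𝕜,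
      ∑ I : Fin 1 → ι, ‖L (fun j => v (I j))‖ ^ 2 = ∑ I : Fin 1 → ι, ‖L (fun j => w (I j))‖ ^ 2)
    (x : E) : ‖analysisMap 𝕜 v x‖ = ‖analysisMap 𝕜 w x‖ := by
  have sum_functional (u : ι → E) :
      ∑ I : Fin 1 → ι,
        ‖MultilinearMap.ofSubsingleton 𝕜 E 𝕜 0 (innerₛₗ 𝕜 x) (fun j => u (I j))‖ ^ 2 =
          ‖analysisMap 𝕜 u x‖ ^ 2 := by
    rw [norm_sq_analysisMap, ← (Equiv.funUnique (Fin 1) ι).sum_comp]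
    rfl
  rw [← sq_eq_sq₀ (norm_nonneg _) (norm_nonneg _), ← sum_functional, ← sum_functional, h]

end AnalysisMap

open scoped InnerProductSpace in
theorem statement7_general {𝕜 ι E : Type*} [RCLike 𝕜] [Fintype ι] [DecidableEq ι]
    [NormedAddCommGroup E] [InnerProductSpace 𝕜 E] (v w : ι → E) :
    List.TFAE [
      ∀ x y : E, ∑ i, ⟪x, v i⟫_𝕜 * ⟪v i, y⟫_𝕜 = ∑ i, ⟪x, w i⟫_𝕜 * ⟪w i, y⟫_𝕜,
      ∀ k : ℕ, 1 ≤ k → ∀ L : MultilinearMap 𝕜 (fun _ : Fin k => E) 𝕜,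
        ∑ I : Fin k → ι, ‖L (fun j => v (I j))‖ ^ 2 =
          ∑ I : Fin k → ι, ‖L (fun j => w (I j))‖ ^ 2,
      ∃ U ∈ unitaryGroup ι 𝕜, ∀ i, v i = ∑ j, U i j • w j] := by
  simp only [← inner_analysisMap, forall_inner_map_eq_iff_forall_norm_map_eq]
  tfae_have 1 → 3 := exists_unitary_of_norm_analysisMap_eq
  tfae_have 3 → 2 := by
    rintro ⟨U, hU, hvw⟩ k - L
    simp only [hvw]
    exact sum_norm_sq_multilinearMap_sum_smul L (fun _ => mem_unitaryGroup_iff'.mp hU) fun _ => w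
  tfae_have 2 → 1 := fun h => norm_analysisMap_eq_of_sum_norm_sq_eq (h 1 le_rfl)
  tfae_finish

theorem statement7
    {H : Type*} [NormedAddCommGroup H] [InnerProductSpace ℝ H] [FiniteDimensional ℝ H]
    (m : ℕ) (v w : Fin m → H)
    (hv : LinearIndependent ℝ v) (hw : LinearIndependent ℝ w) :
    ((∀ x y : H, ∑ i, ⟪x, v i⟫ * ⟪v i, y⟫ = ∑ i, ⟪x, w i⟫ * ⟪w i, y⟫) ↔
      (∀ k : ℕ, 1 ≤ k → ∀ L : MultilinearMap ℝ (fun _ : Fin k => H) ℝ,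
        ∑ I : Fin k → Fin m, |L (fun j => v (I j))| ^ 2 =
          ∑ I : Fin k → Fin m, |L (fun j => w (I j))| ^ 2)) ∧
    ((∀ x y : H, ∑ i, ⟪x, v i⟫ * ⟪v i, y⟫ = ∑ i, ⟪x, w i⟫ * ⟪w i, y⟫) ↔
      (∃ O : Matrix (Fin m) (Fin m) ℝ, Oᵀ * O = 1 ∧
        ∀ i, v i = ∑ j, O i j • w j)) := by
  simp only [← conjTranspose_eq_transpose_of_trivial, ← star_eq_conjTranspose,
    ← mem_unitaryGroup_iff', ← Real.norm_eq_abs]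
  exact ⟨(statement7_general v w).out 0 1, (statement7_general v w).out 0 2⟩
end
end

section
/- Let U ⊆ ℝ^d be open and connected and let f : U → ℝ be a real analytic function. Then f is a Nash function on U (i.e., there exist an algebraic lifting map Φ : U → ℝ^M with annihilating map p and a real polynomial F on ℝ^d × ℝ^M with f(x) = F(x, Φ(x)) for all x ∈ U) if and only if there exists a real polynomial q(x, z) in d+1 variables, whose partial derivative ∂q/∂z is not the zero polynomial, such that q(x, f(x)) = 0 for all x ∈ U. -/
noncomputable section

open scoped BigOperators

namespace StatementTen

/-- `Φ` is an algebraic lifting map on `U` with annihilating polynomial map `p`. -/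
def IsAlgLift (d M : ℕ) (U : Set (Fin d → ℝ)) (Φ : (Fin d → ℝ) → Fin M → ℝ)
    (p : Fin M → MvPolynomial (Fin d ⊕ Fin M) ℝ) : Prop :=
  AnalyticOnNhd ℝ Φ U ∧
  (∀ x ∈ U, ∀ j, MvPolynomial.eval (Sum.elim x (Φ x)) (p j) = 0) ∧
  (∀ V : Set (Fin d → ℝ), IsOpen V → V ⊆ U → V.Nonempty →
    ∃ x ∈ V, Matrix.det (Matrix.of fun j j' : Fin M =>
      MvPolynomial.eval (Sum.elim x (Φ x)) (MvPolynomial.pderiv (Sum.inr j') (p j))) ≠ 0)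

/-- `f` lifts to the polynomial `F` via the algebraic lifting map `Φ` with
annihilating map `p`. -/
def IsNashRep (d M : ℕ) (U : Set (Fin d → ℝ)) (f : (Fin d → ℝ) → ℝ)
    (Φ : (Fin d → ℝ) → Fin M → ℝ)
    (p : Fin M → MvPolynomial (Fin d ⊕ Fin M) ℝ)
    (F : MvPolynomial (Fin d ⊕ Fin M) ℝ) : Prop :=
  IsAlgLift d M U Φ p ∧ ∀ x ∈ U, f x = MvPolynomial.eval (Sum.elim x (Φ x)) F

/-- `f` is a Nash function on `U`. -/
def IsNash (d : ℕ) (U : Set (Fin d → ℝ)) (f : (Fin d → ℝ) → ℝ) : Prop :=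
  ∃ (M : ℕ) (Φ : (Fin d → ℝ) → Fin M → ℝ)
    (p : Fin M → MvPolynomial (Fin d ⊕ Fin M) ℝ)
    (F : MvPolynomial (Fin d ⊕ Fin M) ℝ), IsNashRep d M U f Φ p F

open Classical in
/-- The complexity of a Nash function: the minimum of `deg F · deg p¹ ⋯ deg p^M`
over all representations; the zero function has complexity `0`. -/
def complexity (d : ℕ) (U : Set (Fin d → ℝ)) (f : (Fin d → ℝ) → ℝ) : ℕ :=
  if ∀ x ∈ U, f x = 0 then 0
  else sInf { c : ℕ | ∃ (M : ℕ) (Φ : (Fin d → ℝ) → Fin M → ℝ)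
    (p : Fin M → MvPolynomial (Fin d ⊕ Fin M) ℝ)
    (F : MvPolynomial (Fin d ⊕ Fin M) ℝ), IsNashRep d M U f Φ p F ∧
    c = F.totalDegree * ∏ j, (p j).totalDegree }

/-!
Let `R = ℝ[x₁, …, x_d]` act on the ring `C(U, ℝ)` of continuous functions through the coordinates.
A function is a nonzerodivisor of `C(U, ℝ)` exactly when it is nonzero on a dense set, so the
condition on the determinant of an algebraic lifting map says that a Jacobian determinant is a
nonzerodivisor. Both sides of the equivalence turn out to mean that `f` is algebraic over `R`.

If `Φ` is an algebraic lifting map, then after inverting the Jacobian determinant every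
`R`-derivation kills the components of `Φ`. The `R`-algebra they generate together with the inverse
of the determinant is thus unramified over the domain `R`, and hence algebraic.

Conversely, `C(U, ℝ)` is reduced and torsion-free over `R`, so the minimal polynomial of an
algebraic `f` over the fraction field of `R` is squarefree, hence separable in characteristic zero.
Clearing denominators gives `P` with `P(f) = 0` and `P'(f)` a nonzerodivisor: `f` is itself an
algebraic lifting map with `M = 1`.
-/

open MvPolynomial
open scoped nonZeroDivisors

section Unramified

variable {R S : Type*} [CommRing R] [CommRing S] [Algebra R S]

theorem formallyUnramified_of_D_eq_zero {s : Set S} (hs : Algebra.adjoin R s = ⊤)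
    (h : ∀ a ∈ s, KaehlerDifferential.D R S a = 0) : Algebra.FormallyUnramified R S := by
  have hD : KaehlerDifferential.D R S = 0 := Derivation.ext_of_adjoin_eq_top s hs h
  rw [Algebra.formallyUnramified_iff, ← Submodule.subsingleton_iff S, ← subsingleton_iff_bot_eq_top,
    ← KaehlerDifferential.span_range_derivation, hD]
  simp

theorem isAlgebraic_of_formallyUnramified [IsDomain R] [Algebra.FormallyUnramified R S]
    [Algebra.EssFiniteType R S] : Algebra.IsAlgebraic R S := by
  let K := FractionRing R
  let T := Localization (Algebra.algebraMapSubmonoid S R⁰)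
  have : Algebra.FormallyUnramified S T := .of_isLocalization (Algebra.algebraMapSubmonoid S R⁰)
  have : Algebra.FormallyUnramified R T := .comp R S T
  have : Algebra.FormallyUnramified K T := .of_restrictScalars R K T
  have : Algebra.EssFiniteType S T := .of_isLocalization _ (Algebra.algebraMapSubmonoid S R⁰)
  have : Algebra.EssFiniteType R T := .comp R S T
  have : Algebra.EssFiniteType K T := .of_comp R K T
  have : Module.Finite K T := Algebra.FormallyUnramified.finite_of_free K T
  refine ⟨fun s => ?_⟩
  have hs : IsAlgebraic K (algebraMap S T s) := Algebra.IsAlgebraic.isAlgebraic _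
  obtain ⟨P, hP, hPs⟩ := (IsFractionRing.isAlgebraic_iff R K T).mpr hs
  rw [Polynomial.aeval_algebraMap_apply,
    IsLocalization.map_eq_zero_iff (Algebra.algebraMapSubmonoid S R⁰)] at hPs
  obtain ⟨⟨_, r, hr, rfl⟩, hrP⟩ := hPs
  have hr0 : r ≠ 0 := nonZeroDivisors.ne_zero hr
  exact ⟨Polynomial.C r * P, mul_ne_zero (Polynomial.C_ne_zero.mpr hr0) hP, by simpa using hrP⟩

end Unramified

section JacobianCriterion

variable {R ι S : Type*} [CommRing R] [CommRing S] [Algebra R S]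

theorem derivation_aeval_eq_sum [Fintype ι] {N : Type*} [AddCommGroup N] [Module R N] [Module S N]
    (D : Derivation R S N) (y : ι → S) (p : MvPolynomial ι R) :
    D (aeval y p) = ∑ i, aeval y (pderiv i p) • D (y i) := by
  classical
  induction p using MvPolynomial.induction_on with
  | C a => simp
  | add p q hp hq => simp [hp, hq, add_smul, Finset.sum_add_distrib]
  | mul_X p i hp =>
    simp [hp, pderiv_X, Pi.single_apply, apply_ite (aeval y), add_smul, Finset.sum_add_distrib,
      Finset.smul_sum, mul_smul]

/-- The Jacobian matrix of the polynomial system `p` at the point `y`, with the equation as row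
index and the variable as column index. -/
def jacobianMatrix (p : ι → MvPolynomial ι R) (y : ι → S) : Matrix ι ι S :=
  Matrix.of fun i j => aeval y (pderiv j (p i))

variable [Fintype ι] [DecidableEq ι]

theorem mapMatrix_jacobianMatrix {T : Type*} [CommRing T] [Algebra R T] (φ : S →ₐ[R] T)
    (p : ι → MvPolynomial ι R) (y : ι → S) :
    φ.mapMatrix (jacobianMatrix p y) = jacobianMatrix p (fun i => φ (y i)) := by
  ext i j
  exact comp_aeval_apply y φ _

open Matrix.Module in
theorem derivation_apply_eq_zero_of_isUnit_jacobianMatrix {N : Type*} [AddCommGroup N] [Module R N]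
    [Module S N] (D : Derivation R S N) {y : ι → S} {p : ι → MvPolynomial ι R}
    (hp : ∀ i, aeval y (p i) = 0) (hJ : IsUnit (jacobianMatrix p y)) (i : ι) : D (y i) = 0 := by
  have hJD : jacobianMatrix p y • (fun i => D (y i)) = 0 := by
    ext i
    simpa [hp, jacobianMatrix] using (derivation_aeval_eq_sum D y (p i)).symm
  exact congrFun (hJ.smul_eq_zero.mp hJD) i

theorem formallyUnramified_of_jacobianMatrix_det_mul_eq_one {y : ι → S} {p : ι → MvPolynomial ι R}
    (hp : ∀ i, aeval y (p i) = 0) {v : S} (hv : (jacobianMatrix p y).det * v = 1)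
    (hgen : Algebra.adjoin R (insert v (Set.range y)) = ⊤) : Algebra.FormallyUnramified R S := by
  have hJ : IsUnit (jacobianMatrix p y) :=
    (Matrix.isUnit_iff_isUnit_det _).mpr (.of_mul_eq_one v hv)
  have hDy := derivation_apply_eq_zero_of_isUnit_jacobianMatrix (KaehlerDifferential.D R S) hp hJ
  have hDdet : KaehlerDifferential.D R S (jacobianMatrix p y).det = 0 := by
    have hdet : (jacobianMatrix p y).det = aeval y (Matrix.of fun i j => pderiv j (p i)).det := by
      rw [AlgHom.map_det]
      rfl
    rw [hdet, derivation_aeval_eq_sum]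
    simp [hDy]
  refine formallyUnramified_of_D_eq_zero hgen ?_
  rintro _ (rfl | ⟨i, rfl⟩)
  · rw [Derivation.leibniz_of_mul_eq_one _ ((mul_comm _ _).trans hv), hDdet, smul_zero]
  · exact hDy i

theorem isAlgebraic_of_isUnit_jacobianMatrix [IsDomain R] {y : ι → S} {p : ι → MvPolynomial ι R}
    (hp : ∀ i, aeval y (p i) = 0) (hJ : IsUnit (jacobianMatrix p y)) {b : S}
    (hb : b ∈ Algebra.adjoin R (Set.range y)) : IsAlgebraic R b := by
  obtain ⟨v, hv⟩ := ((Matrix.isUnit_iff_isUnit_det _).mp hJ).exists_right_inv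
  let A := Algebra.adjoin R (insert v (Set.range y))
  let y' (i : ι) : A := ⟨y i, Algebra.subset_adjoin (.inr ⟨i, rfl⟩)⟩
  let v' : A := ⟨v, Algebra.subset_adjoin (.inl rfl)⟩
  have hgen : Algebra.adjoin R (insert v' (Set.range y')) = ⊤ := by
    rw [← Algebra.adjoin_adjoin_coe_preimage]
    congr 1
    ext ⟨a, ha⟩
    simp [v', y']
  have hp' (i : ι) : aeval y' (p i) = 0 :=
    Subtype.ext ((comp_aeval_apply y' A.val (p i)).trans (hp i))
  have hv' : (jacobianMatrix p y').det * v' = 1 := by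
    apply Subtype.ext
    change A.val (jacobianMatrix p y').det * v = 1
    rw [AlgHom.map_det, mapMatrix_jacobianMatrix]
    exact hv
  have : Algebra.FormallyUnramified R A :=
    formallyUnramified_of_jacobianMatrix_det_mul_eq_one hp' hv' hgen
  have : Algebra.FiniteType R A := .adjoin_of_finite ((Set.finite_range y).insert v)
  have hbA : b ∈ A := Algebra.adjoin_mono (Set.subset_insert _ _) hb
  exact (isAlgebraic_of_formallyUnramified.isAlgebraic (⟨b, hbA⟩ : A)).algHom A.val

theorem isAlgebraic_of_jacobianMatrix_det_mem_nonZeroDivisors [IsDomain R] {y : ι → S}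
    {p : ι → MvPolynomial ι R} (hp : ∀ i, aeval y (p i) = 0)
    (hJ : (jacobianMatrix p y).det ∈ S⁰) {b : S}
    (hb : b ∈ Algebra.adjoin R (Set.range y)) : IsAlgebraic R b := by
  let φ : S →ₐ[R] FractionRing S := IsScalarTower.toAlgHom R S (FractionRing S)
  have hφ : Function.Injective φ := IsFractionRing.injective S (FractionRing S)
  rw [← isAlgebraic_algHom_iff φ hφ]
  refine isAlgebraic_of_isUnit_jacobianMatrix (y := fun i => φ (y i)) (p := p) (fun i => ?_) ?_ ?_
  · rw [← comp_aeval_apply y φ, hp, map_zero]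
  · rw [Matrix.isUnit_iff_isUnit_det, ← mapMatrix_jacobianMatrix, ← AlgHom.map_det]
    exact IsLocalization.map_units (FractionRing S) (⟨_, hJ⟩ : S⁰)
  · have hφb : φ b ∈ (Algebra.adjoin R (Set.range y)).map φ := ⟨b, hb, rfl⟩
    rwa [AlgHom.map_adjoin, ← Set.range_comp] at hφb

end JacobianCriterion

section SeparableAnnihilator

variable {R S : Type*} [CommRing R] [CommRing S] [Algebra R S]

theorem injective_algebraMap_localization_algebraMapSubmonoid [Module.IsTorsionFree R S] :
    Function.Injective (algebraMap S (Localization (Algebra.algebraMapSubmonoid S R⁰))) := by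
  apply IsLocalization.injective _ (M := Algebra.algebraMapSubmonoid S R⁰)
  rintro _ ⟨r, hr, rfl⟩
  rw [mem_nonZeroDivisors_iff_right]
  intro s hs
  rw [mul_comm, ← Algebra.smul_def] at hs
  exact (isRegular_iff_mem_nonZeroDivisors.mpr hr).smul_eq_zero_iff_right.mp hs

theorem separable_minpoly_of_isReduced {K A : Type*} [Field K] [PerfectField K] [CommRing A]
    [IsReduced A] [Algebra K A] {b : A} (hb : IsIntegral K b) : (minpoly K b).Separable :=
  PerfectField.separable_iff_squarefree.mpr
    ((minpoly.isRadical K b).squarefree (minpoly.ne_zero hb))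

theorem isUnit_aeval_derivative_of_separable {K A : Type*} [CommRing K] [CommRing A] [Algebra K A]
    {Q : Polynomial K} (hQ : Q.Separable) {b : A} (hb : Polynomial.aeval b Q = 0) :
    IsUnit (Polynomial.aeval b Q.derivative) := by
  obtain ⟨u, v, huv⟩ := hQ
  refine .of_mul_eq_one_right (Polynomial.aeval b v) ?_
  simpa [hb] using congrArg (Polynomial.aeval b) huv

theorem exists_aeval_eq_zero_and_aeval_derivative_mem_nonZeroDivisors
    [IsDomain R] [PerfectField (FractionRing R)] [IsReduced S] [Module.IsTorsionFree R S] {b : S}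
    (hb : IsAlgebraic R b) :
    ∃ P : Polynomial R, Polynomial.aeval b P = 0 ∧ Polynomial.aeval b P.derivative ∈ S⁰ := by
  let K := FractionRing R
  let T := Localization (Algebra.algebraMapSubmonoid S R⁰)
  have hinj : Function.Injective (algebraMap S T) :=
    injective_algebraMap_localization_algebraMapSubmonoid
  let b' : T := algebraMap S T b
  have hint : IsIntegral K b' :=
    ((IsFractionRing.isAlgebraic_iff R K T).mp hb.algebraMap).isIntegral
  have hunit : IsUnit (Polynomial.aeval b' (minpoly K b').derivative) :=
    isUnit_aeval_derivative_of_separable (separable_minpoly_of_isReduced hint) (minpoly.aeval K b')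
  let P := IsLocalization.integerNormalization R⁰ (minpoly K b')
  obtain ⟨c, hc, hP⟩ : ∃ c ∈ R⁰, P.map (algebraMap R K) = c • minpoly K b' :=
    IsLocalization.integerNormalization_spec R⁰ (minpoly K b')
  have hcT : IsUnit (algebraMap R T c) := by
    rw [IsScalarTower.algebraMap_apply R K T]
    exact (IsLocalization.map_units K (⟨c, hc⟩ : R⁰)).map _
  have haeval (Q : Polynomial R) :
      algebraMap S T (Polynomial.aeval b Q) = Polynomial.aeval b' (Q.map (algebraMap R K)) := by
    rw [Polynomial.aeval_map_algebraMap, Polynomial.aeval_algebraMap_apply]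
  refine ⟨P, hinj ?_, mem_nonZeroDivisors_of_injective hinj (IsUnit.mem_nonZeroDivisors ?_)⟩
  · rw [haeval, hP, (Polynomial.aeval b').map_smul_of_tower, minpoly.aeval, smul_zero, map_zero]
  · rw [haeval, ← Polynomial.derivative_map, hP, Polynomial.derivative_smul,
      (Polynomial.aeval b').map_smul_of_tower, Algebra.smul_def]
    exact hcT.mul hunit

end SeparableAnnihilator

section PolynomialsOverPolynomials

variable {k σ τ ι : Type*} [CommRing k]

/-- The identification of `k[τ]` with the polynomials over `k[σ]` in the single variable
`e.symm none`; it turns a polynomial in `(x, z)` into a polynomial in `z` with coefficients in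
`k[x]`. -/
def polynomialEquiv (e : τ ≃ Option σ) :
    MvPolynomial τ k ≃ₐ[k] Polynomial (MvPolynomial σ k) :=
  (renameEquiv k e).trans (optionEquivLeft k σ)

theorem polynomialEquiv_X_symm_none (e : τ ≃ Option σ) :
    polynomialEquiv (k := k) e (X (e.symm none)) = Polynomial.X := by
  simp [polynomialEquiv, optionEquivLeft_X_none]

theorem polynomialEquiv_X_symm_some (e : τ ≃ Option σ) (i : σ) :
    polynomialEquiv (k := k) e (X (e.symm (some i))) = Polynomial.C (X i) := by
  simp [polynomialEquiv, optionEquivLeft_X_some]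

theorem derivative_polynomialEquiv (e : τ ≃ Option σ) (q : MvPolynomial τ k) :
    (polynomialEquiv e q).derivative = polynomialEquiv e (pderiv (e.symm none) q) := by
  classical
  induction q using MvPolynomial.induction_on with
  | C a => simp [polynomialEquiv, optionEquivLeft_C]
  | add p q hp hq => simp [hp, hq]
  | mul_X p i hp =>
    obtain ⟨_ | i, rfl⟩ := e.symm.surjective i
    · simp [hp, pderiv_X, polynomialEquiv_X_symm_none, mul_comm]
    · simp [hp, pderiv_X, polynomialEquiv_X_symm_some, mul_comm]

/-- The identification of `k[σ ⊕ ι]` with the polynomials in `ι` over `k[σ]`; it turns a polynomial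
in `(x, y)` into a polynomial in `y` with coefficients in `k[x]`. -/
def sumPolynomialEquiv : MvPolynomial (σ ⊕ ι) k ≃ₐ[k] MvPolynomial ι (MvPolynomial σ k) :=
  (renameEquiv k (Equiv.sumComm σ ι)).trans (sumAlgEquiv k ι σ)

theorem pderiv_sumPolynomialEquiv (j : ι) (q : MvPolynomial (σ ⊕ ι) k) :
    pderiv j (sumPolynomialEquiv q) = sumPolynomialEquiv (pderiv (.inr j) q) := by
  have hswap : pderiv (.inl j) (rename Sum.swap q) = rename Sum.swap (pderiv (.inr j) q) :=
    pderiv_rename (f := Sum.swap (α := σ) (β := ι)) Sum.swap_leftInverse.injective (.inr j) q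
  simpa [sumPolynomialEquiv] using hswap

variable {B : Type*} [CommRing B] [Algebra k B] [Algebra (MvPolynomial σ k) B]
  [IsScalarTower k (MvPolynomial σ k) B]

theorem aeval_polynomialEquiv (e : τ ≃ Option σ) {z : τ → B}
    (hz : ∀ i, z (e.symm (some i)) = algebraMap (MvPolynomial σ k) B (X i))
    (q : MvPolynomial τ k) :
    Polynomial.aeval (z (e.symm none)) (polynomialEquiv e q) = aeval z q := by
  suffices ((Polynomial.aeval (z (e.symm none))).restrictScalars k).comp
      (polynomialEquiv e).toAlgHom = aeval z from DFunLike.congr_fun this q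
  ext i
  obtain ⟨_ | i, rfl⟩ := e.symm.surjective i <;>
    simp [hz, polynomialEquiv_X_symm_none, polynomialEquiv_X_symm_some]

theorem aeval_sumPolynomialEquiv (y : ι → B) (q : MvPolynomial (σ ⊕ ι) k) :
    aeval y (sumPolynomialEquiv q) =
      aeval (Sum.elim (fun i => algebraMap (MvPolynomial σ k) B (X i)) y) q := by
  suffices ((aeval y).restrictScalars k).comp sumPolynomialEquiv.toAlgHom =
      aeval (Sum.elim (fun i => algebraMap (MvPolynomial σ k) B (X i)) y) from
    DFunLike.congr_fun this q
  ext (i | i) <;> simp [sumPolynomialEquiv]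

end PolynomialsOverPolynomials

section ContinuousFunctions

variable {X : Type*} [TopologicalSpace X]

theorem mem_nonZeroDivisors_iff_dense [CompletelyRegularSpace X] {g : C(X, ℝ)} :
    g ∈ C(X, ℝ)⁰ ↔ Dense {x | g x ≠ 0} := by
  rw [mem_nonZeroDivisors_iff_right]
  refine ⟨fun hg => ?_, fun hg h hgh => ?_⟩
  · by_contra hd
    obtain ⟨x, hx⟩ : ∃ x, x ∉ closure {x | g x ≠ 0} := by simpa [Dense] using hd
    obtain ⟨b, hb, hbx, hb1⟩ := CompletelyRegularSpace.completely_regular x _ isClosed_closure hx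
    let h : C(X, ℝ) := ⟨fun t => 1 - b t, by fun_prop⟩
    have hh : h = 0 := by
      refine hg h (ContinuousMap.ext fun t => ?_)
      by_cases ht : g t = 0
      · simp [ht]
      · simp [h, hb1 (subset_closure ht)]
    simpa [h, hbx] using DFunLike.congr_fun hh x
  · refine DFunLike.ext' (h.continuous.ext_on hg continuous_const fun x hx => ?_)
    simpa [hx.out] using DFunLike.congr_fun hgh x

theorem dense_preimage_subtypeVal_iff {U : Set X} (hU : IsOpen U) {s : Set X} :
    Dense ((↑) ⁻¹' s : Set U) ↔ ∀ V, IsOpen V → V ⊆ U → V.Nonempty → (V ∩ s).Nonempty := by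
  rw [dense_iff_inter_open]
  refine ⟨fun h V hV hVU ⟨x, hx⟩ => ?_, fun h W hW ⟨x, hx⟩ => ?_⟩
  · obtain ⟨y, hyV, hys⟩ := h _ (hV.preimage continuous_subtype_val) ⟨⟨x, hVU hx⟩, hx⟩
    exact ⟨y, hyV, hys⟩
  · obtain ⟨_, ⟨y, hyW, rfl⟩, hys⟩ := h (Subtype.val '' W) (hU.isOpenMap_subtype_val W hW)
      (Subtype.coe_image_subset U W) ⟨x, x, hx, rfl⟩
    exact ⟨y, hyW, hys⟩

theorem dense_eval_ne_zero {𝕜 σ : Type*} [NontriviallyNormedField 𝕜] [Finite σ]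
    {p : MvPolynomial σ 𝕜} (hp : p ≠ 0) : Dense {x | eval x p ≠ 0} := by
  rw [dense_iff_inter_open]
  rintro V hV ⟨x, hx⟩
  obtain ⟨u, hu, huV⟩ := isOpen_pi_iff'.mp hV x hx
  by_contra! hempty
  refine hp (MvPolynomial.funext_set u (fun i => ?_) fun y hy => ?_)
  · exact infinite_of_mem_nhds (x i) ((hu i).1.mem_nhds (hu i).2)
  · simpa [huV hy] using Set.eq_empty_iff_forall_notMem.mp hempty y

instance isReduced_continuousMap {A : Type*} [CommRing A] [TopologicalSpace A]
    [IsTopologicalRing A] [IsReduced A] : IsReduced C(X, A) :=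
  isReduced_of_injective ContinuousMap.coeFnRingHom DFunLike.coe_injective

theorem aeval_continuousMap_apply {A τ : Type*} [CommRing A] [TopologicalSpace A]
    [IsTopologicalRing A] (z : τ → C(X, A)) (p : MvPolynomial τ A) (x : X) :
    aeval z p x = eval (fun i => z i x) p :=
  comp_aeval_apply z (ContinuousMap.evalAlgHom A A x) p

end ContinuousFunctions

section CoordinateAlgebra

variable {σ : Type*} {U : Set (σ → ℝ)}

/-- The restriction of a coordinate function of `ℝ^σ` to `U`, as a continuous function. -/
def coordinate (U : Set (σ → ℝ)) (i : σ) : C(U, ℝ) :=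
  ⟨fun x => x.1 i, (continuous_apply i).comp continuous_subtype_val⟩

/-- The algebra structure on `C(U, ℝ)` over the polynomial ring given by restricting polynomial
functions to `U`. -/
instance coordinateAlgebra : Algebra (MvPolynomial σ ℝ) C(U, ℝ) :=
  (aeval (coordinate U)).toAlgebra

instance isScalarTower_coordinateAlgebra : IsScalarTower ℝ (MvPolynomial σ ℝ) C(U, ℝ) :=
  .of_algebraMap_eq' (aeval (coordinate U)).comp_algebraMap.symm

theorem coordinateAlgebra_algebraMap_X (i : σ) :
    algebraMap (MvPolynomial σ ℝ) C(U, ℝ) (X i) = coordinate U i :=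
  aeval_X _ i

theorem coordinateAlgebra_algebraMap_apply (p : MvPolynomial σ ℝ) (x : U) :
    algebraMap (MvPolynomial σ ℝ) C(U, ℝ) p x = eval x.1 p :=
  aeval_continuousMap_apply _ p x

theorem isTorsionFree_coordinateAlgebra [Finite σ] (hU : IsOpen U) :
    Module.IsTorsionFree (MvPolynomial σ ℝ) C(U, ℝ) := by
  refine .of_smul_eq_zero fun p g hpg => or_iff_not_imp_left.mpr fun hp => ?_
  have hdense : Dense {x : U | algebraMap (MvPolynomial σ ℝ) C(U, ℝ) p x ≠ 0} := by
    simp only [coordinateAlgebra_algebraMap_apply]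
    exact (dense_eval_ne_zero hp).preimage hU.isOpenMap_subtype_val
  rw [Algebra.smul_def, mul_comm] at hpg
  exact mem_nonZeroDivisors_iff_right.mp (mem_nonZeroDivisors_iff_dense.mpr hdense) g hpg

end CoordinateAlgebra

section Nash

variable {d M : ℕ} {U : Set (Fin d → ℝ)}

theorem aeval_sumPolynomialEquiv_apply {Φ : (Fin d → ℝ) → Fin M → ℝ} {y : Fin M → C(U, ℝ)}
    (hy : ∀ j (x : U), y j x = Φ x j) (q : MvPolynomial (Fin d ⊕ Fin M) ℝ) (x : U) :
    aeval y (sumPolynomialEquiv q) x = eval (Sum.elim x.1 (Φ x)) q := by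
  rw [aeval_sumPolynomialEquiv, aeval_continuousMap_apply]
  congr 2
  ext (i | j)
  · simp [coordinateAlgebra_algebraMap_apply]
  · exact hy j x

theorem det_jacobianMatrix_sumPolynomialEquiv_apply {Φ : (Fin d → ℝ) → Fin M → ℝ}
    {y : Fin M → C(U, ℝ)} (hy : ∀ j (x : U), y j x = Φ x j)
    (p : Fin M → MvPolynomial (Fin d ⊕ Fin M) ℝ) (x : U) :
    (jacobianMatrix (fun j => sumPolynomialEquiv (p j)) y).det x =
      (Matrix.of fun j j' => eval (Sum.elim x.1 (Φ x)) (pderiv (.inr j') (p j))).det := by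
  change ContinuousMap.evalAlgHom ℝ ℝ x _ = _
  rw [AlgHom.map_det]
  congr 1
  ext j j'
  simp only [AlgHom.mapMatrix_apply, Matrix.map_apply, jacobianMatrix, Matrix.of_apply,
    pderiv_sumPolynomialEquiv]
  exact aeval_sumPolynomialEquiv_apply hy _ x

theorem isAlgLift_iff (hU : IsOpen U) {Φ : (Fin d → ℝ) → Fin M → ℝ} {y : Fin M → C(U, ℝ)}
    (hy : ∀ j (x : U), y j x = Φ x j) {p : Fin M → MvPolynomial (Fin d ⊕ Fin M) ℝ} :
    IsAlgLift d M U Φ p ↔ AnalyticOnNhd ℝ Φ U ∧ (∀ j, aeval y (sumPolynomialEquiv (p j)) = 0) ∧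
      (jacobianMatrix (fun j => sumPolynomialEquiv (p j)) y).det ∈ C(U, ℝ)⁰ := by
  refine and_congr_right fun _ => and_congr ?_ ?_
  · simp only [ContinuousMap.ext_iff, aeval_sumPolynomialEquiv_apply hy, Subtype.forall]
    exact ⟨fun h j x hx => h x hx j, fun h x hx j => h j x hx⟩
  · rw [mem_nonZeroDivisors_iff_dense]
    simp only [det_jacobianMatrix_sumPolynomialEquiv_apply hy]
    exact (dense_preimage_subtypeVal_iff hU).symm

variable {f : (Fin d → ℝ) → ℝ} {g : C(U, ℝ)}

theorem isAlgebraic_of_isNash (hU : IsOpen U) (hg : ∀ x : U, g x = f x) (hf : IsNash d U f) :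
    IsAlgebraic (MvPolynomial (Fin d) ℝ) g := by
  obtain ⟨M, Φ, p, F, hΦ, hF⟩ := hf
  let y (j : Fin M) : C(U, ℝ) :=
    ⟨fun x => Φ x j, (continuous_apply j).comp hΦ.1.continuousOn.domRestrict⟩
  have hy (j : Fin M) (x : U) : y j x = Φ x j := rfl
  obtain ⟨-, hp, hJ⟩ := (isAlgLift_iff hU hy).mp hΦ
  have hgF : aeval y (sumPolynomialEquiv F) = g := by
    ext x
    rw [hg, hF x x.2, aeval_sumPolynomialEquiv_apply hy]
  refine isAlgebraic_of_jacobianMatrix_det_mem_nonZeroDivisors hp hJ ?_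
  rw [Algebra.adjoin_range_eq_range_aeval]
  exact ⟨_, hgF⟩

theorem isNash_of_isAlgebraic (hU : IsOpen U) (hf : AnalyticOnNhd ℝ f U)
    (hg : ∀ x : U, g x = f x) (halg : IsAlgebraic (MvPolynomial (Fin d) ℝ) g) :
    IsNash d U f := by
  have := isTorsionFree_coordinateAlgebra hU
  obtain ⟨P, hPg, hP'g⟩ :=
    exists_aeval_eq_zero_and_aeval_derivative_mem_nonZeroDivisors halg
  let p : MvPolynomial (Fin 1) (MvPolynomial (Fin d) ℝ) := Polynomial.aeval (X 0) P
  refine ⟨1, fun x _ => f x, fun _ => sumPolynomialEquiv.symm p, X (.inr 0),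
    (isAlgLift_iff hU (y := fun _ => g) fun _ => hg).mpr ⟨?_, fun _ => ?_, ?_⟩, fun x _ => by simp⟩
  · exact fun x hx => analyticAt_pi_iff.mpr fun _ => hf x hx
  · rw [AlgEquiv.apply_symm_apply, ← Polynomial.aeval_algHom_apply, aeval_X, hPg]
  · have hpderiv : pderiv 0 p = Polynomial.aeval (X 0) P.derivative := by
      simp [p, Derivation.map_aeval]
    simpa [jacobianMatrix, hpderiv, ← Polynomial.aeval_algHom_apply] using hP'g

theorem aeval_polynomialEquiv_finSuccEquivLast_apply (hg : ∀ x : U, g x = f x)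
    (q : MvPolynomial (Fin (d + 1)) ℝ) (x : U) :
    Polynomial.aeval g (polynomialEquiv finSuccEquivLast q) x =
      eval (Fin.snoc x.1 (f x) : Fin (d + 1) → ℝ) q := by
  have haeval : Polynomial.aeval g (polynomialEquiv finSuccEquivLast q) =
      aeval (Fin.snoc (coordinate U) g : Fin (d + 1) → C(U, ℝ)) q := by
    simpa using aeval_polynomialEquiv finSuccEquivLast (z := Fin.snoc (coordinate U) g)
      (fun i => by simp [coordinateAlgebra_algebraMap_X]) q
  rw [haeval, aeval_continuousMap_apply]
  congr 2
  ext i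
  refine Fin.lastCases ?_ (fun i => ?_) i <;> simp [hg, coordinate]

theorem isAlgebraic_iff_exists_eval_snoc_eq_zero (hg : ∀ x : U, g x = f x) :
    IsAlgebraic (MvPolynomial (Fin d) ℝ) g ↔
      ∃ q : MvPolynomial (Fin (d + 1)) ℝ, pderiv (Fin.last d) q ≠ 0 ∧
        ∀ x ∈ U, eval (Fin.snoc x (f x)) q = 0 := by
  let e : MvPolynomial (Fin (d + 1)) ℝ ≃ₐ[ℝ] Polynomial (MvPolynomial (Fin d) ℝ) :=
    polynomialEquiv finSuccEquivLast
  have hderiv (q) : (e q).derivative = e (pderiv (Fin.last d) q) := by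
    simpa using derivative_polynomialEquiv finSuccEquivLast q
  have hroot (q) : Polynomial.aeval g (e q) = 0 ↔ ∀ x ∈ U, eval (Fin.snoc x (f x)) q = 0 := by
    simp only [ContinuousMap.ext_iff, e, aeval_polynomialEquiv_finSuccEquivLast_apply hg,
      Subtype.forall]
    rfl
  simp only [← hroot]
  refine ⟨fun ⟨P, hP, hPg⟩ => ?_, fun ⟨q, hq, hqg⟩ => ⟨e q, fun hq0 => hq ?_, hqg⟩⟩
  · -- The factor `z` makes the degree in `z` positive, so the `z`-derivative cannot vanish.
    refine ⟨e.symm (P * Polynomial.X), fun h => ?_, by simp [hPg]⟩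
    have hdeg : (P * Polynomial.X).natDegree = 0 := by
      rw [← Polynomial.derivative_eq_zero, ← e.apply_symm_apply (P * Polynomial.X), hderiv, h,
        map_zero]
    simp [Polynomial.natDegree_mul_X hP] at hdeg
  · rw [(EmbeddingLike.map_eq_zero_iff (f := e)).mp hq0, map_zero]

end Nash

theorem statement10_general (d : ℕ) (U : Set (Fin d → ℝ)) (hUopen : IsOpen U)
    (f : (Fin d → ℝ) → ℝ) (hf : AnalyticOnNhd ℝ f U) :
    IsNash d U f ↔
      ∃ q : MvPolynomial (Fin (d + 1)) ℝ,
        MvPolynomial.pderiv (Fin.last d) q ≠ 0 ∧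
        ∀ x ∈ U, MvPolynomial.eval (Fin.snoc x (f x)) q = 0 := by
  let g : C(U, ℝ) := ⟨fun x => f x, hf.continuousOn.domRestrict⟩
  have hg (x : U) : g x = f x := rfl
  calc
    IsNash d U f ↔ IsAlgebraic (MvPolynomial (Fin d) ℝ) g :=
      ⟨isAlgebraic_of_isNash hUopen hg, isNash_of_isAlgebraic hUopen hf hg⟩
    _ ↔ _ := isAlgebraic_iff_exists_eval_snoc_eq_zero hg

theorem statement10 (d : ℕ) (U : Set (Fin d → ℝ)) (hUopen : IsOpen U)
    (hUconn : IsConnected U)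
    (f : (Fin d → ℝ) → ℝ) (hf : AnalyticOnNhd ℝ f U) :
    IsNash d U f ↔
      ∃ q : MvPolynomial (Fin (d + 1)) ℝ,
        MvPolynomial.pderiv (Fin.last d) q ≠ 0 ∧
        ∀ x ∈ U, MvPolynomial.eval (Fin.snoc x (f x)) q = 0 :=
  statement10_general d U hUopen f hf

end StatementTen
end
end

section
/- Let U ⊆ ℝ^d be open and let f = (f₁,…,f_d) : U → ℝ^d be real analytic, where for each j ∈ {1,…,d} there are a real analytic map Φ_j : U → ℝ^{M_j}, a polynomial map p_j : ℝ^d × ℝ^{M_j} → ℝ^{M_j} with p_j(x, Φ_j(x)) = 0 for all x ∈ U, and a real polynomial F_j on ℝ^d × ℝ^{M_j} with f_j(x) = F_j(x, Φ_j(x)) for all x ∈ U. Define F̄(x, y₁,…,y_d) := (F₁(x,y₁),…,F_d(x,y_d), p₁(x,y₁),…,p_d(x,y_d)), a map from ℝ^d × ℝ^{M₁} × ⋯ × ℝ^{M_d} to itself. Then for every x ∈ U, the Jacobian determinant of F̄ with respect to all of its variables, evaluated at (x, Φ₁(x),…,Φ_d(x)), equals det D_x f(x) · ∏_{j=1}^d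 det D_{y_j} p_j(x, y_j)|_{y_j = Φ_j(x)}. -/
noncomputable section

open scoped BigOperators

namespace Statement11

/-- The entries of the Jacobian matrix of the combined map
`F̄(x, y₁,…,y_d) = (F₁(x,y₁),…,F_d(x,y_d), p₁(x,y₁),…,p_d(x,y_d))`, with respect to all
of its variables, evaluated at the lifted point `(x, Φ₁(x),…,Φ_d(x))`. -/
def JacEntry (d : ℕ) (M : Fin d → ℕ)
    (Φ : (j : Fin d) → (Fin d → ℝ) → Fin (M j) → ℝ)
    (p : (j : Fin d) → Fin (M j) → MvPolynomial (Fin d ⊕ Fin (M j)) ℝ)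
    (F : (j : Fin d) → MvPolynomial (Fin d ⊕ Fin (M j)) ℝ)
    (x : Fin d → ℝ) :
    (Fin d ⊕ ((j : Fin d) × Fin (M j))) → (Fin d ⊕ ((j : Fin d) × Fin (M j))) → ℝ
  | Sum.inl i, Sum.inl i0 =>
      MvPolynomial.eval (Sum.elim x (Φ i x)) (MvPolynomial.pderiv (Sum.inl i0) (F i))
  | Sum.inl i, Sum.inr ⟨j, r⟩ =>
      if h : j = i then
        MvPolynomial.eval (Sum.elim x (Φ i x))
          (MvPolynomial.pderiv (Sum.inr (Fin.cast (congrArg M h) r)) (F i))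
      else 0
  | Sum.inr ⟨j, rr⟩, Sum.inl i0 =>
      MvPolynomial.eval (Sum.elim x (Φ j x)) (MvPolynomial.pderiv (Sum.inl i0) (p j rr))
  | Sum.inr ⟨j, rr⟩, Sum.inr ⟨j', r'⟩ =>
      if h : j' = j then
        MvPolynomial.eval (Sum.elim x (Φ j x))
          (MvPolynomial.pderiv (Sum.inr (Fin.cast (congrArg M h) r')) (p j rr))
      else 0

/-!
On the graph of `Φ = (Φ₁, …, Φ_d)` the map `F̄` restricts to `z ↦ (f(z), 0)`. With `J` the Jacobian
matrix of `F̄` at the lifted point, the chain rule therefore reads `J * [1; DΦ] = [Df; 0]`.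
Multiplying `J` by the unipotent matrix `[1 0; DΦ 1]` thus makes it block upper triangular with
diagonal blocks `Df` and `D_y p`, and `D_y p` is block diagonal because `p_j` involves no `y_i`
with `i ≠ j`.
-/

section Determinants

variable {R : Type*} [CommRing R]

theorem det_eq_of_mul_fromRows_one {m n : Type*} [Fintype m] [Fintype n] [DecidableEq m]
    [DecidableEq n] {J : Matrix (m ⊕ n) (m ⊕ n) R} {P : Matrix n m R} {A : Matrix m m R}
    (h : J * Matrix.fromRows (1 : Matrix m m R) P = Matrix.fromRows A 0) :
    J.det = A.det * J.toBlocks₂₂.det := by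
  have hlast : J * Matrix.fromRows (0 : Matrix m n R) (1 : Matrix n n R) =
      Matrix.fromRows J.toBlocks₁₂ J.toBlocks₂₂ := by
    ext (i | i) j <;>
      simp [Matrix.mul_apply, Matrix.one_apply, Matrix.toBlocks₁₂, Matrix.toBlocks₂₂]
  have htriangular : J * Matrix.fromBlocks 1 0 P 1 =
      Matrix.fromBlocks A J.toBlocks₁₂ 0 J.toBlocks₂₂ := by
    rw [← Matrix.fromCols_fromRows_eq_fromBlocks, Matrix.mul_fromCols, h, hlast,
      Matrix.fromCols_fromRows_eq_fromBlocks]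
  simpa [Matrix.det_fromBlocks_zero₁₂, Matrix.det_fromBlocks_zero₂₁] using
    congrArg Matrix.det htriangular

theorem det_blockDiagonal' {o : Type*} [Fintype o] [DecidableEq o] {m : o → Type*}
    [∀ i, Fintype (m i)] [∀ i, DecidableEq (m i)] (D : ∀ i, Matrix (m i) (m i) R) :
    (Matrix.blockDiagonal' D).det = ∏ i, (D i).det := by
  classical
  let _ : LinearOrder o := linearOrderOfSTO WellOrderingRel
  rw [(Matrix.blockTriangular_blockDiagonal' D).det_fintype]
  refine Finset.prod_congr rfl fun k _ => ?_
  rw [← Matrix.det_submatrix_equiv_self (Equiv.sigmaSubtype k) (D k)]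
  congr 1
  ext ⟨⟨i, a⟩, rfl⟩ ⟨⟨j, b⟩, hj⟩
  obtain rfl : j = i := hj
  exact Matrix.blockDiagonal'_apply_eq D j a b

end Determinants

section PolynomialJacobian

variable {R σ γ : Type*} [CommSemiring R]

/-- The Jacobian matrix at the point `x` of the polynomial map `G`, with formal partial
derivatives as entries. -/
def polynomialJacobian (G : γ → MvPolynomial σ R) (x : σ → R) : Matrix γ σ R :=
  Matrix.of fun i j => MvPolynomial.eval x (MvPolynomial.pderiv j (G i))

theorem pderiv_rename_of_notMem_range {τ : Type*} {g : σ → τ} {t : τ} (ht : t ∉ Set.range g)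
    (q : MvPolynomial σ R) : MvPolynomial.pderiv t (MvPolynomial.rename g q) = 0 := by
  classical
  refine MvPolynomial.pderiv_eq_zero_of_notMem_vars fun hmem => ht ?_
  obtain ⟨s, -, hs⟩ := Finset.mem_image.mp (MvPolynomial.vars_rename g q hmem)
  exact ⟨s, hs⟩

end PolynomialJacobian

theorem hasFDerivAt_eval_mvPolynomial {𝕜 E σ : Type*} [NontriviallyNormedField 𝕜]
    [NormedAddCommGroup E] [NormedSpace 𝕜 E] [Fintype σ] {g : E → σ → 𝕜} {g' : σ → E →L[𝕜] 𝕜}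
    {x : E} (hg : ∀ i, HasFDerivAt (fun z => g z i) (g' i) x) (q : MvPolynomial σ 𝕜) :
    HasFDerivAt (fun z => MvPolynomial.eval (g z) q)
      (∑ i, MvPolynomial.eval (g x) (MvPolynomial.pderiv i q) • g' i) x := by
  classical
  induction q using MvPolynomial.induction_on with
  | C a =>
    simp only [MvPolynomial.eval_C, MvPolynomial.pderiv_C, map_zero]
    refine (hasFDerivAt_const (𝕜 := 𝕜) a x).congr_fderiv ?_
    ext v
    simp
  | add a b ha hb =>
    simp only [map_add]
    refine (ha.fun_add hb).congr_fderiv ?_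
    ext v
    simp [add_mul, Finset.sum_add_distrib]
  | mul_X a n ha =>
    simp only [map_mul, MvPolynomial.eval_X]
    refine (ha.fun_mul (hg n)).congr_fderiv ?_
    ext v
    simp [MvPolynomial.pderiv_X, Pi.single_apply, apply_ite (MvPolynomial.eval _), add_mul,
      mul_assoc, Finset.sum_add_distrib, Finset.mul_sum]

section FunctionJacobian

variable {𝕜 α β : Type*} [NontriviallyNormedField 𝕜] [DecidableEq α]

/-- The Jacobian matrix of `f` at `x`, whose rows are the derivatives of the components of `f`. A
row takes the junk value `0` only if its own component is not differentiable at `x`. -/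
def jacobianMatrix (f : (α → 𝕜) → β → 𝕜) (x : α → 𝕜) : Matrix β α 𝕜 :=
  Matrix.of fun i j => fderiv 𝕜 (fun z => f z i) x (Pi.single j 1)

theorem jacobianMatrix_congr {f g : (α → 𝕜) → β → 𝕜} {x : α → 𝕜}
    (h : ∀ i, (fun z => f z i) =ᶠ[nhds x] fun z => g z i) :
    jacobianMatrix f x = jacobianMatrix g x := by
  ext i j
  exact DFunLike.congr_fun (h i).fderiv_eq (Pi.single j 1)

theorem jacobianMatrix_id (x : α → 𝕜) : jacobianMatrix (fun z => z) x = 1 := by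
  ext i j
  simp [jacobianMatrix, (hasFDerivAt_apply (𝕜 := 𝕜) i x).fderiv, Pi.single_apply, Matrix.one_apply]

theorem jacobianMatrix_const (c : β → 𝕜) (x : α → 𝕜) : jacobianMatrix (fun _ => c) x = 0 := by
  ext i j
  simp [jacobianMatrix]

theorem jacobianMatrix_sumElim {γ : Type*} (f : (α → 𝕜) → β → 𝕜) (g : (α → 𝕜) → γ → 𝕜)
    (x : α → 𝕜) :
    jacobianMatrix (fun z => Sum.elim (f z) (g z)) x =
      Matrix.fromRows (jacobianMatrix f x) (jacobianMatrix g x) := by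
  ext (i | i) j <;> rfl

theorem jacobianMatrix_eval_comp [Finite α] {σ : Type*} [Fintype σ] (G : β → MvPolynomial σ 𝕜)
    {g : (α → 𝕜) → σ → 𝕜} {x : α → 𝕜} (hg : DifferentiableAt 𝕜 g x) :
    jacobianMatrix (fun z i => MvPolynomial.eval (g z) (G i)) x =
      polynomialJacobian G (g x) * jacobianMatrix g x := by
  have := Fintype.ofFinite α
  ext i j
  have hchain := hasFDerivAt_eval_mvPolynomial
    (fun s => (differentiableAt_pi.mp hg s).hasFDerivAt) (G i)
  simp [jacobianMatrix, hchain.fderiv, Matrix.mul_apply, polynomialJacobian]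

theorem det_polynomialJacobian_eq_det_mul_det [Fintype α] [Fintype β] [DecidableEq β]
    {G : α ⊕ β → MvPolynomial (α ⊕ β) 𝕜} {f : (α → 𝕜) → α → 𝕜} {Φ : (α → 𝕜) → β → 𝕜} {x : α → 𝕜}
    (hΦ : DifferentiableAt 𝕜 Φ x)
    (hf : ∀ i, (fun z => f z i) =ᶠ[nhds x]
      fun z => MvPolynomial.eval (Sum.elim z (Φ z)) (G (Sum.inl i)))
    (hG : ∀ r, ∀ᶠ z in nhds x, MvPolynomial.eval (Sum.elim z (Φ z)) (G (Sum.inr r)) = 0) :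
    (polynomialJacobian G (Sum.elim x (Φ x))).det =
      (jacobianMatrix f x).det * (polynomialJacobian G (Sum.elim x (Φ x))).toBlocks₂₂.det := by
  have hgraph : DifferentiableAt 𝕜 (fun z => Sum.elim z (Φ z)) x := by
    refine differentiableAt_pi.mpr ?_
    rintro (i | r)
    exacts [differentiableAt_apply i x, differentiableAt_pi.mp hΦ r]
  refine det_eq_of_mul_fromRows_one (P := jacobianMatrix Φ x) ?_
  calc
    polynomialJacobian G (Sum.elim x (Φ x)) *
        Matrix.fromRows (1 : Matrix α α 𝕜) (jacobianMatrix Φ x)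
      = jacobianMatrix (fun z s => MvPolynomial.eval (Sum.elim z (Φ z)) (G s)) x := by
        rw [jacobianMatrix_eval_comp G hgraph, jacobianMatrix_sumElim, jacobianMatrix_id]
    _ = jacobianMatrix (fun z => Sum.elim (f z) (0 : β → 𝕜)) x := by
        refine jacobianMatrix_congr ?_
        rintro (i | r)
        exacts [(hf i).symm, hG r]
    _ = Matrix.fromRows (jacobianMatrix f x) 0 := by
        rw [jacobianMatrix_sumElim, jacobianMatrix_const]

end FunctionJacobian

section CombinedMap

variable {R ι : Type*} {κ : ι → Type*} [CommSemiring R]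

/-- The inclusion of the variables `(x, y_j)` into all variables `(x, y₁, …, y_d)`. -/
def includeVars (j : ι) : ι ⊕ κ j → ι ⊕ (Σ i, κ i) :=
  Sum.map id (Sigma.mk j)

/-- The polynomial map `F̄(x, y₁, …, y_d) = (F₁(x, y₁), …, F_d(x, y_d), p₁(x, y₁), …, p_d(x, y_d))`,
each component being regarded as a polynomial in all the variables. -/
def combinedMap (F : ∀ j, MvPolynomial (ι ⊕ κ j) R) (p : ∀ j, κ j → MvPolynomial (ι ⊕ κ j) R) :
    ι ⊕ (Σ j, κ j) → MvPolynomial (ι ⊕ (Σ j, κ j)) R :=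
  Sum.elim (fun j => MvPolynomial.rename (includeVars j) (F j))
    fun s => MvPolynomial.rename (includeVars s.1) (p s.1 s.2)

theorem includeVars_injective (j : ι) : Function.Injective (includeVars (κ := κ) j) :=
  Function.injective_id.sumMap sigma_mk_injective

variable (x : ι → R) (y : ∀ j, κ j → R)

theorem eval_rename_includeVars (j : ι) (q : MvPolynomial (ι ⊕ κ j) R) :
    MvPolynomial.eval (Sum.elim x fun s => y s.1 s.2) (MvPolynomial.rename (includeVars j) q) =
      MvPolynomial.eval (Sum.elim x (y j)) q := by
  rw [MvPolynomial.eval_rename, includeVars, Sum.elim_comp_map]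
  rfl

theorem eval_pderiv_rename_includeVars (j : ι) (v : ι ⊕ κ j) (q : MvPolynomial (ι ⊕ κ j) R) :
    MvPolynomial.eval (Sum.elim x fun s => y s.1 s.2)
        (MvPolynomial.pderiv (includeVars j v) (MvPolynomial.rename (includeVars j) q)) =
      MvPolynomial.eval (Sum.elim x (y j)) (MvPolynomial.pderiv v q) := by
  rw [MvPolynomial.pderiv_rename (includeVars_injective j), eval_rename_includeVars]

theorem pderiv_rename_includeVars_of_ne {i j : ι} (h : i ≠ j) (r : κ i)
    (q : MvPolynomial (ι ⊕ κ j) R) :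
    MvPolynomial.pderiv (Sum.inr ⟨i, r⟩) (MvPolynomial.rename (includeVars j) q) = 0 := by
  refine pderiv_rename_of_notMem_range ?_ q
  rintro ⟨_ | s, hs⟩
  · cases hs
  · exact h (congrArg Sigma.fst (Sum.inr.inj hs)).symm

theorem toBlocks₂₂_polynomialJacobian_combinedMap [DecidableEq ι]
    (F : ∀ j, MvPolynomial (ι ⊕ κ j) R) (p : ∀ j, κ j → MvPolynomial (ι ⊕ κ j) R) :
    (polynomialJacobian (combinedMap F p) (Sum.elim x fun s => y s.1 s.2)).toBlocks₂₂ =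
      Matrix.blockDiagonal' fun j =>
        (polynomialJacobian (p j) (Sum.elim x (y j))).toCols₂ := by
  ext ⟨j, r⟩ ⟨i, s⟩
  by_cases h : i = j
  · subst h
    rw [Matrix.blockDiagonal'_apply_eq]
    exact eval_pderiv_rename_includeVars x y i (Sum.inr s) (p i r)
  · rw [Matrix.blockDiagonal'_apply_ne _ _ _ (Ne.symm h)]
    exact (congrArg (MvPolynomial.eval _) (pderiv_rename_includeVars_of_ne h s (p j r))).trans
      (map_zero _)

end CombinedMap

theorem of_jacEntry_eq_polynomialJacobian (d : ℕ) (M : Fin d → ℕ)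
    (Φ : (j : Fin d) → (Fin d → ℝ) → Fin (M j) → ℝ)
    (p : (j : Fin d) → Fin (M j) → MvPolynomial (Fin d ⊕ Fin (M j)) ℝ)
    (F : (j : Fin d) → MvPolynomial (Fin d ⊕ Fin (M j)) ℝ) (x : Fin d → ℝ) :
    Matrix.of (JacEntry d M Φ p F x) =
      polynomialJacobian (combinedMap F p) (Sum.elim x fun s => Φ s.1 x s.2) := by
  have hx (j : Fin d) (k : Fin d) (q : MvPolynomial (Fin d ⊕ Fin (M j)) ℝ) :=
    eval_pderiv_rename_includeVars x (fun j => Φ j x) j (Sum.inl k) q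
  have hy (i j : Fin d) (r : Fin (M i)) (q : MvPolynomial (Fin d ⊕ Fin (M j)) ℝ) :
      (if h : i = j then MvPolynomial.eval (Sum.elim x (Φ j x))
          (MvPolynomial.pderiv (Sum.inr (Fin.cast (congrArg M h) r)) q) else 0) =
        MvPolynomial.eval (Sum.elim x fun s => Φ s.1 x s.2)
          (MvPolynomial.pderiv (Sum.inr ⟨i, r⟩)
            (MvPolynomial.rename (includeVars (κ := fun j => Fin (M j)) j) q)) := by
    split_ifs with h
    · subst h
      exact (eval_pderiv_rename_includeVars x (fun j => Φ j x) i (Sum.inr r) q).symm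
    · rw [pderiv_rename_includeVars_of_ne h, map_zero]
  ext (j | ⟨j, r⟩) (k | ⟨i, s⟩)
  exacts [(hx j k (F j)).symm, hy i j s (F j), (hx j k (p j r)).symm, hy i j s (p j r)]

theorem statement11_general {𝕜 ι : Type*} {κ : ι → Type*} [NontriviallyNormedField 𝕜]
    [Fintype ι] [DecidableEq ι] [∀ j, Fintype (κ j)] [∀ j, DecidableEq (κ j)]
    {f : ι → (ι → 𝕜) → 𝕜} {Φ : ∀ j, (ι → 𝕜) → κ j → 𝕜}
    {p : ∀ j, κ j → MvPolynomial (ι ⊕ κ j) 𝕜} {F : ∀ j, MvPolynomial (ι ⊕ κ j) 𝕜} {x : ι → 𝕜}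
    (hΦ : ∀ j, DifferentiableAt 𝕜 (Φ j) x)
    (hp : ∀ j r, ∀ᶠ z in nhds x, MvPolynomial.eval (Sum.elim z (Φ j z)) (p j r) = 0)
    (hF : ∀ j, ∀ᶠ z in nhds x, f j z = MvPolynomial.eval (Sum.elim z (Φ j z)) (F j)) :
    (polynomialJacobian (combinedMap F p) (Sum.elim x fun s => Φ s.1 x s.2)).det =
      (jacobianMatrix (fun z j => f j z) x).det *
        ∏ j, (polynomialJacobian (p j) (Sum.elim x (Φ j x))).toCols₂.det := by
  have hlift : DifferentiableAt 𝕜 (fun z (s : Σ j, κ j) => Φ s.1 z s.2) x :=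
    differentiableAt_pi.mpr fun s => differentiableAt_pi.mp (hΦ s.1) s.2
  have heval (z : ι → 𝕜) (j : ι) (q : MvPolynomial (ι ⊕ κ j) 𝕜) :=
    eval_rename_includeVars z (fun j => Φ j z) j q
  have hf : ∀ j, (fun z => f j z) =ᶠ[nhds x] fun z =>
      MvPolynomial.eval (Sum.elim z fun s => Φ s.1 z s.2) (combinedMap F p (Sum.inl j)) :=
    fun j => (hF j).mono fun z hz => hz.trans (heval z j (F j)).symm
  have hG : ∀ s, ∀ᶠ z in nhds x,
      MvPolynomial.eval (Sum.elim z fun s => Φ s.1 z s.2) (combinedMap F p (Sum.inr s)) = 0 :=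
    fun s => (hp s.1 s.2).mono fun z hz => (heval z s.1 (p s.1 s.2)).trans hz
  rw [det_polynomialJacobian_eq_det_mul_det hlift hf hG,
    toBlocks₂₂_polynomialJacobian_combinedMap x (fun j => Φ j x) F p, det_blockDiagonal']

theorem statement11 (d : ℕ) (hd : 0 < d) (U : Set (Fin d → ℝ)) (hU : IsOpen U)
    (M : Fin d → ℕ)
    (f : Fin d → (Fin d → ℝ) → ℝ)
    (Φ : (j : Fin d) → (Fin d → ℝ) → Fin (M j) → ℝ)
    (p : (j : Fin d) → Fin (M j) → MvPolynomial (Fin d ⊕ Fin (M j)) ℝ)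
    (F : (j : Fin d) → MvPolynomial (Fin d ⊕ Fin (M j)) ℝ)
    (hf : ∀ j, AnalyticOnNhd ℝ (f j) U)
    (hΦ : ∀ j, AnalyticOnNhd ℝ (Φ j) U)
    (hp : ∀ j, ∀ x ∈ U, ∀ r, MvPolynomial.eval (Sum.elim x (Φ j x)) (p j r) = 0)
    (hF : ∀ j, ∀ x ∈ U, f j x = MvPolynomial.eval (Sum.elim x (Φ j x)) (F j)) :
    ∀ x ∈ U,
      Matrix.det (Matrix.of (JacEntry d M Φ p F x)) =
        Matrix.det (Matrix.of fun i i0 : Fin d => fderiv ℝ (f i) x (Pi.single i0 1)) *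
          ∏ j : Fin d,
            Matrix.det (Matrix.of fun r r' : Fin (M j) =>
              MvPolynomial.eval (Sum.elim x (Φ j x))
                (MvPolynomial.pderiv (Sum.inr r') (p j r))) := by
  intro x hx
  rw [of_jacEntry_eq_polynomialJacobian]
  exact statement11_general (fun j => (hΦ j x hx).differentiableAt)
    (fun j r => hU.eventually_mem hx |>.mono fun z hz => hp j z hz r)
    (fun j => hU.eventually_mem hx |>.mono fun z hz => hF j z hz)

end Statement11
end
end

section
/- Let f₁,…,f_d be Nash functions on an open set U ⊆ ℝ^d. Then for every a = (a₁,…,a_d) ∈ ℝ^d, the set of nondegenerate solutions {x ∈ U : f_i(x) = a_i for all i ∈ {1,…,d} and det(∂f_i/∂x^j(x))_{i,j=1}^d ≠ 0} is finite, with at most c(f₁) ⋯ c(f_d) elements. -/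
noncomputable section

open scoped BigOperators

namespace StatementTwelve

/-- `Φ` is an algebraic lifting map on `U` with annihilating polynomial map `p`. -/
def IsAlgLift (d M : ℕ) (U : Set (Fin d → ℝ)) (Φ : (Fin d → ℝ) → Fin M → ℝ)
    (p : Fin M → MvPolynomial (Fin d ⊕ Fin M) ℝ) : Prop :=
  AnalyticOnNhd ℝ Φ U ∧
  (∀ x ∈ U, ∀ j, MvPolynomial.eval (Sum.elim x (Φ x)) (p j) = 0) ∧
  (∀ V : Set (Fin d → ℝ), IsOpen V → V ⊆ U → V.Nonempty →
    ∃ x ∈ V, Matrix.det (Matrix.of fun j j' : Fin M =>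
      MvPolynomial.eval (Sum.elim x (Φ x)) (MvPolynomial.pderiv (Sum.inr j') (p j))) ≠ 0)

/-- `f` lifts to the polynomial `F` via the algebraic lifting map `Φ` with
annihilating map `p`. -/
def IsNashRep (d M : ℕ) (U : Set (Fin d → ℝ)) (f : (Fin d → ℝ) → ℝ)
    (Φ : (Fin d → ℝ) → Fin M → ℝ)
    (p : Fin M → MvPolynomial (Fin d ⊕ Fin M) ℝ)
    (F : MvPolynomial (Fin d ⊕ Fin M) ℝ) : Prop :=
  IsAlgLift d M U Φ p ∧ ∀ x ∈ U, f x = MvPolynomial.eval (Sum.elim x (Φ x)) F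

/-- `f` is a Nash function on `U`. -/
def IsNash (d : ℕ) (U : Set (Fin d → ℝ)) (f : (Fin d → ℝ) → ℝ) : Prop :=
  ∃ (M : ℕ) (Φ : (Fin d → ℝ) → Fin M → ℝ)
    (p : Fin M → MvPolynomial (Fin d ⊕ Fin M) ℝ)
    (F : MvPolynomial (Fin d ⊕ Fin M) ℝ), IsNashRep d M U f Φ p F

open Classical in
/-- The complexity of a Nash function: the minimum of `deg F · deg p¹ ⋯ deg p^M`
over all representations; the zero function has complexity `0`. -/
def complexity (d : ℕ) (U : Set (Fin d → ℝ)) (f : (Fin d → ℝ) → ℝ) : ℕ :=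
  if ∀ x ∈ U, f x = 0 then 0
  else sInf { c : ℕ | ∃ (M : ℕ) (Φ : (Fin d → ℝ) → Fin M → ℝ)
    (p : Fin M → MvPolynomial (Fin d ⊕ Fin M) ℝ)
    (F : MvPolynomial (Fin d ⊕ Fin M) ℝ), IsNashRep d M U f Φ p F ∧
    c = F.totalDegree * ∏ j, (p j).totalDegree }

/-!
Collecting the lifting maps of all `f i` into one map `Φ` with annihilating map `p`, write
`f i x = F i (x, Φ x)`. A solution of `f = a` lifts to the zero `(x, Φ x)` of the square polynomial
system `F = a`, `p = 0`, whose Jacobian determinant there is `det (Df x) * det (D_y p (x, Φ x))`.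
The second factor may vanish at a solution, but it does not vanish on a dense open set, and
nondegenerate solutions persist when `a` is perturbed to a generic value, where they can be taken
in that set. So Bézout's bound for nondegenerate zeros of the polynomial system gives the theorem.

For Bézout's bound, deform the polynomials `P i` of degree at most `e i` to `P i + ε * X i ^ e i`.
There is a linear operator `N`, independent of `ε`, which does not raise degrees and sends every `q`
to `-ε * q` up to a combination of monomials from the box `m i < e i` and an element of the deformed
ideal. For all but finitely many `ε` the operator `N + ε` is invertible on polynomials of bounded
degree, so the box monomials span the quotient ring and the deformed system has at most `∏ i, e i`
zeros. By the implicit function theorem each nondegenerate zero of `P` persists for small `ε`.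
-/

section DiagonalDeformation

open MvPolynomial Filter

theorem eventually_cofinite_surjective_add_smul_id {K V : Type*} [Field K] [AddCommGroup V]
    [Module K V] [FiniteDimensional K V] (N : Module.End K V) :
    ∀ᶠ ε : K in cofinite, Function.Surjective (N + ε • (1 : Module.End K V)) := by
  have hfin : {ε : K | N.HasEigenvalue (-ε)}.Finite :=
    N.finite_hasEigenvalue.preimage neg_injective.injOn
  filter_upwards [hfin.eventually_cofinite_notMem] with ε hε
  refine LinearMap.injective_iff_surjective.1 ((injective_iff_map_eq_zero _).2 fun v hv => ?_)
  by_contra hne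
  refine hε (Module.End.hasEigenvalue_of_hasEigenvector (x := v) ⟨?_, hne⟩)
  rw [Module.End.mem_genEigenspace_one, neg_smul]
  exact eq_neg_of_add_eq_zero_left hv

variable {ι : Type*}

/-- The exponents `m` with `m i < e i` for every `i`. -/
def boxExponents (e : ι → ℕ) : Set (ι →₀ ℕ) := {m | ∀ i, m i < e i}

theorem encard_boxExponents [Fintype ι] (e : ι → ℕ) :
    (boxExponents e).encard = ((∏ i, e i : ℕ) : ℕ∞) := by
  classical
  have himage : Finsupp.equivFunOnFinite '' boxExponents e =
      Fintype.piFinset fun i => Finset.range (e i) := by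
    ext m
    simp [Equiv.image_eq_preimage_symm, boxExponents]
  rw [← Finsupp.equivFunOnFinite.injective.encard_image, himage, Set.encard_coe_eq_coe_finsetCard]
  simp

/-- The polynomials of degree less than `e i` in each variable `X i`. -/
def boxPolynomials (R : Type*) [CommSemiring R] (e : ι → ℕ) : Submodule R (MvPolynomial ι R) :=
  restrictSupport R (boxExponents e)

variable {R : Type*} [CommSemiring R]

instance [Finite ι] (e : ι → ℕ) : Module.Finite R (boxPolynomials R e) := by
  cases nonempty_fintype ι
  have : Finite (boxExponents e) :=
    Set.finite_of_encard_eq_coe (encard_boxExponents e)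
  exact Module.Finite.of_basis (basisRestrictSupport R (boxExponents e))

theorem finrank_boxPolynomials [StrongRankCondition R] [Fintype ι] (e : ι → ℕ) :
    Module.finrank R (boxPolynomials R e) = ∏ i, e i := by
  rw [boxPolynomials, Module.finrank_eq_nat_card_basis (basisRestrictSupport R (boxExponents e)),
    Nat.card_coe_set_eq, Set.ncard, encard_boxExponents, ENat.toNat_natCast]

theorem boxPolynomials_le_restrictTotalDegree [Fintype ι] (e : ι → ℕ) :
    boxPolynomials R e ≤ restrictTotalDegree ι R (∑ i, e i) :=
  restrictSupport_mono R fun m hm => by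
    rw [Set.mem_ofPred_eq, Finsupp.sum_fintype _ _ fun _ => rfl]
    exact Finset.sum_le_sum fun i _ => (hm i).le

variable (P : ι → MvPolynomial ι R) (e : ι → ℕ)

/-- The deformation `Pᵢ + ε Xᵢ ^ eᵢ` of the polynomial system `P`. When `eᵢ` bounds the total
degree of `Pᵢ`, it makes the quotient ring finite-dimensional for all but finitely many `ε`. -/
def diagonalDeformation (ε : R) (i : ι) : MvPolynomial ι R := P i + C ε * X i ^ e i

/-- The ideal of the deformed system `diagonalDeformation P e ε`. -/
def deformationIdeal (ε : R) : Ideal (MvPolynomial ι R) :=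
  Ideal.span (Set.range (diagonalDeformation P e ε))

variable {P e}

theorem exists_monomial_reduction (hP : ∀ i, (P i).totalDegree ≤ e i) (m : ι →₀ ℕ) :
    ∃ r : MvPolynomial ι R, r.totalDegree ≤ m.degree ∧ ∀ ε : R, r + ε • monomial m 1 ∈
      boxPolynomials R e ⊔ (deformationIdeal P e ε).restrictScalars R := by
  by_cases hm : m ∈ boxExponents e
  · refine ⟨0, by simp, fun ε => Submodule.mem_sup_left ?_⟩
    rw [zero_add]
    exact Submodule.smul_mem _ ε ((monomial_mem_restrictSupport R).2 (.inl hm))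
  · obtain ⟨i, hi⟩ : ∃ i, e i ≤ m i := by simpa [boxExponents] using hm
    obtain ⟨n, rfl⟩ : ∃ n, m = n + Finsupp.single i (e i) :=
      ⟨_, (tsub_add_cancel_of_le (Finsupp.single_le_iff.2 hi)).symm⟩
    refine ⟨monomial n 1 * P i, ?_, fun ε => Submodule.mem_sup_right ?_⟩
    · calc (monomial n 1 * P i).totalDegree
          ≤ (monomial n (1 : R)).totalDegree + (P i).totalDegree := totalDegree_mul _ _
        _ ≤ n.degree + e i := add_le_add (totalDegree_monomial_le _ _) (hP i)
        _ = (n + Finsupp.single i (e i)).degree := by simp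
    · have hfactor : monomial n 1 * P i + ε • monomial (n + Finsupp.single i (e i)) 1 =
          monomial n 1 * diagonalDeformation P e ε i := by
        rw [monomial_add_single, diagonalDeformation, smul_eq_C_mul]
        ring
      rw [hfactor]
      exact Ideal.mul_mem_left _ _ (Ideal.subset_span ⟨i, rfl⟩)

theorem exists_linear_reduction (hP : ∀ i, (P i).totalDegree ≤ e i) :
    ∃ N : Module.End R (MvPolynomial ι R),
      (∀ D, ∀ q ∈ restrictTotalDegree ι R D, N q ∈ restrictTotalDegree ι R D) ∧
      ∀ ε q, N q + ε • q ∈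
        boxPolynomials R e ⊔ (deformationIdeal P e ε).restrictScalars R := by
  choose r hrdeg hr using exists_monomial_reduction hP
  let N := (basisMonomials ι R).constr R r
  have hN (m : ι →₀ ℕ) : N (monomial m 1) = r m := by
    simpa using (basisMonomials ι R).constr_basis R r m
  refine ⟨N, fun D => ?_, fun ε q => ?_⟩
  · change restrictTotalDegree ι R D ≤ (restrictTotalDegree ι R D).comap N
    conv_lhs => rw [restrictTotalDegree, restrictSupport_eq_span]
    rw [Submodule.span_le]
    rintro _ ⟨m, hm, rfl⟩
    rw [SetLike.mem_coe, Submodule.mem_comap, hN, mem_restrictTotalDegree]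
    exact (hrdeg m).trans hm
  · induction q using MvPolynomial.induction_on' with
    | monomial m c =>
      have hmonomial : monomial m c = c • monomial m 1 := by
        rw [smul_monomial, smul_eq_mul, mul_one]
      rw [hmonomial, map_smul, hN, smul_comm ε c, ← smul_add]
      exact Submodule.smul_mem _ c (hr m ε)
    | add p q hp hq =>
      rw [map_add, smul_add, add_add_add_comm]
      exact add_mem hp hq

variable {K : Type*} [Field K] {P : ι → MvPolynomial ι K} {e : ι → ℕ}

theorem encard_zeroLocus_le_finrank (I : Ideal (MvPolynomial ι K))
    [Module.Finite K (MvPolynomial ι K ⧸ I)] :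
    (zeroLocus K I).encard ≤ Module.finrank K (MvPolynomial ι K ⧸ I) := by
  let evalHom (z : zeroLocus K I) : (MvPolynomial ι K ⧸ I) →ₐ[K] K :=
    Ideal.Quotient.liftₐ I (aeval z.1) z.2
  have hinj : Function.Injective evalHom := fun z w h => by
    ext i
    have hX : aeval z.1 (X i) = aeval w.1 (X i) := DFunLike.congr_fun h (Ideal.Quotient.mk I (X i))
    simpa using hX
  calc (zeroLocus K I).encard = ENat.card (zeroLocus K I) := rfl
    _ ≤ ENat.card ((MvPolynomial ι K ⧸ I) →ₐ[K] K) := ENat.card_le_card_of_injective hinj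
    _ = Nat.card ((MvPolynomial ι K ⧸ I) →ₐ[K] K) := ENat.card_eq_coe_natCard _
    _ ≤ Module.finrank K (MvPolynomial ι K ⧸ I) := by
      exact_mod_cast card_algHom_le_finrank K (MvPolynomial ι K ⧸ I) K

theorem encard_zeroLocus_le_finrank_of_sup_eq_top {I : Ideal (MvPolynomial ι K)}
    (V : Submodule K (MvPolynomial ι K)) [FiniteDimensional K V]
    (h : V ⊔ I.restrictScalars K = ⊤) :
    (zeroLocus K I).encard ≤ Module.finrank K V := by
  let π : V →ₗ[K] MvPolynomial ι K ⧸ I := (Ideal.Quotient.mkₐ K I).toLinearMap ∘ₗ V.subtype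
  have hπ : Function.Surjective π := by
    intro q
    obtain ⟨q, rfl⟩ := Ideal.Quotient.mk_surjective q
    obtain ⟨v, hv, g, hg, rfl⟩ := Submodule.mem_sup.1 (h ▸ Submodule.mem_top : q ∈ _)
    refine ⟨⟨v, hv⟩, Ideal.Quotient.eq.2 ?_⟩
    simpa using hg
  have := Module.Finite.of_surjective π hπ
  exact (encard_zeroLocus_le_finrank I).trans
    (by exact_mod_cast LinearMap.finrank_le_finrank_of_surjective hπ)

theorem eventually_restrictTotalDegree_le_sup [Finite ι]
    (hP : ∀ i, (P i).totalDegree ≤ e i) (D : ℕ) :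
    ∀ᶠ ε : K in cofinite, restrictTotalDegree ι K D ≤
      boxPolynomials K e ⊔ (deformationIdeal P e ε).restrictScalars K := by
  obtain ⟨N, hND, hN⟩ := exists_linear_reduction hP
  have : FiniteDimensional K (restrictTotalDegree ι K D) := inferInstance
  filter_upwards [eventually_cofinite_surjective_add_smul_id (N.restrict (hND D))]
    with ε hε q hq
  obtain ⟨q', hq'⟩ := hε ⟨q, hq⟩
  obtain rfl : N q' + ε • (q' : MvPolynomial ι K) = q := congrArg Subtype.val hq'
  exact hN ε q'

theorem eventually_boxPolynomials_sup_eq_top [Finite ι] (hP : ∀ i, (P i).totalDegree ≤ e i) :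
    ∀ᶠ ε : K in cofinite,
      boxPolynomials K e ⊔ (deformationIdeal P e ε).restrictScalars K = ⊤ := by
  cases nonempty_fintype ι
  filter_upwards [eventually_restrictTotalDegree_le_sup hP (∑ i, e i + 1)] with ε hε
  refine eq_top_iff.2 fun q _ => ?_
  induction q using MvPolynomial.induction_on with
  | C a => exact hε (by simp [mem_restrictTotalDegree])
  | add p q hp hq => exact add_mem (hp trivial) (hq trivial)
  | mul_X q j hq =>
    obtain ⟨b, hb, g, hg, rfl⟩ := Submodule.mem_sup.1 (hq trivial)
    rw [add_mul]
    refine add_mem (hε ?_) (Submodule.mem_sup_right (Ideal.mul_mem_right (X j) _ hg))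
    rw [mem_restrictTotalDegree]
    calc (b * X j).totalDegree ≤ b.totalDegree + (X j : MvPolynomial ι K).totalDegree :=
          totalDegree_mul _ _
      _ ≤ ∑ i, e i + 1 := add_le_add
          ((mem_restrictTotalDegree _ _ _).1 (boxPolynomials_le_restrictTotalDegree e hb))
          (totalDegree_X j).le

theorem eventually_encard_zeros_diagonalDeformation_le [Fintype ι]
    (hP : ∀ i, (P i).totalDegree ≤ e i) :
    ∀ᶠ ε : K in cofinite,
      {z | ∀ i, eval z (diagonalDeformation P e ε i) = 0}.encard ≤ ∏ i, e i := by
  filter_upwards [eventually_boxPolynomials_sup_eq_top hP] with ε hε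
  have hzeros : {z | ∀ i, eval z (diagonalDeformation P e ε i) = 0} =
      zeroLocus K (deformationIdeal P e ε) := by
    ext z
    simp [deformationIdeal, zeroLocus_span, aeval_eq_eval]
  rw [hzeros, ← finrank_boxPolynomials (R := K)]
  exact encard_zeroLocus_le_finrank_of_sup_eq_top _ hε

end DiagonalDeformation

section GenericPoints

open Filter Topology

variable {X : Type*} [TopologicalSpace X]

theorem encard_le_of_eventually_nonempty_inter [T2Space X] {T : Type*} {l : Filter T} [l.NeBot]
    {S : T → Set X} {Z : Set X} {n : ℕ}
    (hZ : ∀ z ∈ Z, ∀ V ∈ 𝓝 z, ∀ᶠ t in l, (V ∩ S t).Nonempty)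
    (hS : ∀ᶠ t in l, (S t).encard ≤ n) : Z.encard ≤ n := by
  by_contra! hlt
  obtain ⟨Y, hYZ, hY⟩ := Set.exists_subset_encard_eq (Order.add_one_le_of_lt hlt)
  have hYfin : Y.Finite := Set.finite_of_encard_eq_coe (k := n + 1) (by simpa using hY)
  obtain ⟨V, hV, hdisj⟩ := hYfin.t2_separation
  have hmeet : ∀ᶠ t in l, ∀ y ∈ Y, (V y ∩ S t).Nonempty :=
    (eventually_all_finite hYfin).2 fun y hy => hZ y (hYZ hy) _ ((hV y).2.mem_nhds (hV y).1)
  obtain ⟨t, ht, htn⟩ := (hmeet.and hS).exists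
  choose! s hs using ht
  have hinj : Y.InjOn s := fun y hy z hz hyz => hdisj.eq hy hz
    (Set.not_disjoint_iff.2 ⟨s y, (hs y hy).1, hyz ▸ (hs z hz).1⟩)
  have hle : Y.encard ≤ n :=
    (Set.encard_le_encard_of_injOn (fun y hy => (hs y hy).2) hinj).trans htn
  rw [hY] at hle
  exact (ENat.add_one_le_iff (ENat.natCast_ne_top n)).1 hle |>.false

theorem eventually_nhds_inf_residual_mem {A : Set X} (hA : IsOpen A) {a : X}
    (ha : closure A ∈ 𝓝 a) : ∀ᶠ b in 𝓝 a ⊓ residual X, b ∈ A := by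
  have hcoborder : coborder A ∈ residual X :=
    residual_of_dense_open hA.isLocallyClosed.isOpen_coborder dense_coborder
  filter_upwards [inter_mem_inf ha hcoborder] with b ⟨hb, hb'⟩
  by_contra hbA
  exact hb' ⟨hb, hbA⟩

instance nhds_inf_residual_neBot [BaireSpace X] (a : X) : (𝓝 a ⊓ residual X).NeBot :=
  inf_neBot_iff.2 fun {_} hs {_} ht => by
    rw [Set.inter_comm]
    exact (dense_of_mem_residual ht).inter_nhds_nonempty hs

theorem subset_closure_inter {U A B : Set X} (hU : IsOpen U) (hA : IsOpen A)
    (hUA : U ⊆ closure A) (hUB : U ⊆ closure B) : U ⊆ closure (A ∩ B) :=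
  calc U = U ∩ closure A := (Set.inter_eq_left.2 hUA).symm
    _ ⊆ closure (U ∩ A) := hU.inter_closure
    _ ⊆ closure (A ∩ closure B) := closure_mono fun _ hx => ⟨hx.2, hUB hx.1⟩
    _ ⊆ closure (A ∩ B) := closure_minimal hA.inter_closure isClosed_closure

theorem subset_closure_iInter {α : Type*} [Finite α] {U : Set X} (hU : IsOpen U)
    {A : α → Set X} (hA : ∀ i, IsOpen (A i)) (hUA : ∀ i, U ⊆ closure (A i)) :
    U ⊆ closure (⋂ i, A i) := by
  classical
  cases nonempty_fintype α
  suffices h : ∀ s : Finset α, U ⊆ closure (⋂ i ∈ s, A i) by simpa using h Finset.univ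
  intro s
  induction s using Finset.induction_on with
  | empty => simp
  | insert i s _ ih =>
    rw [Finset.set_biInter_insert]
    exact subset_closure_inter hU (hA i) (hUA i) ih

end GenericPoints

open MvPolynomial in
theorem hasFDerivAt_eval {𝕜 ι : Type*} [NontriviallyNormedField 𝕜] [Fintype ι]
    (p : MvPolynomial ι 𝕜) (z : ι → 𝕜) :
    HasFDerivAt (fun y : ι → 𝕜 => eval y p)
      (∑ j, eval z (pderiv j p) • ContinuousLinearMap.proj (R := 𝕜) (φ := fun _ => 𝕜) j) z := by
  classical
  induction p using MvPolynomial.induction_on with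
  | C a =>
    simp only [eval_C, pderiv_C, map_zero]
    exact (hasFDerivAt_const a z).congr_fderiv (by ext; simp)
  | add p q hp hq =>
    simp only [map_add]
    refine (hp.fun_add hq).congr_fderiv ?_
    ext v
    simp [add_mul, Finset.sum_add_distrib]
  | mul_X p k hp =>
    simp only [map_mul, eval_X]
    refine (hp.fun_mul (hasFDerivAt_apply k z)).congr_fderiv ?_
    ext v
    simp [add_mul, Finset.sum_add_distrib, pderiv_X, Pi.single_apply, Finset.mul_sum, mul_assoc,
      apply_ite]

section Jacobian

open MvPolynomial Topology

variable {𝕜 ι κ : Type*} [NontriviallyNormedField 𝕜] [DecidableEq ι]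

/-- The Jacobian matrix `∂fᵢ/∂xⱼ` at `x` of a family of functions of the variables `ι`. Entries are
derivatives of the components, so the `i`-th row is zero where `f i` is not differentiable. -/
def jacobian (f : κ → (ι → 𝕜) → 𝕜) (x : ι → 𝕜) : Matrix κ ι 𝕜 :=
  Matrix.of fun i j => fderiv 𝕜 (f i) x (Pi.single j 1)

theorem toMatrix'_fderiv [Fintype ι] [Finite κ] {f : κ → (ι → 𝕜) → 𝕜} {x : ι → 𝕜}
    (hf : ∀ i, DifferentiableAt 𝕜 (f i) x) :
    LinearMap.toMatrix' (fderiv 𝕜 (fun y i => f i y) x : (ι → 𝕜) →ₗ[𝕜] κ → 𝕜) =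
      jacobian f x := by
  cases nonempty_fintype κ
  ext i j
  simp [jacobian, fderiv_pi hf, LinearMap.toMatrix'_apply]

theorem jacobian_comp [Finite ι] [Fintype κ] [DecidableEq κ] {ρ : Type*} [Finite ρ]
    {g : ρ → (κ → 𝕜) → 𝕜} {φ : κ → (ι → 𝕜) → 𝕜} {x : ι → 𝕜}
    (hg : ∀ i, DifferentiableAt 𝕜 (g i) fun k => φ k x)
    (hφ : ∀ k, DifferentiableAt 𝕜 (φ k) x) :
    jacobian (fun i y => g i fun k => φ k y) x =
      jacobian g (fun k => φ k x) * jacobian φ x := by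
  cases nonempty_fintype ι
  cases nonempty_fintype ρ
  have hφ' : DifferentiableAt 𝕜 (fun y k => φ k y) x := differentiableAt_pi.2 hφ
  have hcomp : fderiv 𝕜 (fun y i => g i fun k => φ k y) x =
      fderiv 𝕜 (fun y i => g i y) (fun k => φ k x) ∘L fderiv 𝕜 (fun y k => φ k y) x :=
    fderiv_comp (g := fun y i => g i y) x (differentiableAt_pi.2 hg) hφ'
  rw [← toMatrix'_fderiv (f := fun i y => g i fun k => φ k y) fun i => (hg i).comp x hφ',
    ← toMatrix'_fderiv hg, ← toMatrix'_fderiv hφ, ← LinearMap.toMatrix'_comp,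
    ← ContinuousLinearMap.toLinearMap_comp, ← hcomp]

theorem jacobian_eval [Finite ι] (P : κ → MvPolynomial ι 𝕜) (z : ι → 𝕜) :
    jacobian (fun i y => eval y (P i)) z = Matrix.of fun i j => eval z (pderiv j (P i)) := by
  cases nonempty_fintype ι
  ext i j
  simp [jacobian, (hasFDerivAt_eval (P i) z).fderiv, Pi.single_apply]

variable [Fintype ι]

theorem isInvertible_fderiv_of_det_jacobian_ne_zero [CompleteSpace 𝕜] {f : ι → (ι → 𝕜) → 𝕜}
    {x : ι → 𝕜} (hf : ∀ i, DifferentiableAt 𝕜 (f i) x) (hdet : (jacobian f x).det ≠ 0) :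
    (fderiv 𝕜 (fun y i => f i y) x).IsInvertible := by
  rw [← toMatrix'_fderiv hf, LinearMap.det_toMatrix'] at hdet
  exact ⟨_, ContinuousLinearMap.coe_toContinuousLinearEquivOfDetNeZero _ hdet⟩

/-- The nondegenerate solutions in `U` of the system `fᵢ(x) = aᵢ`. -/
def nondegenerateFiber (U : Set (ι → 𝕜)) (f : ι → (ι → 𝕜) → 𝕜) (a : ι → 𝕜) : Set (ι → 𝕜) :=
  {x | x ∈ U ∧ (∀ i, f i x = a i) ∧ (jacobian f x).det ≠ 0}

variable {U : Set (ι → 𝕜)} {f g : ι → (ι → 𝕜) → 𝕜}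

theorem nondegenerateFiber_subset_of_eqOn (hU : IsOpen U) (h : ∀ i, Set.EqOn (f i) (g i) U)
    (a : ι → 𝕜) : nondegenerateFiber U f a ⊆ nondegenerateFiber U g a := by
  rintro x ⟨hxU, hxa, hdet⟩
  have hjacobian : jacobian f x = jacobian g x := by
    ext i j
    simp [jacobian, ((h i).eventuallyEq_of_mem (hU.mem_nhds hxU)).fderiv_eq]
  exact ⟨hxU, fun i => (h i hxU).symm.trans (hxa i), hjacobian ▸ hdet⟩

theorem nondegenerateFiber_eq_empty_of_eqOn_zero (hU : IsOpen U) {i : ι}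
    (h : Set.EqOn (f i) 0 U) (a : ι → 𝕜) : nondegenerateFiber U f a = ∅ := by
  refine Set.eq_empty_of_forall_notMem fun x ⟨hxU, _, hdet⟩ =>
    hdet (Matrix.det_eq_zero_of_row_eq_zero i fun j => ?_)
  simp [jacobian, (h.eventuallyEq_of_mem (hU.mem_nhds hxU)).fderiv_eq]

end Jacobian

section Bezout

open Filter MvPolynomial Topology

variable {𝕜 : Type*} [NontriviallyNormedField 𝕜]

theorem eventually_nonempty_inter_fiber {E₁ E₂ F : Type*}
    [NormedAddCommGroup E₁] [NormedSpace 𝕜 E₁] [CompleteSpace E₁]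
    [NormedAddCommGroup E₂] [NormedSpace 𝕜 E₂] [CompleteSpace E₂]
    [NormedAddCommGroup F] [NormedSpace 𝕜 F] [CompleteSpace F]
    {G : E₁ × E₂ → F} {G' : E₁ × E₂ →L[𝕜] F} {t : E₁} {z : E₂}
    (hG : HasStrictFDerivAt G G' (t, z))
    (hinv : (fderiv 𝕜 (fun y => G (t, y)) z).IsInvertible) {V : Set E₂} (hV : V ∈ 𝓝 z) :
    ∀ᶠ s in 𝓝 t, (V ∩ {y | G (s, y) = G (t, z)}).Nonempty := by
  have hpartial : HasFDerivAt (fun y => G (t, y)) (G' ∘L .inr 𝕜 E₁ E₂) z :=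
    hG.hasFDerivAt.comp z (hasFDerivAt_prodMk_right t z)
  rw [hpartial.fderiv] at hinv
  filter_upwards [hG.tendsto_implicitFunctionOfProdDomain hinv hV,
    hG.eventually_apply_implicitFunctionOfProdDomain hinv] with s hs hs'
  exact ⟨_, hs, hs'⟩

variable {ι : Type*} [Fintype ι] [DecidableEq ι]

theorem eventually_nonempty_inter_zeros_diagonalDeformation [CompleteSpace 𝕜]
    {P : ι → MvPolynomial ι 𝕜} (e : ι → ℕ) {z : ι → 𝕜}
    (hz : z ∈ nondegenerateFiber Set.univ (fun i y => eval y (P i)) 0) {V : Set (ι → 𝕜)}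
    (hV : V ∈ 𝓝 z) :
    ∀ᶠ ε in 𝓝 0, (V ∩ {y | ∀ i, eval y (diagonalDeformation P e ε i) = 0}).Nonempty := by
  let G (w : 𝕜 × (ι → 𝕜)) (i : ι) : 𝕜 := eval w.2 (diagonalDeformation P e w.1 i)
  have hG (w : 𝕜 × (ι → 𝕜)) : AnalyticAt 𝕜 G w := by
    refine analyticAt_pi_iff.2 fun i => ?_
    have hcoord (j : ι) : AnalyticAt 𝕜 (fun w : 𝕜 × (ι → 𝕜) => w.2 j) w :=
      ((ContinuousLinearMap.proj j).comp (.snd 𝕜 𝕜 (ι → 𝕜))).analyticAt w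
    simp only [diagonalDeformation, map_add, map_mul, map_pow, eval_C, eval_X]
    exact (AnalyticAt.aeval_mvPolynomial hcoord (P i)).add
      (analyticAt_fst.mul ((hcoord i).pow (e i)))
  have hG_zero : (fun y => G (0, y)) = fun y i => eval y (P i) := by
    simp [G, diagonalDeformation]
  obtain ⟨-, hPz, hdet⟩ := hz
  have hGz : G (0, z) = 0 := (congrFun hG_zero z).trans (funext hPz)
  have hinv : (fderiv 𝕜 (fun y => G (0, y)) z).IsInvertible := by
    rw [hG_zero]
    exact isInvertible_fderiv_of_det_jacobian_ne_zero
      (fun i => (hasFDerivAt_eval (P i) z).differentiableAt) hdet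
  filter_upwards [eventually_nonempty_inter_fiber (hG (0, z)).hasStrictFDerivAt hinv hV] with ε hε
  simpa [hGz, _root_.funext_iff, G] using hε

theorem encard_nondegenerateFiber_eval_le [CompleteSpace 𝕜] (P : ι → MvPolynomial ι 𝕜)
    (a : ι → 𝕜) :
    (nondegenerateFiber Set.univ (fun i y => eval y (P i)) a).encard ≤
      ∏ i, (P i).totalDegree := by
  let Q i := P i - C (a i)
  have hQ : ∀ i, (Q i).totalDegree ≤ (P i).totalDegree := fun i => totalDegree_sub_C_le _ _
  have hfiber : nondegenerateFiber Set.univ (fun i y => eval y (P i)) a =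
      nondegenerateFiber Set.univ (fun i y => eval y (Q i)) 0 := by
    ext z
    simp only [nondegenerateFiber, jacobian_eval]
    simp [Q, sub_eq_zero]
  rw [hfiber]
  exact encard_le_of_eventually_nonempty_inter (l := 𝓝[≠] 0)
    (fun z hz V hV => nhdsWithin_le_nhds
      (eventually_nonempty_inter_zeros_diagonalDeformation _ hz hV))
    ((eventually_encard_zeros_diagonalDeformation_le hQ).filter_mono (nhdsNE_le_cofinite 0))

end Bezout

section GenericValues

open Filter Topology

variable {𝕜 ι : Type*} [NontriviallyNormedField 𝕜] [CompleteSpace 𝕜] [Fintype ι] [DecidableEq ι]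
  {U G : Set (ι → 𝕜)} {f : ι → (ι → 𝕜) → 𝕜}

theorem isOpen_setOf_det_jacobian_ne_zero (hU : IsOpen U) (hf : ∀ i, AnalyticOnNhd 𝕜 (f i) U) :
    IsOpen {x | x ∈ U ∧ (jacobian f x).det ≠ 0} := by
  have hcont : ContinuousOn (fun x => (jacobian f x).det) U :=
    continuous_id.matrix_det.comp_continuousOn <| continuousOn_pi.2 fun i =>
      continuousOn_pi.2 fun j => (hf i).fderiv.continuousOn.clm_apply continuousOn_const
  exact hcont.isOpen_inter_preimage hU isOpen_compl_singleton

theorem map_nhds_eq_of_det_jacobian_ne_zero {x : ι → 𝕜} (hf : ∀ i, AnalyticAt 𝕜 (f i) x)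
    (hdet : (jacobian f x).det ≠ 0) :
    map (fun y i => f i y) (𝓝 x) = 𝓝 fun i => f i x := by
  obtain ⟨f', hf'⟩ := isInvertible_fderiv_of_det_jacobian_ne_zero
    (fun i => (hf i).differentiableAt) hdet
  refine (analyticAt_pi_iff.2 hf).hasStrictFDerivAt.map_nhds_eq_of_surj ?_
  rw [← hf']
  exact LinearMap.range_eq_top.2 f'.surjective

/-- Perturb `a`: near each nondegenerate solution, a residual set of values is attained in `G`. -/
theorem encard_nondegenerateFiber_le_of_forall_inter (hU : IsOpen U)
    (hf : ∀ i, AnalyticOnNhd 𝕜 (f i) U) (hG : IsOpen G) (hUG : U ⊆ closure G) {n : ℕ}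
    (hn : ∀ b, (nondegenerateFiber U f b ∩ G).encard ≤ n) (a : ι → 𝕜) :
    (nondegenerateFiber U f a).encard ≤ n := by
  refine encard_le_of_eventually_nonempty_inter (l := 𝓝 a ⊓ residual (ι → 𝕜))
    (fun z ⟨hzU, hza, hzdet⟩ V hV => ?_) (.of_forall hn)
  let F (y : ι → 𝕜) (i : ι) : 𝕜 := f i y
  have hmap {x} (hx : x ∈ U ∧ (jacobian f x).det ≠ 0) : map F (𝓝 x) = 𝓝 (F x) :=
    map_nhds_eq_of_det_jacobian_ne_zero (fun i => hf i x hx.1) hx.2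
  let O := interior V ∩ {x | x ∈ U ∧ (jacobian f x).det ≠ 0}
  have hO : IsOpen O := isOpen_interior.inter (isOpen_setOf_det_jacobian_ne_zero hU hf)
  have hopen : IsOpen (F '' (O ∩ G)) := by
    refine isOpen_iff_mem_nhds.2 ?_
    rintro _ ⟨x, hx, rfl⟩
    rw [← hmap hx.1.2]
    exact image_mem_map ((hO.inter hG).mem_nhds hx)
  have hclosure : closure (F '' (O ∩ G)) ∈ 𝓝 a := by
    obtain rfl : F z = a := funext hza
    rw [← hmap ⟨hzU, hzdet⟩]
    filter_upwards [image_mem_map (hO.mem_nhds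
      ⟨mem_interior_iff_mem_nhds.2 hV, hzU, hzdet⟩)]
    rintro _ ⟨x, hx, rfl⟩
    have hFx : ContinuousAt F x := (hmap hx.2).le
    exact mem_closure_image hFx (hO.inter_closure ⟨hx, hUG hx.2.1⟩)
  filter_upwards [eventually_nhds_inf_residual_mem hopen hclosure]
  rintro _ ⟨x, ⟨⟨hxV, hxU, hxdet⟩, hxG⟩, rfl⟩
  exact ⟨x, interior_subset hxV, ⟨hxU, fun _ => rfl, hxdet⟩, hxG⟩

end GenericValues

section Lifting

open MvPolynomial Topology

theorem det_eq_det_mul_det_toBlocks₂₂ {m n R : Type*} [Fintype m] [DecidableEq m] [Fintype n]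
    [DecidableEq n] [CommRing R] {J : Matrix (m ⊕ n) (m ⊕ n) R} {X : Matrix n m R}
    {A : Matrix m m R} (h : J * Matrix.fromRows (1 : Matrix m m R) X = Matrix.fromRows A 0) :
    J.det = A.det * J.toBlocks₂₂.det := by
  have hJ : J * Matrix.fromBlocks 1 0 X 1 =
      Matrix.fromBlocks A J.toBlocks₁₂ 0 J.toBlocks₂₂ := by
    have h₁ : J * Matrix.fromRows (0 : Matrix m n R) (1 : Matrix n n R) =
        Matrix.fromRows J.toBlocks₁₂ J.toBlocks₂₂ := by
      nth_rw 1 [← Matrix.fromBlocks_toBlocks J]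
      simp [Matrix.fromBlocks_mul_fromRows]
    rw [← Matrix.fromCols_fromRows_eq_fromBlocks, Matrix.mul_fromCols, h, h₁,
      Matrix.fromCols_fromRows_eq_fromBlocks]
  calc J.det = (J * Matrix.fromBlocks 1 0 X 1).det := by simp
    _ = A.det * J.toBlocks₂₂.det := by rw [hJ, Matrix.det_fromBlocks_zero₂₁]

theorem det_blockDiagonal'_ne_zero {α K : Type*} [Fintype α] [DecidableEq α] [Field K]
    {κ : α → Type*} [∀ i, Fintype (κ i)] [∀ i, DecidableEq (κ i)]
    {M : ∀ i, Matrix (κ i) (κ i) K} (hM : ∀ i, (M i).det ≠ 0) :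
    (Matrix.blockDiagonal' M).det ≠ 0 := by
  have hunit : IsUnit M := Pi.isUnit_iff.2 fun i =>
    (Matrix.isUnit_iff_isUnit_det _).2 (hM i).isUnit
  exact ((Matrix.isUnit_iff_isUnit_det _).1 (hunit.map (Matrix.blockDiagonal'RingHom κ K))).ne_zero

/-- The matrix `D_y p` of partial derivatives of `p(x, y)` in the variables `y` indexed by `κ`. -/
def verticalJacobian {R ι κ : Type*} [CommSemiring R] (p : κ → MvPolynomial (ι ⊕ κ) R)
    (z : ι ⊕ κ → R) : Matrix κ κ R :=
  Matrix.of fun k l => eval z (pderiv (Sum.inr l) (p k))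

theorem verticalJacobian_sigma {R ι α : Type*} [CommSemiring R] [DecidableEq α]
    {κ : α → Type*} (p : ∀ i, κ i → MvPolynomial (ι ⊕ κ i) R) (z : ι ⊕ (Σ i, κ i) → R) :
    verticalJacobian (fun k : Σ i, κ i => rename (Sum.map id (Sigma.mk k.1)) (p k.1 k.2)) z =
      Matrix.blockDiagonal' fun i =>
        verticalJacobian (p i) (z ∘ Sum.map id (Sigma.mk i)) := by
  classical
  ext ⟨i, k⟩ ⟨j, l⟩
  obtain rfl | hij := eq_or_ne i j
  · have hinj : Function.Injective (Sum.map id (Sigma.mk i) : ι ⊕ κ i → ι ⊕ Σ i, κ i) :=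
      Function.injective_id.sumMap sigma_mk_injective
    rw [Matrix.blockDiagonal'_apply_eq, verticalJacobian, Matrix.of_apply,
      show Sum.inr ⟨i, l⟩ = Sum.map (id : ι → ι) (Sigma.mk i) (.inr l) from rfl,
      pderiv_rename hinj, eval_rename]
    rfl
  · rw [Matrix.blockDiagonal'_apply_ne _ _ _ hij, verticalJacobian, Matrix.of_apply,
      pderiv_eq_zero_of_notMem_vars, map_zero]
    intro hmem
    obtain ⟨s, -, hs⟩ := Finset.mem_image.1 (vars_rename _ _ hmem)
    cases s <;> simp_all

variable {𝕜 ι κ : Type*} [NontriviallyNormedField 𝕜]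

theorem jacobian_sumElim [DecidableEq ι] {Φ : (ι → 𝕜) → κ → 𝕜} {x : ι → 𝕜} :
    jacobian (fun s y => Sum.elim y (Φ y) s) x =
      Matrix.fromRows 1 (jacobian (fun k y => Φ y k) x) := by
  ext s j
  cases s with
  | inl i =>
    simp [jacobian, (hasFDerivAt_apply (𝕜 := 𝕜) i x).fderiv, Pi.single_apply, Matrix.one_apply]
  | inr k => rfl

variable [Fintype ι]

theorem analyticAt_sumElim_apply {Φ : (ι → 𝕜) → κ → 𝕜} {x : ι → 𝕜}
    (hΦ : ∀ k, AnalyticAt 𝕜 (fun y => Φ y k) x) (s : ι ⊕ κ) :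
    AnalyticAt 𝕜 (fun y => Sum.elim y (Φ y) s) x := by
  cases s with
  | inl i => exact (ContinuousLinearMap.proj (R := 𝕜) (φ := fun _ => 𝕜) i).analyticAt x
  | inr k => exact hΦ k

theorem det_jacobian_lift [DecidableEq ι] [Fintype κ] [DecidableEq κ] {Φ : (ι → 𝕜) → κ → 𝕜}
    {x : ι → 𝕜} {H : ι ⊕ κ → (ι ⊕ κ → 𝕜) → 𝕜} {f : ι → (ι → 𝕜) → 𝕜}
    (hΦ : ∀ k, AnalyticAt 𝕜 (fun y => Φ y k) x)
    (hH : ∀ s, DifferentiableAt 𝕜 (H s) (Sum.elim x (Φ x)))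
    (hf : ∀ i, (fun y => H (.inl i) (Sum.elim y (Φ y))) =ᶠ[𝓝 x] f i)
    (h0 : ∀ k, (fun y => H (.inr k) (Sum.elim y (Φ y))) =ᶠ[𝓝 x] 0) :
    (jacobian H (Sum.elim x (Φ x))).det =
      (jacobian f x).det * (jacobian H (Sum.elim x (Φ x))).toBlocks₂₂.det := by
  refine det_eq_det_mul_det_toBlocks₂₂ (X := jacobian (fun k y => Φ y k) x) ?_
  have hcomp := jacobian_comp (φ := fun s y => Sum.elim y (Φ y) s) hH
    fun s => (analyticAt_sumElim_apply hΦ s).differentiableAt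
  rw [← jacobian_sumElim, ← hcomp]
  ext (i | k) j
  · simp [jacobian, (hf i).fderiv_eq]
  · simp [jacobian, (h0 k).fderiv_eq]

/-- Algebraic lifting maps as in `IsAlgLift`, over an arbitrary nontrivially normed field and with
arbitrary finite index types, so that finitely many of them can be collected into one. -/
structure IsLiftingMap {𝕜 ι κ : Type*} [NontriviallyNormedField 𝕜] [Fintype ι] [Fintype κ]
    [DecidableEq κ] (U : Set (ι → 𝕜)) (Φ : (ι → 𝕜) → κ → 𝕜)
    (p : κ → MvPolynomial (ι ⊕ κ) 𝕜) : Prop where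
  analyticAt : ∀ x ∈ U, ∀ k, AnalyticAt 𝕜 (fun y => Φ y k) x
  eval_eq_zero : ∀ x ∈ U, ∀ k, eval (Sum.elim x (Φ x)) (p k) = 0
  subset_closure_det_ne_zero :
    U ⊆ closure {x | x ∈ U ∧ (verticalJacobian p (Sum.elim x (Φ x))).det ≠ 0}

namespace IsLiftingMap

variable [Fintype κ] [DecidableEq κ] {U : Set (ι → 𝕜)} {Φ : (ι → 𝕜) → κ → 𝕜}
  {p : κ → MvPolynomial (ι ⊕ κ) 𝕜}

theorem analyticOnNhd_eval (h : IsLiftingMap U Φ p) (q : MvPolynomial (ι ⊕ κ) 𝕜) :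
    AnalyticOnNhd 𝕜 (fun x => eval (Sum.elim x (Φ x)) q) U := fun x hx =>
  AnalyticAt.aeval_mvPolynomial (analyticAt_sumElim_apply (h.analyticAt x hx)) q

theorem isOpen_setOf_det_ne_zero (h : IsLiftingMap U Φ p) (hU : IsOpen U) :
    IsOpen {x | x ∈ U ∧ (verticalJacobian p (Sum.elim x (Φ x))).det ≠ 0} := by
  have hentry (k l : κ) :
      ContinuousOn (fun x => verticalJacobian p (Sum.elim x (Φ x)) k l) U :=
    (h.analyticOnNhd_eval (pderiv (Sum.inr l) (p k))).continuousOn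
  have hcont : ContinuousOn (fun x => (verticalJacobian p (Sum.elim x (Φ x))).det) U :=
    continuous_id.matrix_det.comp_continuousOn <|
      continuousOn_pi.2 fun k => continuousOn_pi.2 (hentry k)
  exact hcont.isOpen_inter_preimage hU isOpen_compl_singleton

theorem sigma {α : Type*} [Fintype α] [DecidableEq α] {κ : α → Type*} [∀ i, Fintype (κ i)]
    [∀ i, DecidableEq (κ i)] {Φ : ∀ i, (ι → 𝕜) → κ i → 𝕜}
    {p : ∀ i, κ i → MvPolynomial (ι ⊕ κ i) 𝕜} (hU : IsOpen U)
    (h : ∀ i, IsLiftingMap U (Φ i) (p i)) :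
    IsLiftingMap U (fun x (k : Σ i, κ i) => Φ k.1 x k.2)
      fun k => rename (Sum.map id (Sigma.mk k.1)) (p k.1 k.2) where
  analyticAt x hx k := (h k.1).analyticAt x hx k.2
  eval_eq_zero x hx k := by
    rw [eval_rename, Sum.elim_comp_map]
    exact (h k.1).eval_eq_zero x hx k.2
  subset_closure_det_ne_zero := by
    have hdense := subset_closure_inter hU hU subset_closure
      (subset_closure_iInter hU (fun i => (h i).isOpen_setOf_det_ne_zero hU)
        fun i => (h i).subset_closure_det_ne_zero)
    refine hdense.trans (closure_mono fun x ⟨hxU, hx⟩ => ⟨hxU, ?_⟩)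
    rw [verticalJacobian_sigma]
    refine det_blockDiagonal'_ne_zero fun i => ?_
    rw [Sum.elim_comp_map]
    exact (Set.mem_iInter.1 hx i).2

variable [DecidableEq ι]

theorem det_jacobian_eval (h : IsLiftingMap U Φ p) (hU : IsOpen U)
    (F : ι → MvPolynomial (ι ⊕ κ) 𝕜) {x : ι → 𝕜} (hx : x ∈ U) :
    (jacobian (fun s y => eval y (Sum.elim F p s)) (Sum.elim x (Φ x))).det =
      (jacobian (fun i y => eval (Sum.elim y (Φ y)) (F i)) x).det *
        (verticalJacobian p (Sum.elim x (Φ x))).det := by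
  rw [det_jacobian_lift (h.analyticAt x hx)
    (fun s => (hasFDerivAt_eval _ _).differentiableAt) (fun i => .rfl)
    (fun k => Filter.eventually_of_mem (hU.mem_nhds hx) fun y hy => h.eval_eq_zero y hy k),
    jacobian_eval]
  rfl

theorem encard_nondegenerateFiber_le [CompleteSpace 𝕜] (h : IsLiftingMap U Φ p) (hU : IsOpen U)
    (F : ι → MvPolynomial (ι ⊕ κ) 𝕜) (a : ι → 𝕜) :
    (nondegenerateFiber U (fun i x => eval (Sum.elim x (Φ x)) (F i)) a).encard ≤
      ((∏ i, (F i).totalDegree) * ∏ k, (p k).totalDegree : ℕ) := by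
  refine encard_nondegenerateFiber_le_of_forall_inter hU (fun i => h.analyticOnNhd_eval (F i))
    (h.isOpen_setOf_det_ne_zero hU) h.subset_closure_det_ne_zero (fun b => ?_) a
  let ζ (x : ι → 𝕜) : ι ⊕ κ → 𝕜 := Sum.elim x (Φ x)
  have hζ : Function.Injective ζ := fun x y hxy => congrArg (· ∘ Sum.inl) hxy
  refine (Set.encard_le_encard_of_injOn
    (t := nondegenerateFiber Set.univ (fun s y => eval y (Sum.elim F p s)) (Sum.elim b 0))
    ?_ hζ.injOn).trans ?_
  · rintro x ⟨⟨hxU, hxb, hxF⟩, -, hxp⟩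
    refine ⟨trivial, ?_, ?_⟩
    · rintro (i | k)
      exacts [hxb i, h.eval_eq_zero x hxU k]
    · rw [h.det_jacobian_eval hU F hxU]
      exact mul_ne_zero hxF hxp
  · simpa using encard_nondegenerateFiber_eval_le (Sum.elim F p) (Sum.elim b 0)

end IsLiftingMap

end Lifting

section Complexity

open MvPolynomial Filter

theorem isLiftingMap_of_isAlgLift {d M : ℕ} {U : Set (Fin d → ℝ)} {Φ : (Fin d → ℝ) → Fin M → ℝ}
    {p : Fin M → MvPolynomial (Fin d ⊕ Fin M) ℝ} (hU : IsOpen U) (h : IsAlgLift d M U Φ p) :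
    IsLiftingMap U Φ p where
  analyticAt x hx := analyticAt_pi_iff.1 (h.1 x hx)
  eval_eq_zero := h.2.1
  subset_closure_det_ne_zero x hx := mem_closure_iff.2 fun V hV hxV => by
    obtain ⟨y, ⟨hyV, hyU⟩, hy⟩ :=
      h.2.2 (V ∩ U) (hV.inter hU) Set.inter_subset_right ⟨x, hxV, hx⟩
    exact ⟨y, hyV, hyU, hy⟩

theorem encard_nondegenerateFiber_le_of_isNashRep {d : ℕ} {U : Set (Fin d → ℝ)}
    (hU : IsOpen U) {f : Fin d → (Fin d → ℝ) → ℝ} {M : Fin d → ℕ}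
    {Φ : ∀ i, (Fin d → ℝ) → Fin (M i) → ℝ}
    {p : ∀ i, Fin (M i) → MvPolynomial (Fin d ⊕ Fin (M i)) ℝ}
    {F : ∀ i, MvPolynomial (Fin d ⊕ Fin (M i)) ℝ}
    (h : ∀ i, IsNashRep d (M i) U (f i) (Φ i) (p i) (F i)) (a : Fin d → ℝ) :
    (nondegenerateFiber U f a).encard ≤
      (∏ i, ((F i).totalDegree * ∏ j, (p i j).totalDegree) : ℕ) := by
  let F' i := rename (Sum.map id (Sigma.mk i) : _ → Fin d ⊕ Σ i, Fin (M i)) (F i)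
  let Φ' (x : Fin d → ℝ) (k : Σ i, Fin (M i)) : ℝ := Φ k.1 x k.2
  let p' (k : Σ i, Fin (M i)) :=
    rename (Sum.map id (Sigma.mk k.1) : _ → Fin d ⊕ Σ i, Fin (M i)) (p k.1 k.2)
  have hlift : IsLiftingMap U Φ' p' :=
    IsLiftingMap.sigma hU fun i => isLiftingMap_of_isAlgLift hU (h i).1
  have hf (i : Fin d) : Set.EqOn (f i) (fun x => eval (Sum.elim x (Φ' x)) (F' i)) U := by
    intro x hx
    simp only [F', eval_rename, Sum.elim_comp_map]
    exact (h i).2 x hx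
  refine (Set.encard_le_encard (nondegenerateFiber_subset_of_eqOn hU hf a)).trans
    ((hlift.encard_nondegenerateFiber_le hU F' a).trans (Nat.cast_le.2 ?_))
  calc (∏ i, (F' i).totalDegree) * ∏ k, (p' k).totalDegree
      ≤ (∏ i, (F i).totalDegree) * ∏ k : Σ i, Fin (M i), (p k.1 k.2).totalDegree :=
        Nat.mul_le_mul (Finset.prod_le_prod' fun i _ => totalDegree_rename_le _ _)
          (Finset.prod_le_prod' fun k _ => totalDegree_rename_le _ _)
    _ = ∏ i, ((F i).totalDegree * ∏ j, (p i j).totalDegree) := by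
        rw [Fintype.prod_sigma, Finset.prod_mul_distrib]

theorem exists_isNashRep_complexity_eq {d : ℕ} {U : Set (Fin d → ℝ)} {f : (Fin d → ℝ) → ℝ}
    (hf : IsNash d U f) (h0 : ¬ Set.EqOn f 0 U) :
    ∃ (M : ℕ) (Φ : (Fin d → ℝ) → Fin M → ℝ) (p : Fin M → MvPolynomial (Fin d ⊕ Fin M) ℝ)
      (F : MvPolynomial (Fin d ⊕ Fin M) ℝ), IsNashRep d M U f Φ p F ∧
      complexity d U f = F.totalDegree * ∏ j, (p j).totalDegree := by
  obtain ⟨M, Φ, p, F, h⟩ := hf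
  have hne : ¬ ∀ x ∈ U, f x = 0 := fun h => h0 fun _ hx => h _ hx
  rw [complexity, if_neg hne]
  exact Nat.sInf_mem (s := {c | ∃ M Φ p F, IsNashRep d M U f Φ p F ∧
    c = F.totalDegree * ∏ j, (p j).totalDegree}) ⟨_, M, Φ, p, F, h, rfl⟩

theorem encard_nondegenerateFiber_le_prod_complexity {d : ℕ} {U : Set (Fin d → ℝ)}
    (hU : IsOpen U) {f : Fin d → (Fin d → ℝ) → ℝ} (hf : ∀ i, IsNash d U (f i))
    (a : Fin d → ℝ) :
    (nondegenerateFiber U f a).encard ≤ (∏ i, complexity d U (f i) : ℕ) := by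
  by_cases h0 : ∃ i, Set.EqOn (f i) 0 U
  · obtain ⟨i, hi⟩ := h0
    simp [nondegenerateFiber_eq_empty_of_eqOn_zero hU hi]
  · choose M Φ p F hrep hcomplexity using
      fun i => exists_isNashRep_complexity_eq (hf i) (not_exists.1 h0 i)
    simpa only [hcomplexity] using encard_nondegenerateFiber_le_of_isNashRep hU hrep a

end Complexity

theorem statement12 (d : ℕ) (hd : 0 < d) (U : Set (Fin d → ℝ)) (hU : IsOpen U)
    (f : Fin d → (Fin d → ℝ) → ℝ) (hf : ∀ i, IsNash d U (f i)) (a : Fin d → ℝ) :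
    { x : Fin d → ℝ | x ∈ U ∧ (∀ i, f i x = a i) ∧
        Matrix.det (Matrix.of fun i j : Fin d =>
          fderiv ℝ (f i) x (Pi.single j 1)) ≠ 0 }.Finite ∧
    { x : Fin d → ℝ | x ∈ U ∧ (∀ i, f i x = a i) ∧
        Matrix.det (Matrix.of fun i j : Fin d =>
          fderiv ℝ (f i) x (Pi.single j 1)) ≠ 0 }.ncard ≤
      ∏ i : Fin d, complexity d U (f i) := by
  have hcard := encard_nondegenerateFiber_le_prod_complexity hU hf a
  exact Set.encard_le_coe_iff_finite_ncard_le.1 hcard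

end StatementTwelve
end
end
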